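/- arXiv:1904.05051 — 4 statements merged into one kernel-verified Lean document; each statement's English description precedes it below -/
import Mathlib

section
/- Let r be an even positive integer. For H ≥ 1 let 𝒫₂(2,r,H) denote the set of separable polynomials in ℤ[T] of degree exactly r, with squarefree content and height at most H, and similarly 𝒫₂(2,r−1,H) in degree r−1. Then there exists a constant α(r) > 0 such that, as H → ∞: (i) |𝒫₂(2,r,H)| ∼ α(r)·H^{r+1}; (ii) |𝒫₂(2,r,H)| + |𝒫₂(2,r−1,H)| ∼ α(r)·H^{r+1}; and (iii) |𝒫₂(2,r−1,H)| / (|𝒫₂(2,r,H)| + |𝒫₂(2,r−1,H)|) = O(1/H). -/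
/-!
Identify integer polynomials of degree at most `r` with vectors in `ℤ^(r+1)`. Since
`∑_{d² ∣ c} μ(d)` is the indicator of squarefree `c`, the number of vectors of height at most `H`
with squarefree content is `∑_d μ(d) ((2⌊H/d²⌋ + 1)^(r+1) - 1)` (`card_sqfreeBox`). Dividing by
`H^(r+1)` and applying dominated convergence (`tendsto_card_sqfreeBox`) gives the limit
`α = ∑_d μ(d) (2/d²)^(r+1)`, which equals `2^(r+1)/ζ(2(r+1))`; its positivity is obtained directly
from `ζ(2) < 2` (`density_pos`).

The vectors that do not give separable polynomials of degree exactly `r` number `O(H^r)`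
(`card_sqfreeBox_le`): those with vanishing leading coefficient trivially, and the inseparable ones
because, with all coefficients but the constant one fixed, `c + Q` is inseparable only if `-c` is
one of the at most `r - 1` critical values of `Q` (`card_nonsep_le`). Polynomials of degree `r - 1`
also number `O(H^r)`, which yields the remaining two assertions.
-/

open Polynomial Filter Asymptotics

/-- `𝒫₂(2,N,H)`: separable integer polynomials of degree exactly `N`, with squarefree
content and height at most `H`. -/
def P2Exact (N H : ℕ) : Set (Polynomial ℤ) :=
  {P | P.natDegree = N ∧ P ≠ 0 ∧ (P.map (Int.castRingHom ℚ)).Separable ∧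
    Squarefree P.content ∧ ∀ i, |P.coeff i| ≤ (H : ℤ)}

open scoped ArithmeticFunction.Moebius ArithmeticFunction.zeta Topology

/-! ### Vectors with squarefree content -/

/-- Möbius detection of squarefreeness. Writing `c = b² a` with `a` squarefree, the `d` with
`d² ∣ c` are exactly the divisors of `b`, and `c` is squarefree iff `b = 1`. -/
theorem sum_moebius_sq_dvd {c M : ℕ} (hc : c ≠ 0) (hM : c ≤ M) :
    ∑ d ∈ (Finset.range (M + 1)).filter (fun d => d ^ 2 ∣ c), μ d =
      if Squarefree c then 1 else 0 := by
  obtain ⟨a, b, hab, ha⟩ := Nat.sq_mul_squarefree c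
  have hb0 : b ≠ 0 := by rintro rfl; simp at hab; exact hc hab.symm
  have ha0 : a ≠ 0 := ha.ne_zero
  have hset : (Finset.range (M + 1)).filter (fun d => d ^ 2 ∣ c) = b.divisors := by
    ext d
    simp only [Finset.mem_filter, Finset.mem_range, Nat.mem_divisors]
    constructor
    · rintro ⟨-, hd⟩
      refine ⟨?_, hb0⟩
      have hd0 : d ≠ 0 := by rintro rfl; simp at hd; exact hc hd
      rw [← Nat.factorization_le_iff_dvd hd0 hb0]
      intro p
      have h1 := (Nat.factorization_le_iff_dvd (pow_ne_zero 2 hd0) hc).2 hd p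
      have h2 := (Nat.squarefree_iff_factorization_le_one ha0).1 ha p
      rw [← hab, Nat.factorization_mul (pow_ne_zero 2 hb0) ha0] at h1
      simp at h1
      omega
    · rintro ⟨hd, -⟩
      refine ⟨?_, ?_⟩
      · have h1 := Nat.le_of_dvd (Nat.pos_of_ne_zero hb0) hd
        have h2 : b ∣ c := by rw [← hab]; exact Dvd.intro_left (b * a) (by ring)
        have h3 := Nat.le_of_dvd (Nat.pos_of_ne_zero hc) h2
        omega
      · rw [← hab]; exact Dvd.dvd.mul_right (pow_dvd_pow_of_dvd hd 2) a
  rw [hset, ← ArithmeticFunction.coe_mul_zeta_apply, ArithmeticFunction.moebius_mul_coe_zeta,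
    ArithmeticFunction.one_apply]
  congr 1
  apply propext
  constructor
  · rintro rfl; simpa [← hab] using ha
  · intro h
    rw [← hab] at h
    have := h b (Dvd.intro a (by ring))
    exact Nat.isUnit_iff.1 this

/-- The integer vectors of length `n` with all entries of absolute value at most `H`. -/
noncomputable def box (n H : ℕ) : Finset (Fin n → ℤ) :=
  Fintype.piFinset fun _ => Finset.Icc (-(H : ℤ)) H

theorem mem_box {n H : ℕ} {v : Fin n → ℤ} : v ∈ box n H ↔ ∀ i, |v i| ≤ (H : ℤ) := by
  simp [box, Fintype.mem_piFinset, abs_le]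

theorem card_box (n H : ℕ) : (box n H).card = (2 * H + 1) ^ n := by
  rw [box, Fintype.card_piFinset_const, Int.card_Icc]
  congr 1
  omega

theorem dvd_content_ofFn {n : ℕ} (v : Fin n → ℤ) (m : ℤ) :
    m ∣ (ofFn n v).content ↔ ∀ i, m ∣ v i := by
  rw [Polynomial.dvd_content_iff_C_dvd, C_dvd_iff_dvd_coeff]
  constructor
  · intro h i
    simpa using h i
  · intro h i
    by_cases hi : i < n
    · simpa [hi] using h ⟨i, hi⟩
    · simp [not_lt.1 hi]

/-- The vectors of `box n H` divisible by `m` are the multiples by `m` of those of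
`box n ⌊H/m⌋`. -/
theorem card_box_dvd (n H m : ℕ) (hm : 0 < m) :
    ((box n H).filter fun v => ∀ i, (m : ℤ) ∣ v i).card = (2 * (H / m) + 1) ^ n := by
  rw [← card_box]
  symm
  refine Finset.card_bij' (fun v _ i => (m : ℤ) * v i) (fun v _ i => v i / m) ?_ ?_ ?_ ?_
  · intro v hv
    rw [mem_box] at hv
    simp only [Finset.mem_filter, mem_box]
    refine ⟨fun i => ?_, fun i => Dvd.intro _ rfl⟩
    rw [abs_mul, Nat.abs_cast]
    calc (m : ℤ) * |v i| ≤ m * ((H / m : ℕ) : ℤ) := by gcongr; exact hv i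
      _ ≤ H := by exact_mod_cast Nat.mul_div_le H m
  · intro v hv
    simp only [Finset.mem_filter, mem_box] at hv
    rw [mem_box]
    intro i
    obtain ⟨k, hk⟩ := hv.2 i
    have h1 := hv.1 i
    have hm' : (0 : ℤ) < m := by exact_mod_cast hm
    rw [hk, Int.mul_ediv_cancel_left _ hm'.ne']
    rw [hk, abs_mul, Nat.abs_cast] at h1
    push_cast
    rw [Int.le_ediv_iff_mul_le hm']
    linarith
  · intro v hv
    funext i
    have hm' : (0 : ℤ) < m := by exact_mod_cast hm
    exact Int.mul_ediv_cancel_left _ hm'.ne'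
  · intro v hv
    simp only [Finset.mem_filter, mem_box] at hv
    funext i
    exact Int.mul_ediv_cancel' (hv.2 i)

open Classical in
/-- The vectors in `box n H` that are coefficient vectors of polynomials with squarefree content.
The zero vector has content `0` and is excluded. -/
noncomputable def sqfreeBox (n H : ℕ) : Finset (Fin n → ℤ) :=
  (box n H).filter fun v => Squarefree (ofFn n v).content

/-- The exact count by Möbius inversion; `- 1` removes the zero vector, which is divisible by
every `d²`. The content of a nonzero vector of height at most `H` is at most `H`, so
`d ≤ H` suffices. -/
theorem card_sqfreeBox (n H : ℕ) :
    ((sqfreeBox n H).card : ℤ) =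
      ∑ d ∈ Finset.range (H + 1), μ d * ((2 * ((H / d ^ 2 : ℕ) : ℤ) + 1) ^ n - 1) := by
  classical
  have key : ∀ v ∈ box n H, (if Squarefree (ofFn n v).content then (1 : ℤ) else 0) =
      ∑ d ∈ Finset.range (H + 1), if v ≠ 0 ∧ ∀ i, ((d ^ 2 : ℕ) : ℤ) ∣ v i then μ d else 0 := by
    intro v hv
    by_cases hv0 : v = 0
    · simp [hv0]
    have hc0 : (ofFn n v).content ≠ 0 := by
      rw [Ne, content_eq_zero_iff]
      intro h
      exact hv0 (injective_ofFn n (by rw [h, map_zero]))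
    have hle : (ofFn n v).content.natAbs ≤ H := by
      obtain ⟨i, hi⟩ := Function.ne_iff.1 hv0
      have h1 := (dvd_content_ofFn v _).1 dvd_rfl i
      have h2 := Int.natAbs_le_of_dvd_ne_zero h1 hi
      have h3 := mem_box.1 hv i
      rw [Int.abs_eq_natAbs] at h3
      exact h2.trans (by exact_mod_cast h3)
    have := sum_moebius_sq_dvd (Int.natAbs_ne_zero.2 hc0) hle
    simp only [Int.squarefree_natAbs] at this
    rw [← this, Finset.sum_filter]
    refine Finset.sum_congr rfl fun d _ => ?_
    have : (d ^ 2 ∣ (ofFn n v).content.natAbs) ↔ (v ≠ 0 ∧ ∀ i, ((d ^ 2 : ℕ) : ℤ) ∣ v i) := by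
      rw [← dvd_content_ofFn, ← Int.natCast_dvd]
      simp [hv0]
    simp only [this]
  rw [sqfreeBox, Finset.card_filter]
  push_cast
  rw [Finset.sum_congr rfl key, Finset.sum_comm]
  refine Finset.sum_congr rfl fun d _ => ?_
  rcases Nat.eq_zero_or_pos d with rfl | hd
  · simp
  rw [← Finset.sum_filter, Finset.sum_const, nsmul_eq_mul, mul_comm]
  congr 1
  have h := card_box_dvd n H (d ^ 2) (by positivity)
  have h2 : ((box n H).filter fun v => v ≠ 0 ∧ ∀ i, ((d ^ 2 : ℕ) : ℤ) ∣ v i) =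
      ((box n H).filter fun v => ∀ i, ((d ^ 2 : ℕ) : ℤ) ∣ v i).erase 0 := by
    ext v; simp only [Finset.mem_filter, Finset.mem_erase]; tauto
  rw [h2, Finset.cast_card_erase_of_mem, h]
  · push_cast; rfl
  · simp [mem_box]

/-- Termwise passage to the limit in `card_sqfreeBox`. The `d`-th term vanishes for `d² > H`,
and for `d² ≤ H` one has `2⌊H/d²⌋ + 1 ≤ 3H/d²`, which gives a summable majorant. -/
theorem tendsto_card_sqfreeBox (n : ℕ) (hn : 0 < n) :
    Tendsto (fun H : ℕ => ((sqfreeBox n H).card : ℝ) / (H : ℝ) ^ n) atTop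
      (𝓝 (∑' d : ℕ, (μ d : ℝ) * (2 / (d : ℝ) ^ 2) ^ n)) := by
  have hfin : ∀ H : ℕ, ((sqfreeBox n H).card : ℝ) / (H : ℝ) ^ n =
      ∑' d : ℕ, (μ d : ℝ) * (((2 * ((H / d ^ 2 : ℕ) : ℝ) + 1) ^ n - 1) / (H : ℝ) ^ n) := by
    intro H
    rw [tsum_eq_sum (s := Finset.range (H + 1))]
    · have := card_sqfreeBox n H
      have h2 : ((sqfreeBox n H).card : ℝ) = (((sqfreeBox n H).card : ℤ) : ℝ) := by simp
      rw [h2, this]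
      simp only [Int.cast_sum, Int.cast_mul, Int.cast_sub, Int.cast_pow, Int.cast_add,
        Int.cast_one, Int.cast_ofNat, Int.cast_natCast]
      rw [Finset.sum_div]
      refine Finset.sum_congr rfl fun d _ => by ring
    · intro d hd
      have : H < d := by simpa using hd
      have : H / d ^ 2 = 0 := Nat.div_eq_of_lt (by nlinarith)
      simp [this]
  simp_rw [hfin]
  refine tendsto_tsum_of_dominated_convergence
    (bound := fun d : ℕ => (3 : ℝ) ^ n * (1 / (d : ℝ) ^ 2)) ?_ ?_ ?_
  · exact (hasSum_zeta_two.summable).mul_left _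
  · intro d
    refine Tendsto.const_mul _ ?_
    rcases Nat.eq_zero_or_pos d with rfl | hd
    · simp [hn.ne']
    have h1 : Tendsto (fun H : ℕ => (((H / d ^ 2 : ℕ) : ℝ)) / (H : ℝ)) atTop
        (𝓝 (1 / (d : ℝ) ^ 2)) := by
      have := (tendsto_nat_floor_mul_div_atTop (R := ℝ) (a := 1 / (d : ℝ) ^ 2)
        (by positivity)).comp tendsto_natCast_atTop_atTop
      refine this.congr fun H => ?_
      simp only [Function.comp]
      rw [← Nat.floor_div_eq_div (K := ℝ) H (d ^ 2)]
      push_cast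
      rw [one_div_mul_eq_div]
    have h2 : Tendsto (fun H : ℕ => (1 : ℝ) / (H : ℝ)) atTop (𝓝 0) :=
      tendsto_one_div_atTop_nhds_zero_nat
    have h3 := (((h1.const_mul 2).add h2).pow n).sub (h2.pow n)
    rw [zero_pow hn.ne', add_zero, sub_zero, mul_one_div] at h3
    refine h3.congr fun H => ?_
    rw [sub_div, div_pow 1, one_pow, ← div_pow]
    congr 2
    ring
  · filter_upwards with H d
    rw [norm_mul]
    have hmu : ‖((μ d : ℤ) : ℝ)‖ ≤ 1 := by
      rw [Real.norm_eq_abs]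
      exact_mod_cast ArithmeticFunction.abs_moebius_le_one (n := d)
    rcases Nat.eq_zero_or_pos d with rfl | hd
    · simp
    refine (mul_le_of_le_one_left (norm_nonneg _) hmu).trans ?_
    rw [Real.norm_of_nonneg (div_nonneg (sub_nonneg.2 (one_le_pow₀ (by
      have : (0:ℝ) ≤ ((H / d ^ 2 : ℕ) : ℝ) := Nat.cast_nonneg _
      linarith))) (by positivity))]
    rcases Nat.eq_zero_or_pos (H / d ^ 2) with h0 | h0
    · rw [h0]; simp
    have hHd : d ^ 2 ≤ H := by
      by_contra h
      rw [Nat.div_eq_of_lt (not_le.1 h)] at h0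
      exact absurd h0 (lt_irrefl 0)
    have hH : (0:ℝ) < H := by
      have : 0 < H := lt_of_lt_of_le (by positivity) hHd
      exact_mod_cast this
    have hdR : (1:ℝ) ≤ (d:ℝ) ^ 2 := one_le_pow₀ (by exact_mod_cast hd)
    have hq1 : (1:ℝ) ≤ ((H / d ^ 2 : ℕ) : ℝ) := by exact_mod_cast h0
    have hq2 : ((H / d ^ 2 : ℕ) : ℝ) ≤ H / (d:ℝ) ^ 2 := by
      exact_mod_cast (Nat.cast_div_le (α := ℝ) (m := H) (n := d ^ 2))
    rw [div_le_iff₀ (by positivity)]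
    calc (2 * ((H / d ^ 2 : ℕ) : ℝ) + 1) ^ n - 1 ≤ (2 * ((H / d ^ 2 : ℕ) : ℝ) + 1) ^ n := by linarith
      _ ≤ (3 * (H / (d:ℝ) ^ 2)) ^ n := by gcongr; linarith
      _ = 3 ^ n * (1 / (d:ℝ) ^ 2) ^ n * H ^ n := by rw [← mul_pow, ← mul_pow]; ring
      _ ≤ 3 ^ n * (1 / (d:ℝ) ^ 2) * H ^ n := by
        gcongr
        refine pow_le_of_le_one (by positivity) ?_ hn.ne'
        rw [div_le_one (by positivity)]
        exact hdR

/-- The sum is at least `2ⁿ (1 - ∑_{d ≥ 2} d⁻²) = 2ⁿ (2 - π²/6)`. -/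
theorem density_pos (n : ℕ) (hn : 0 < n) :
    0 < ∑' d : ℕ, (μ d : ℝ) * (2 / (d : ℝ) ^ 2) ^ n := by
  have hle : ∀ d : ℕ, (1 / (d : ℝ) ^ 2) ^ n ≤ 1 / (d : ℝ) ^ 2 := by
    intro d
    rcases Nat.eq_zero_or_pos d with rfl | hd
    · simp [hn.ne']
    refine pow_le_of_le_one (by positivity) ?_ hn.ne'
    rw [div_le_one (by positivity)]
    exact one_le_pow₀ (by exact_mod_cast hd)
  have hz := hasSum_zeta_two
  have hsplit := hz.summable.sum_add_tsum_nat_add 2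
  rw [hz.tsum_eq] at hsplit
  simp [Finset.sum_range_succ] at hsplit
  have hmu : ∀ d : ℕ, |((μ d : ℤ) : ℝ)| ≤ 1 := fun d => by
    exact_mod_cast ArithmeticFunction.abs_moebius_le_one (n := d)
  have habs : ∀ d : ℕ, ‖(μ d : ℝ) * (1 / (d : ℝ) ^ 2) ^ n‖ ≤ 1 / (d : ℝ) ^ 2 := by
    intro d
    rw [norm_mul, Real.norm_eq_abs, Real.norm_of_nonneg (by positivity)]
    exact (mul_le_of_le_one_left (by positivity) (hmu d)).trans (hle d)
  have hsum : Summable fun d : ℕ => (μ d : ℝ) * (1 / (d : ℝ) ^ 2) ^ n :=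
    Summable.of_norm_bounded hz.summable habs
  have heq : ∀ d : ℕ, (μ d : ℝ) * (2 / (d : ℝ) ^ 2) ^ n =
      2 ^ n * ((μ d : ℝ) * (1 / (d : ℝ) ^ 2) ^ n) := by
    intro d; rw [div_pow, div_pow]; ring
  simp_rw [heq]
  rw [tsum_mul_left]
  refine mul_pos (by positivity) ?_
  have h2 := hsum.sum_add_tsum_nat_add 2
  simp only [Finset.sum_range_succ, Finset.sum_range_zero] at h2
  rw [← h2]
  have htail : ‖∑' d : ℕ, (μ (d + 2) : ℝ) * (1 / ((d + 2 : ℕ) : ℝ) ^ 2) ^ n‖ ≤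
      ∑' d : ℕ, (1 / ((d + 2 : ℕ) : ℝ) ^ 2) :=
    tsum_of_norm_bounded ((summable_nat_add_iff 2).2 hz.summable).hasSum fun d => habs (d + 2)
  rw [Real.norm_eq_abs] at htail
  have h3 := (abs_le.1 htail).1
  have hpi : Real.pi ^ 2 / 6 < 2 := by nlinarith [Real.pi_lt_d2, Real.pi_pos]
  simp at h3 ⊢
  linarith

/-! ### Comparison with separable polynomials of exact degree -/

theorem natDegree_ofFn_succ {N : ℕ} (v : Fin (N + 1) → ℤ) (h : v (Fin.last N) ≠ 0) :
    (ofFn (N + 1) v).natDegree = N := by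
  refine natDegree_eq_of_le_of_coeff_ne_zero ?_ ?_
  · exact Nat.le_of_lt_succ (ofFn_natDegree_lt (Nat.succ_pos N) v)
  · rw [ofFn_coeff_eq_val_of_lt v (Nat.lt_succ_self N)]
    exact h

open Classical in
theorem ncard_P2Exact (N H : ℕ) :
    (P2Exact N H).ncard = ((sqfreeBox (N + 1) H).filter fun v => v (Fin.last N) ≠ 0 ∧
      ((ofFn (N + 1) v).map (Int.castRingHom ℚ)).Separable).card := by
  rw [← Set.ncard_coe_finset, ← Set.ncard_image_of_injective _ (injective_ofFn (R := ℤ) (N + 1))]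
  congr 1
  ext P
  simp only [P2Exact, Set.mem_ofPred_eq, Set.mem_image, Finset.mem_coe, Finset.mem_filter,
    sqfreeBox, mem_box]
  constructor
  · rintro ⟨hdeg, hP0, hsep, hsq, hH⟩
    have hP := ofFn_comp_toFn_eq_id_of_natDegree_lt (n := N + 1) (p := P) (by omega)
    refine ⟨toFn (N + 1) P, ⟨⟨fun i => hH i, by rwa [hP]⟩, ?_, by rwa [hP]⟩, hP⟩
    change P.coeff N ≠ 0
    rw [← hdeg]
    exact leadingCoeff_ne_zero.2 hP0
  · rintro ⟨v, ⟨⟨hb, hsq⟩, hl, hsep⟩, rfl⟩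
    refine ⟨natDegree_ofFn_succ v hl, ?_, hsep, hsq, fun i => ?_⟩
    · intro h; simp [h] at hsq
    · by_cases hi : i < N + 1
      · rw [ofFn_coeff_eq_val_of_lt v hi]; exact hb _
      · rw [ofFn_coeff_eq_zero_of_ge v (not_lt.1 hi)]; simp

theorem ofFn_cons {r : ℕ} (v : Fin (r + 1) → ℤ) :
    ofFn (r + 1) v = C (v 0) + X * ofFn r (Fin.tail v) := by
  ext i
  rcases i with _ | i
  · simp
  · by_cases hi : i < r
    · rw [coeff_add, coeff_C_succ, coeff_X_mul, ofFn_coeff_eq_val_of_lt _ hi,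
        ofFn_coeff_eq_val_of_lt _ (Nat.succ_lt_succ hi), zero_add]
      rfl
    · rw [coeff_add, coeff_C_succ, coeff_X_mul, ofFn_coeff_eq_zero_of_ge _ (not_lt.1 hi),
        ofFn_coeff_eq_zero_of_ge _ (Nat.succ_le_succ (not_lt.1 hi)), zero_add]

open Classical in
/-- Once the non-constant coefficients are fixed, a polynomial `c + Q` of degree `r` is
inseparable only if `c = -Q(z)` for a complex root `z` of `Q'`, so at most `r` constant
coefficients `c` are possible. -/
theorem card_nonsep_le (r H : ℕ) (hr : 0 < r) :
    ((box (r + 1) H).filter fun v => v (Fin.last r) ≠ 0 ∧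
      ¬ ((ofFn (r + 1) v).map (Int.castRingHom ℚ)).Separable).card ≤ r * (2 * H + 1) ^ r := by
  rw [← card_box r H]
  refine Finset.card_le_mul_card_image_of_maps_to (f := fun v => Fin.tail v) ?_ r ?_
  · intro v hv
    simp only [mem_box, Finset.mem_filter] at hv ⊢
    exact fun i => hv.1 i.succ
  · intro w hw
    set Q : ℂ[X] := (X * ofFn r w).map (Int.castRingHom ℂ) with hQ
    -- A member of the fibre over `w` is needed to see that `Q` has degree `r`.
    by_cases hemp : ((box (r + 1) H).filter (fun v => v (Fin.last r) ≠ 0 ∧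
      ¬ ((ofFn (r + 1) v).map (Int.castRingHom ℚ)).Separable)).filter
        (fun v => Fin.tail v = w) = ∅
    · rw [hemp]; simp
    obtain ⟨v₀, hv₀⟩ := Finset.nonempty_iff_ne_empty.2 hemp
    have hPv : ∀ v : Fin (r + 1) → ℤ, Fin.tail v = w →
        (ofFn (r + 1) v).map (Int.castRingHom ℂ) = C (v 0 : ℂ) + Q := by
      intro v hv
      rw [ofFn_cons, hv, Polynomial.map_add, map_C, hQ]
      rfl
    have hder : ∀ v : Fin (r + 1) → ℤ, Fin.tail v = w →
        derivative ((ofFn (r + 1) v).map (Int.castRingHom ℂ)) = derivative Q := by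
      intro v hv
      rw [hPv v hv]; simp
    simp only [Finset.mem_filter] at hv₀
    have hdeg0 : ((ofFn (r + 1) v₀).map (Int.castRingHom ℂ)).natDegree = r := by
      rw [natDegree_map_eq_of_injective (RingHom.injective_int _)]
      exact natDegree_ofFn_succ v₀ hv₀.1.2.1
    have hQ0 : derivative Q ≠ 0 := by
      rw [← hder v₀ hv₀.2, derivative_ne_zero, hdeg0]
      omega
    have hQdeg : (derivative Q).natDegree ≤ r := by
      rw [← hder v₀ hv₀.2]
      refine (natDegree_derivative_le _).trans ?_
      omega
    calc _ ≤ ((derivative Q).roots.toFinset.image fun z => - Q.eval z).card := by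
          refine Finset.card_le_card_of_injOn (fun v => ((v 0 : ℤ) : ℂ)) ?_ ?_
          · intro v hv
            simp only [Finset.mem_coe, Finset.mem_filter] at hv
            have hns := hv.1.2.2
            rw [Polynomial.Separable,
              isCoprime_iff_aeval_ne_zero_of_isAlgClosed (k := ℚ) ℂ] at hns
            push Not at hns
            obtain ⟨z, hz1, hz2⟩ := hns
            have hmm : ((ofFn (r + 1) v).map (Int.castRingHom ℚ)).map (algebraMap ℚ ℂ) =
                (ofFn (r + 1) v).map (Int.castRingHom ℂ) := by
              rw [Polynomial.map_map]; congr 1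
            rw [aeval_def, ← eval_map, hmm, hPv v hv.2] at hz1
            rw [aeval_def, ← eval_map, ← derivative_map, hmm, hder v hv.2] at hz2
            simp only [Finset.coe_image, Set.mem_image, Finset.mem_coe, Multiset.mem_toFinset,
              mem_roots hQ0]
            refine ⟨z, hz2, ?_⟩
            simp only [eval_add, eval_C] at hz1
            linear_combination -hz1
          · intro v hv v' hv' h
            simp only [Finset.mem_coe, Finset.mem_filter] at hv hv'
            have h0 : v 0 = v' 0 := Int.cast_injective (α := ℂ) h
            rw [← Fin.cons_self_tail v, ← Fin.cons_self_tail v', hv.2, hv'.2, h0]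
      _ ≤ (derivative Q).roots.toFinset.card := Finset.card_image_le
      _ ≤ (derivative Q).roots.card := Multiset.toFinset_card_le _
      _ ≤ r := (card_roots' _).trans hQdeg

open Classical in
theorem card_last_zero_le (r H : ℕ) :
    ((box (r + 1) H).filter fun v => v (Fin.last r) = 0).card ≤ (2 * H + 1) ^ r := by
  rw [← card_box r H]
  refine Finset.card_le_card_of_injOn (fun v => Fin.init v) ?_ ?_
  · intro v hv
    simp only [Finset.mem_coe, mem_box, Finset.mem_filter] at hv ⊢
    exact fun i => hv.1 i.castSucc
  · intro v hv v' hv' h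
    simp only [Finset.mem_coe, Finset.mem_filter] at hv hv' h
    rw [← Fin.snoc_init_self v, ← Fin.snoc_init_self v', h, hv.2, hv'.2]

theorem ncard_le_card_sqfreeBox (N H : ℕ) :
    (P2Exact N H).ncard ≤ (sqfreeBox (N + 1) H).card := by
  classical
  rw [ncard_P2Exact]
  exact Finset.card_filter_le _ _

theorem ncard_le_pow (N H : ℕ) : (P2Exact N H).ncard ≤ (2 * H + 1) ^ (N + 1) := by
  classical
  rw [← card_box]
  exact (ncard_le_card_sqfreeBox N H).trans (Finset.card_filter_le _ _)

theorem card_sqfreeBox_le (r H : ℕ) (hr : 0 < r) :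
    (sqfreeBox (r + 1) H).card ≤ (P2Exact r H).ncard + (r + 1) * (2 * H + 1) ^ r := by
  classical
  have h1 := card_nonsep_le r H hr
  have h2 := card_last_zero_le r H
  rw [ncard_P2Exact]
  set A := (sqfreeBox (r + 1) H).filter fun v => v (Fin.last r) ≠ 0 ∧
      ((ofFn (r + 1) v).map (Int.castRingHom ℚ)).Separable
  set B := (box (r + 1) H).filter fun v => v (Fin.last r) ≠ 0 ∧
      ¬ ((ofFn (r + 1) v).map (Int.castRingHom ℚ)).Separable
  set D := (box (r + 1) H).filter fun v => v (Fin.last r) = 0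
  have hsub : sqfreeBox (r + 1) H ⊆ A ∪ (B ∪ D) := by
    intro v hv
    have hv' : v ∈ box (r + 1) H := (Finset.mem_filter.1 hv).1
    simp only [A, B, D, Finset.mem_union, Finset.mem_filter, hv, hv', true_and]
    tauto
  have h3 := Finset.card_le_card hsub
  have h4 := Finset.card_union_le A (B ∪ D)
  have h5 := Finset.card_union_le B D
  calc _ ≤ A.card + (B.card + D.card) := by omega
    _ ≤ A.card + (r * (2 * H + 1) ^ r + (2 * H + 1) ^ r) := by omega
    _ = _ := by ring

/-! ### Asymptotics -/

theorem tendsto_pow_div (r : ℕ) (c : ℝ) :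
    Tendsto (fun H : ℕ => c * (2 * (H : ℝ) + 1) ^ r / (H : ℝ) ^ (r + 1)) atTop (𝓝 0) := by
  have h2 : Tendsto (fun H : ℕ => (1 : ℝ) / (H : ℝ)) atTop (𝓝 0) :=
    tendsto_one_div_atTop_nhds_zero_nat
  have h := (((h2.const_add 2).pow r).mul h2).const_mul c
  simp only [mul_zero] at h
  refine h.congr' ?_
  filter_upwards [eventually_gt_atTop 0] with H hH
  have : (H : ℝ) ≠ 0 := by exact_mod_cast hH.ne'
  have e : (2 + 1 / (H : ℝ)) = (2 * H + 1) / H := by field_simp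
  rw [e, div_pow, pow_succ]
  field_simp

theorem stmt7 (r : ℕ) (hr : 0 < r) (hre : Even r) :
    ∃ α : ℝ, 0 < α ∧
      ((fun H : ℕ => ((P2Exact r H).ncard : ℝ)) ~[atTop]
        fun H : ℕ => α * (H : ℝ) ^ (r + 1)) ∧
      ((fun H : ℕ => (((P2Exact r H).ncard : ℝ) + ((P2Exact (r - 1) H).ncard : ℝ))) ~[atTop]
        fun H : ℕ => α * (H : ℝ) ^ (r + 1)) ∧
      ((fun H : ℕ => ((P2Exact (r - 1) H).ncard : ℝ) /
          (((P2Exact r H).ncard : ℝ) + ((P2Exact (r - 1) H).ncard : ℝ))) =O[atTop]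
        fun H : ℕ => 1 / (H : ℝ)) := by
  set α : ℝ := ∑' d : ℕ, (μ d : ℝ) * (2 / (d : ℝ) ^ 2) ^ (r + 1) with hα
  have hα0 : 0 < α := density_pos (r + 1) r.succ_pos
  have hS := tendsto_card_sqfreeBox (r + 1) r.succ_pos
  have hlow : ∀ H : ℕ, ((P2Exact (r - 1) H).ncard : ℝ) ≤ (2 * (H : ℝ) + 1) ^ r := by
    intro H
    have := ncard_le_pow (r - 1) H
    rw [Nat.sub_add_cancel hr] at this
    exact_mod_cast this
  have h1 : Tendsto (fun H : ℕ => ((P2Exact r H).ncard : ℝ) / (H : ℝ) ^ (r + 1)) atTop (𝓝 α) := by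
    have hl := hS.sub (tendsto_pow_div r (r + 1))
    rw [sub_zero] at hl
    refine tendsto_of_tendsto_of_tendsto_of_le_of_le hl hS ?_ ?_
    · intro H
      simp only
      rw [← sub_div]
      gcongr
      have : ((sqfreeBox (r + 1) H).card : ℝ) ≤
          (P2Exact r H).ncard + (r + 1) * (2 * H + 1) ^ r := by
        exact_mod_cast card_sqfreeBox_le r H hr
      linarith
    · intro H
      simp only
      gcongr
      exact ncard_le_card_sqfreeBox r H
  have h2 : Tendsto (fun H : ℕ => ((P2Exact (r - 1) H).ncard : ℝ) / (H : ℝ) ^ (r + 1))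
      atTop (𝓝 0) := by
    refine tendsto_of_tendsto_of_tendsto_of_le_of_le tendsto_const_nhds
      (tendsto_pow_div r 1) (fun H => by positivity) ?_
    intro H
    simp only [one_mul]
    gcongr
    exact hlow H
  have h3 : Tendsto (fun H : ℕ => (((P2Exact r H).ncard : ℝ) + ((P2Exact (r - 1) H).ncard : ℝ))
      / (H : ℝ) ^ (r + 1)) atTop (𝓝 α) := by
    have := h1.add h2
    rw [add_zero] at this
    exact this.congr fun H => by rw [add_div]
  have equiv_of : ∀ f : ℕ → ℝ, Tendsto (fun H : ℕ => f H / (H : ℝ) ^ (r + 1)) atTop (𝓝 α) →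
      f ~[atTop] fun H : ℕ => α * (H : ℝ) ^ (r + 1) := by
    intro f hf
    rw [isEquivalent_iff_tendsto_one]
    · have := hf.div_const α
      rw [div_self hα0.ne'] at this
      refine this.congr fun H => ?_
      simp only [Pi.div_apply]
      rw [div_div, mul_comm]
    · filter_upwards [eventually_gt_atTop 0] with H hH
      have : (0 : ℝ) < H := by exact_mod_cast hH
      positivity
  refine ⟨α, hα0, equiv_of _ h1, equiv_of _ h3, ?_⟩
  refine IsBigO.of_bound (3 ^ r / (α / 2)) ?_
  filter_upwards [eventually_gt_atTop 0, h3.eventually_const_lt (half_lt_self hα0)] with H hH hlt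
  have hH0 : (0 : ℝ) < H := by exact_mod_cast hH
  have hH1 : (1 : ℝ) ≤ H := by exact_mod_cast hH
  rw [lt_div_iff₀ (by positivity)] at hlt
  rw [Real.norm_of_nonneg (by positivity), Real.norm_of_nonneg (by positivity)]
  calc _ ≤ (2 * (H : ℝ) + 1) ^ r / (α / 2 * (H : ℝ) ^ (r + 1)) := by
        gcongr
        exact hlow H
    _ ≤ (3 * (H : ℝ)) ^ r / (α / 2 * (H : ℝ) ^ (r + 1)) := by gcongr; linarith
    _ = _ := by rw [mul_pow, pow_succ]; field_simp
end

section
/- Let n ≥ 2 be an integer and P(T,Y) ∈ ℤ[T][Y] be monic of degree n in Y. Suppose that the Galois group of the splitting field of P over the rational function field ℚ(T) is isomorphic to S_n, and that the discriminant of P with respect to Y, an element of ℤ[T], is irreducible over ℚ. Then the Galois group of the splitting field of P over ℚ̄(T), the rational function field over an algebraic closure ℚ̄ of ℚ, is also isomorphic to S_n (equivalently, has order n!). -/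
/-!
Let `L` be the splitting field of `P` over `ℚ̄(T)`. The extension `ℚ̄(T)/ℚ(T)` is normal
(`ratFunc_normal`), hence so is `L/ℚ(T)` (`normal_of_isSplittingField`). Since the Galois group
over `ℚ(T)` has order `n!` and acts faithfully on the `n` roots, `Gal(L/ℚ(T))` surjects onto the
permutations of the roots. The geometric group `Gal(L/ℚ̄(T))` is normal in `Gal(L/ℚ(T))`, so its
image in `S_n` is a normal subgroup, isomorphic to it because the roots generate `L`. A normal
subgroup of `S_n` with an odd element is `S_n` (`normal_eq_top`), so it is enough to find an odd
element.

If all elements were even, the Vandermonde determinant `δ` of the roots would be fixed by the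
geometric group and so lie in `ℚ̄(T)` (`exists_odd`). But `δ²` is the discriminant up to sign
(`discOf_prod`), and the discriminant, being irreducible over `ℚ`, is not a square in `ℚ̄(T)`
(`not_sq`).
-/

open Polynomial

noncomputable section

/-- The Sylvester matrix of `p` and `q`, viewed as polynomials of degrees `m` and `n`
respectively: the first `n` rows carry the coefficients of `p`, the last `m` rows those
of `q`. Its determinant is the resultant `Res(p,q)`. -/
def sylvesterMatrix {R : Type*} [CommRing R] (p q : Polynomial R) (m n : ℕ) :
    Matrix (Fin (m + n)) (Fin (m + n)) R :=
  Matrix.of fun i j =>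
    if (i : ℕ) < n then
      if (i : ℕ) ≤ (j : ℕ) ∧ (j : ℕ) ≤ (i : ℕ) + m then
        p.coeff (m - ((j : ℕ) - (i : ℕ))) else 0
    else
      if (i : ℕ) - n ≤ (j : ℕ) ∧ (j : ℕ) ≤ ((i : ℕ) - n) + n then
        q.coeff (n - ((j : ℕ) - ((i : ℕ) - n))) else 0

/-- The resultant of `p` (of degree `m`) and `q` (of degree `n`). -/
def resultantOf {R : Type*} [CommRing R] (p q : Polynomial R) (m n : ℕ) : R :=
  (sylvesterMatrix p q m n).det

/-- The discriminant of a monic polynomial `p` of degree `n`: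
`(-1)^(n(n-1)/2)` times the resultant of `p` and its derivative. -/
def discOf {R : Type*} [CommRing R] (p : Polynomial R) (n : ℕ) : R :=
  (-1) ^ (n * (n - 1) / 2) * resultantOf p (Polynomial.derivative p) n (n - 1)

/-- `P(T,Y)` viewed as a polynomial in `Y` over `ℚ(T)`. -/
def toQT (P : Polynomial (Polynomial ℤ)) : Polynomial (RatFunc ℚ) :=
  P.map ((algebraMap (Polynomial ℚ) (RatFunc ℚ)).comp
    (Polynomial.mapRingHom (Int.castRingHom ℚ)))

/-- `P(T,Y)` viewed as a polynomial in `Y` over `ℚ̄(T)`. -/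
def toQbarT (P : Polynomial (Polynomial ℤ)) : Polynomial (RatFunc (AlgebraicClosure ℚ)) :=
  P.map ((algebraMap (Polynomial (AlgebraicClosure ℚ)) (RatFunc (AlgebraicClosure ℚ))).comp
    (Polynomial.mapRingHom (Int.castRingHom (AlgebraicClosure ℚ))))

/-! ### The discriminant as a square of a Vandermonde determinant -/

/-- The resultant defined through `sylvesterMatrix` is Mathlib's: the two Sylvester matrices
differ by a transposition and by reversing the order of both rows and columns, and neither
changes the determinant. -/
theorem resultantOf_eq {R : Type*} [CommRing R] (p q : Polynomial R) (m n : ℕ) :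
    resultantOf p q m n = Polynomial.resultant p q m n := by
  have h : sylvesterMatrix p q m n =
      ((Polynomial.sylvester p q m n).transpose).submatrix Fin.revPerm Fin.revPerm := by
    ext i j
    obtain ⟨i, hi⟩ := i
    obtain ⟨j, hj⟩ := j
    simp only [sylvesterMatrix, Polynomial.sylvester, Matrix.of_apply, Matrix.submatrix_apply,
      Matrix.transpose_apply, Fin.revPerm_apply, Fin.addCases, Set.mem_Icc, Fin.val_rev,
      Fin.val_castLT, Fin.val_subNat, Fin.val_cast, eq_rec_constant]
    by_cases h : i < n
    · rw [if_pos h, dif_neg (by omega)]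
      by_cases h2 : i ≤ j ∧ j ≤ i + m
      · rw [if_pos h2, if_pos (by omega)]; congr 1; omega
      · rw [if_neg h2, if_neg (by omega)]
    · rw [if_neg h, dif_pos (by omega)]
      by_cases h2 : i - n ≤ j ∧ j ≤ i - n + n
      · rw [if_pos h2, if_pos (by omega)]; congr 1; omega
      · rw [if_neg h2, if_neg (by omega)]
  rw [resultantOf, h, Matrix.det_submatrix_equiv_self, Matrix.det_transpose]
  rfl

theorem prod_prod_erase_sub {R : Type*} [CommRing R] {n : ℕ} (α : Fin n → R) :
    ∃ k : ℕ, ∏ i, ∏ j ∈ Finset.univ.erase i, (α i - α j) =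
      (-1) ^ k * (Matrix.vandermonde α).det ^ 2 := by
  refine ⟨∑ i : Fin n, (Finset.Ioi i).card, ?_⟩
  have h1 : ∀ i : Fin n, ∏ j ∈ Finset.univ.erase i, (α i - α j) =
      (∏ j ∈ Finset.Iio i, (α i - α j)) *
        ((-1) ^ (Finset.Ioi i).card * ∏ j ∈ Finset.Ioi i, (α j - α i)) := by
    intro i
    have : Finset.univ.erase i = Finset.Iio i ∪ Finset.Ioi i := by
      ext j; simp [lt_or_lt_iff_ne]
    rw [this, Finset.prod_union (Finset.disjoint_left.2 fun j h h' =>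
      absurd (Finset.mem_Iio.1 h) (Finset.mem_Ioi.1 h').le.not_gt),
      ← Finset.prod_const, ← Finset.prod_mul_distrib]
    simp
  have h2 : ∏ i : Fin n, ∏ j ∈ Finset.Iio i, (α i - α j) =
      ∏ i : Fin n, ∏ j ∈ Finset.Ioi i, (α j - α i) :=
    Finset.prod_comm' (by simp)
  simp_rw [h1]
  rw [Finset.prod_mul_distrib, Finset.prod_mul_distrib, h2, Matrix.det_vandermonde,
    Finset.prod_pow_eq_pow_sum]
  ring

/-- Up to sign, the discriminant is the square of the Vandermonde determinant of the roots.
The sign is left unspecified because it is a square over `ℚ̄`. -/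
theorem discOf_prod {K : Type*} [Field K] {n : ℕ} (α : Fin n → K) :
    ∃ k : ℕ, discOf (∏ i, (X - C (α i))) n = (-1) ^ k * (Matrix.vandermonde α).det ^ 2 := by
  obtain ⟨k, hk⟩ := prod_prod_erase_sub α
  set f : K[X] := ∏ i, (X - C (α i)) with hf
  have hd : f.natDegree = n := by
    simp [hf, natDegree_prod_of_monic _ _ (fun i _ => monic_X_sub_C (α i))]
  have hr : f.roots = Finset.univ.val.map α := by
    rw [← roots_multiset_prod_X_sub_C (Finset.univ.val.map α), Multiset.map_map]
    rfl
  have hmon : f.Monic := monic_prod_of_monic _ _ fun i _ => monic_X_sub_C _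
  have hev : ∀ i, (derivative f).eval (α i) = ∏ j ∈ Finset.univ.erase i, (α i - α j) := by
    intro i
    rw [← Lagrange.eval_nodal]
    exact Lagrange.eval_nodal_derivative_eval_node_eq (v := α) (Finset.mem_univ i)
  have hres := resultant_eq_prod_eval f (derivative f) (n - 1)
    (hd ▸ natDegree_derivative_le f) (Splits.prod fun i _ => Splits.X_sub_C _)
  rw [hd, hmon.leadingCoeff, one_pow, one_mul, hr, Multiset.map_map] at hres
  refine ⟨n * (n - 1) / 2 + k, ?_⟩
  rw [discOf, resultantOf_eq, hres, pow_add, mul_assoc, ← hk]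
  congr 1
  exact Finset.prod_congr rfl fun i _ => hev i

theorem discOf_map {R S : Type*} [CommRing R] [CommRing S] (φ : R →+* S) (p : R[X]) (n : ℕ) :
    discOf (p.map φ) n = φ (discOf p n) := by
  simp [discOf, resultantOf_eq, derivative_map, resultant_map_map]

/-! ### Normal subgroups of the symmetric group -/

/-- A normal subgroup of `S_n` containing an odd permutation is all of `S_n`. For `n ≥ 5` a
nontrivial normal subgroup contains `A_n`; for `n ≤ 4` some product of conjugates of the odd
permutation is a transposition. -/
theorem normal_eq_top {n : ℕ} (N : Subgroup (Equiv.Perm (Fin n))) [N.Normal]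
    {s : Equiv.Perm (Fin n)} (hs : s ∈ N) (hodd : Equiv.Perm.sign s = -1) : N = ⊤ := by
  have key : ∀ t : Equiv.Perm (Fin n), t.IsSwap → t ∈ N → N = ⊤ := by
    intro t ht htN
    rw [eq_top_iff, ← Equiv.Perm.closure_isSwap, Subgroup.closure_le]
    intro u hu
    obtain ⟨a, b, hab, rfl⟩ := ht
    obtain ⟨c, d, hcd, rfl⟩ := hu
    obtain ⟨g, hg⟩ := isConj_iff.1 (Equiv.Perm.isConj_swap hab hcd)
    exact hg ▸ Subgroup.Normal.conj_mem inferInstance _ htN g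
  have key3 : ∀ g h t : Equiv.Perm (Fin n), t.IsSwap →
      s * (g * s * g⁻¹) * (h * s * h⁻¹) = t → N = ⊤ := fun g h t ht e =>
    key t ht (e ▸ N.mul_mem (N.mul_mem hs (Subgroup.Normal.conj_mem inferInstance _ hs g))
      (Subgroup.Normal.conj_mem inferInstance _ hs h))
  rcases Nat.lt_or_ge n 5 with hn | hn
  · interval_cases n
    · rw [Subsingleton.elim s 1] at hodd; simp at hodd
    · rw [Subsingleton.elim s 1] at hodd; simp at hodd
    · have : ∀ s : Equiv.Perm (Fin 2), Equiv.Perm.sign s = -1 → s = Equiv.swap 0 1 := by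
        decide +kernel
      exact key s ⟨0, 1, by decide, this s hodd⟩ hs
    · have : ∀ s : Equiv.Perm (Fin 3), Equiv.Perm.sign s = -1 →
          ∃ g h : Equiv.Perm (Fin 3), s * (g * s * g⁻¹) * (h * s * h⁻¹) = Equiv.swap 0 1 := by
        decide +kernel
      obtain ⟨g, h, e⟩ := this s hodd
      exact key3 g h _ ⟨0, 1, by decide, rfl⟩ e
    · have : ∀ s : Equiv.Perm (Fin 4), Equiv.Perm.sign s = -1 →
          ∃ g h : Equiv.Perm (Fin 4), s * (g * s * g⁻¹) * (h * s * h⁻¹) = Equiv.swap 0 1 := by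
        decide +kernel
      obtain ⟨g, h, e⟩ := this s hodd
      exact key3 g h _ ⟨0, 1, by decide, rfl⟩ e
  · have hne : s ≠ 1 := by rintro rfl; simp at hodd
    have hle := Equiv.Perm.alternatingGroup_le_of_normal (α := Fin n) (by simpa using hn)
      (N := N) ⟨⟨s, hs⟩, 1, fun h => hne (congrArg Subtype.val h)⟩
    rw [eq_top_iff]
    intro t _
    rcases Int.units_eq_one_or (Equiv.Perm.sign t) with h | h
    · exact hle h
    · have h1 : t * s ∈ N := hle (by simp [Equiv.Perm.mem_alternatingGroup, h, hodd])
      simpa using N.mul_mem h1 (N.inv_mem hs)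

/-! ### Irreducible polynomials are not squares over `ℚ̄` -/

/-- A polynomial irreducible over `ℚ` is not, up to sign, a square in `ℚ̄(T)`: it is separable,
hence squarefree over `ℚ̄`, and it is not constant. A square root in `ℚ̄(T)` would lie in `ℚ̄[T]`
since `ℚ̄[T]` is integrally closed. -/
theorem not_sq {D : ℚ[X]} (hD : Irreducible D) (w : RatFunc (AlgebraicClosure ℚ)) (k : ℕ) :
    algebraMap (AlgebraicClosure ℚ)[X] (RatFunc (AlgebraicClosure ℚ))
      (D.map (algebraMap ℚ (AlgebraicClosure ℚ))) ≠ (-1) ^ k * w ^ 2 := by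
  intro h
  -- `c` is a square root of the sign, so that `D = (c w)²` in `ℚ̄(T)`.
  obtain ⟨c, hc⟩ :=
    IsAlgClosed.exists_pow_nat_eq ((-1 : AlgebraicClosure ℚ) ^ k) (n := 2) (by norm_num)
  have h' : (algebraMap _ _ (C c) * w) ^ 2 = algebraMap (AlgebraicClosure ℚ)[X]
      (RatFunc (AlgebraicClosure ℚ)) (D.map (algebraMap ℚ (AlgebraicClosure ℚ))) := by
    rw [h, mul_pow, ← map_pow, ← C_pow, hc]; simp
  obtain ⟨y, hy⟩ := IsIntegrallyClosed.exists_algebraMap_eq_of_isIntegral_pow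
    (R := (AlgebraicClosure ℚ)[X]) (n := 2) (by norm_num) (h' ▸ isIntegral_algebraMap)
  rw [← hy, ← map_pow] at h'
  have h2 := IsFractionRing.injective (AlgebraicClosure ℚ)[X] (RatFunc (AlgebraicClosure ℚ)) h'
  have hsq : Squarefree (D.map (algebraMap ℚ (AlgebraicClosure ℚ))) :=
    (hD.separable.map).squarefree
  have hu : IsUnit y := hsq y ⟨1, by rw [← h2]; ring⟩
  have : IsUnit (D.map (algebraMap ℚ (AlgebraicClosure ℚ))) := h2 ▸ hu.pow 2
  rw [isUnit_map] at this
  exact hD.not_isUnit this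


/-! ### Normality of the extensions `ℚ̄(T)/ℚ(T)` and `L/ℚ(T)` -/

/-- If `E/F` is normal and `L` is the splitting field over `E` of a polynomial with coefficients
in `F`, then `L/F` is normal. -/
theorem normal_of_isSplittingField {F E L : Type*} [Field F] [Field E] [Field L] [Algebra F E]
    [Algebra E L] [Algebra F L] [IsScalarTower F E L] [Normal F E] {p : F[X]} (hp : p ≠ 0)
    [IsSplittingField E L (p.map (algebraMap F E))] : Normal F L := by
  set S : Set L := Set.range (algebraMap E L) ∪ p.rootSet L with hS
  have hpL : (p.map (algebraMap F L)).Splits := by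
    rw [IsScalarTower.algebraMap_eq F E L, ← Polynomial.map_map]
    exact IsSplittingField.splits L (p.map (algebraMap F E))
  have hgen : ∀ x ∈ S, IsIntegral F x ∧ ((minpoly F x).map (algebraMap F L)).Splits := by
    rintro x (⟨y, rfl⟩ | hx)
    · have hy := Normal.isIntegral (F := F) inferInstance y
      refine ⟨hy.algebraMap, ?_⟩
      rw [minpoly.algebraMap_eq (algebraMap E L).injective, IsScalarTower.algebraMap_eq F E L,
        ← Polynomial.map_map]
      exact (Normal.splits (F := F) inferInstance y).map _
    · have h0 : aeval x p = 0 := (mem_rootSet.1 hx).2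
      refine ⟨IsAlgebraic.isIntegral ⟨p, hp, h0⟩, ?_⟩
      exact hpL.of_dvd (Polynomial.map_ne_zero hp) (Polynomial.map_dvd _ (minpoly.dvd F x h0))
  have htop : ∀ x : L, x ∈ IntermediateField.adjoin F S := by
    intro x
    have hx : x ∈ Algebra.adjoin E ((p.map (algebraMap F E)).rootSet L) := by
      rw [IsSplittingField.adjoin_rootSet]; trivial
    induction hx using Algebra.adjoin_induction with
    | mem x hx =>
      apply IntermediateField.subset_adjoin
      right
      rw [mem_rootSet] at hx ⊢
      exact ⟨hp, by simpa using hx.2⟩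
    | algebraMap r => exact IntermediateField.subset_adjoin _ _ (Or.inl ⟨r, rfl⟩)
    | add x y _ _ hx hy => exact add_mem hx hy
    | mul x y _ _ hx hy => exact mul_mem hx hy
  have hS' : IntermediateField.adjoin F S = ⊤ := by
    rw [eq_top_iff]; intro x _; exact htop x
  have halg : Algebra.IsAlgebraic F (⊤ : IntermediateField F L) :=
    hS' ▸ IntermediateField.isAlgebraic_adjoin fun x hx => (hgen x hx).1
  rw [normal_iff]
  intro x
  refine ⟨?_, IntermediateField.splits_of_mem_adjoin F L hgen (htop x)⟩
  have := (halg.isAlgebraic ⟨x, trivial⟩).isIntegral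
  exact this.map (IntermediateField.val (⊤ : IntermediateField F L))

/-- If `K/k` is normal then so is `K(T)/k(T)`, because `K(T)` is generated over `k(T)` by the
constants from `K`. -/
theorem ratFunc_normal {k K : Type*} [Field k] [Field K] [Algebra k K] [Normal k K]
    [Algebra (RatFunc k) (RatFunc K)]
    (h : ∀ p : k[X], algebraMap (RatFunc k) (RatFunc K) (algebraMap k[X] _ p) =
      algebraMap K[X] _ (p.map (algebraMap k K))) : Normal (RatFunc k) (RatFunc K) := by
  set S : Set (RatFunc K) := Set.range fun a : K => algebraMap K[X] (RatFunc K) (C a) with hS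
  have hgen : ∀ x ∈ S, IsIntegral (RatFunc k) x ∧
      ((minpoly (RatFunc k) x).map (algebraMap (RatFunc k) (RatFunc K))).Splits := by
    rintro _ ⟨a, rfl⟩
    set q := minpoly k a with hq
    have hint : IsIntegral k a := Normal.isIntegral inferInstance a
    set r : (RatFunc k)[X] := q.map ((algebraMap k[X] (RatFunc k)).comp C) with hr
    have hr0 : r ≠ 0 := Polynomial.map_ne_zero (minpoly.ne_zero hint)
    have hmap : r.map (algebraMap (RatFunc k) (RatFunc K)) =
        (q.map (algebraMap k K)).map ((algebraMap K[X] (RatFunc K)).comp C) := by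
      rw [hr, Polynomial.map_map, Polynomial.map_map]
      congr 1
      ext x
      simp only [RingHom.comp_apply]
      rw [h, map_C]
    have hroot : aeval (algebraMap K[X] (RatFunc K) (C a)) r = 0 := by
      rw [aeval_def, ← eval_map, hmap]
      have : algebraMap K[X] (RatFunc K) (C a) = ((algebraMap K[X] (RatFunc K)).comp C) a := rfl
      rw [this, eval_map, eval₂_hom, eval_map]
      have := minpoly.aeval k a
      rw [aeval_def] at this
      rw [this, map_zero]
    refine ⟨IsAlgebraic.isIntegral ⟨r, hr0, hroot⟩, ?_⟩
    refine Splits.of_dvd ?_ (Polynomial.map_ne_zero hr0)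
      (Polynomial.map_dvd _ (minpoly.dvd _ _ hroot))
    rw [hmap]
    exact (Normal.splits (F := k) inferInstance a).map _
  have hpoly : ∀ p : K[X], algebraMap K[X] (RatFunc K) p ∈
      IntermediateField.adjoin (RatFunc k) S := by
    intro p
    induction p using Polynomial.induction_on' with
    | add p q hp hq => rw [map_add]; exact add_mem hp hq
    | monomial n a =>
      rw [← C_mul_X_pow_eq_monomial, map_mul, map_pow]
      refine mul_mem (IntermediateField.subset_adjoin _ _ ⟨a, rfl⟩) (pow_mem ?_ n)
      have := h X
      rw [map_X] at this
      rw [← this]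
      exact IntermediateField.algebraMap_mem _ _
  have htop : ∀ x : RatFunc K, x ∈ IntermediateField.adjoin (RatFunc k) S := by
    intro x
    rw [← RatFunc.num_div_denom x]
    exact div_mem (hpoly _) (hpoly _)
  have hS' : IntermediateField.adjoin (RatFunc k) S = ⊤ := by
    rw [eq_top_iff]; intro x _; exact htop x
  have halg : Algebra.IsAlgebraic (RatFunc k) (⊤ : IntermediateField (RatFunc k) (RatFunc K)) :=
    hS' ▸ IntermediateField.isAlgebraic_adjoin fun x hx => (hgen x hx).1
  rw [normal_iff]
  intro x
  refine ⟨?_, IntermediateField.splits_of_mem_adjoin _ _ hgen (htop x)⟩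
  have := (halg.isAlgebraic ⟨x, trivial⟩).isIntegral
  exact this.map (IntermediateField.val (⊤ : IntermediateField (RatFunc k) (RatFunc K)))

/-! ### The two Galois groups -/

/-- Let `E/F` be normal and let `p` over `F` have `n` roots `e i` and Galois group `S_n`. If some
automorphism over `E` of the splitting field `L` permutes the roots oddly, then the Galois group
over `E` is `S_n` too: its image in the permutations of the roots is normal, since `Gal(L/F)`
surjects onto these permutations and preserves `E`. -/
theorem gal_iso_of_odd {F E L : Type*} [Field F] [Field E] [Field L] [Algebra F E]
    [Algebra E L] [Algebra F L] [IsScalarTower F E L] [Normal F E] {p : F[X]} (hp : p ≠ 0)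
    [IsSplittingField E L (p.map (algebraMap F E))] {n : ℕ}
    (hgal : Nonempty (p.Gal ≃* Equiv.Perm (Fin n))) (e : Fin n ≃ p.rootSet L)
    (hodd : ∃ (σ : L ≃ₐ[E] L) (π : Equiv.Perm (Fin n)), Equiv.Perm.sign π = -1 ∧
      ∀ i, σ (e i) = e (π i)) :
    Nonempty ((L ≃ₐ[E] L) ≃* Equiv.Perm (Fin n)) := by
  have hnormal : Normal F L := normal_of_isSplittingField (E := E) hp
  have hpL : Fact ((p.map (algebraMap F L)).Splits) := ⟨by
    rw [IsScalarTower.algebraMap_eq F E L, ← Polynomial.map_map]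
    exact IsSplittingField.splits L (p.map (algebraMap F E))⟩
  let φ : (L ≃ₐ[F] L) →* Equiv.Perm (Fin n) :=
    (e.symm.permCongrHom.toMonoidHom.comp (Gal.galActionHom p L)).comp (Gal.restrict p L)
  have hφ : ∀ g i, (e (φ g i) : L) = g (e i) := by
    intro g i
    rw [← Gal.galActionHom_restrict p L g (e i)]
    simp [φ]
  have hsurj : Function.Surjective φ := by
    suffices hs : Function.Surjective (Gal.galActionHom p L) by
      exact (e.symm.permCongrHom.surjective.comp hs).comp (Gal.restrict_surjective p L)
    obtain ⟨m⟩ := hgal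
    have : Finite p.Gal := Finite.of_equiv _ m.symm.toEquiv
    refine ((Nat.bijective_iff_injective_and_card _).2
      ⟨Gal.galActionHom_injective p L, ?_⟩).surjective
    rw [Nat.card_congr m.toEquiv, Nat.card_congr e.permCongr]
  let ψ : (L ≃ₐ[E] L) →* Equiv.Perm (Fin n) := φ.comp (AlgEquiv.restrictScalarsHom F)
  have hψ : ∀ g i, (e (ψ g i) : L) = g (e i) := fun g i => hφ _ i
  have hinj : Function.Injective ψ := by
    intro g g' hgg
    have : (g : L →ₐ[E] L) = g' := by
      refine AlgHom.ext_of_adjoin_eq_top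
        (IsSplittingField.adjoin_rootSet L (p.map (algebraMap F E))) ?_
      intro x hx
      have hx' : x ∈ p.rootSet L := by
        rw [mem_rootSet] at hx ⊢
        exact ⟨hp, by simpa using hx.2⟩
      obtain ⟨i, hi⟩ := e.surjective ⟨x, hx'⟩
      have hi' : (e i : L) = x := congrArg Subtype.val hi
      have := hψ g i
      rw [hgg, hψ g' i, hi'] at this
      exact this.symm
    ext x
    exact DFunLike.congr_fun this x
  have hNormal : ψ.range.Normal := by
    refine ⟨?_⟩
    rintro _ ⟨h, rfl⟩ t
    obtain ⟨g, rfl⟩ := hsurj t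
    -- The conjugate `c` fixes `E` pointwise because `g⁻¹` maps `E` to itself.
    let c : L ≃ₐ[F] L := g * h.restrictScalars F * g⁻¹
    have hc : ∀ x : E, c (algebraMap E L x) = algebraMap E L x := by
      intro x
      have h1 : (g⁻¹ : L ≃ₐ[F] L) (algebraMap E L x) =
        algebraMap E L ((g⁻¹ : L ≃ₐ[F] L).restrictNormal E x) :=
          (AlgEquiv.restrictNormal_commutes _ E x).symm
      change g (h ((g⁻¹ : L ≃ₐ[F] L) (algebraMap E L x))) = _
      rw [h1, h.commutes, ← h1]
      exact g.apply_symm_apply _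
    refine ⟨AlgEquiv.ofRingEquiv (f := c.toRingEquiv) hc, ?_⟩
    have : φ c = φ g * ψ h * (φ g)⁻¹ := by
      rw [← map_inv]
      exact (map_mul φ _ _).trans (congrArg (· * _) (map_mul φ _ _))
    rw [← this]
    rfl
  obtain ⟨σ, π, hπ, hσ⟩ := hodd
  have hσπ : ψ σ = π := by
    ext1 i
    apply e.injective
    apply Subtype.ext
    rw [hψ, hσ]
  have htop := normal_eq_top ψ.range ⟨σ, hσπ⟩ hπ
  exact ⟨MulEquiv.ofBijective ψ ⟨hinj, MonoidHom.range_eq_top.1 htop⟩⟩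

/-- If the Vandermonde determinant of the roots is not in the base field, then some automorphism
permutes the roots oddly, because an even permutation fixes that determinant. -/
theorem exists_odd {E L : Type*} [Field E] [Field L] [Algebra E L] [IsGalois E L]
    [FiniteDimensional E L] {n : ℕ} (α : Fin n → L) (hα : Function.Injective α)
    (hperm : ∀ (σ : L ≃ₐ[E] L) i, ∃ j, σ (α i) = α j)
    (hδ : (Matrix.vandermonde α).det ∉ Set.range (algebraMap E L)) :
    ∃ (σ : L ≃ₐ[E] L) (π : Equiv.Perm (Fin n)), Equiv.Perm.sign π = -1 ∧
      ∀ i, σ (α i) = α (π i) := by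
  by_contra! hcon
  refine hδ ((IsGalois.mem_range_algebraMap_iff_fixed _).2 fun σ => ?_)
  choose f hf using hperm σ
  have hfi : Function.Injective f := by
    intro i j hij
    apply hα
    apply σ.injective
    rw [hf, hf, hij]
  let π : Equiv.Perm (Fin n) := Equiv.ofBijective f (Finite.injective_iff_bijective.1 hfi)
  have hπ : ∀ i, σ (α i) = α (π i) := hf
  have hs : Equiv.Perm.sign π = 1 := by
    rcases Int.units_eq_one_or (Equiv.Perm.sign π) with h | h
    · exact h
    · obtain ⟨i, hi⟩ := hcon σ π h
      exact absurd (hπ i) hi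
  have h1 : σ.toRingEquiv.toRingHom.mapMatrix (Matrix.vandermonde α) =
      (Matrix.vandermonde α).submatrix π id := by
    ext i j
    simp [Matrix.vandermonde_apply, hπ]
  have h2 := RingHom.map_det σ.toRingEquiv.toRingHom (Matrix.vandermonde α)
  rw [h1, Matrix.det_permute, hs] at h2
  simpa using h2

theorem exists_enum {β : Type*} {n : ℕ} (s : Multiset β) (hs : s.card = n) :
    ∃ α : Fin n → β, s = Finset.univ.val.map α := by
  subst hs
  induction s using Quotient.inductionOn with
  | h l =>
    refine ⟨l.get, Eq.trans ?_ (Fin.univ_val_map l.get).symm⟩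
    exact congrArg _ (List.ofFn_get l).symm

/-- The result for an arbitrary splitting field `L` of `P` over `ℚ̄(T)`. Keeping `L` abstract
lets `L` carry the `ℚ(T)`-algebra structure defined by composition with `ℚ(T) → ℚ̄(T)`. -/
theorem gal_iso_of_isSplittingField {L : Type*} [Field L]
    [Algebra (RatFunc (AlgebraicClosure ℚ)) L] {n : ℕ} {P : Polynomial (Polynomial ℤ)}
    [IsSplittingField (RatFunc (AlgebraicClosure ℚ)) L (toQbarT P)]
    (hm : P.Monic) (hdeg : P.natDegree = n)
    (hgal : Nonempty ((toQT P).Gal ≃* Equiv.Perm (Fin n)))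
    (hirr : Irreducible ((discOf P n).map (Int.castRingHom ℚ))) :
    Nonempty ((L ≃ₐ[RatFunc (AlgebraicClosure ℚ)] L) ≃* Equiv.Perm (Fin n)) := by
  have hnz : nonZeroDivisors ℚ[X] ≤ (nonZeroDivisors (AlgebraicClosure ℚ)[X]).comap
      (mapRingHom (algebraMap ℚ (AlgebraicClosure ℚ))) :=
    nonZeroDivisors_le_comap_nonZeroDivisors_of_injective _
      (Polynomial.map_injective _ (algebraMap ℚ (AlgebraicClosure ℚ)).injective)
  let : Algebra (RatFunc ℚ) (RatFunc (AlgebraicClosure ℚ)) :=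
    (RatFunc.mapRingHom (mapRingHom (algebraMap ℚ (AlgebraicClosure ℚ))) hnz).toAlgebra
  have hcompat : ∀ p : ℚ[X], algebraMap (RatFunc ℚ) (RatFunc (AlgebraicClosure ℚ))
      (algebraMap ℚ[X] _ p) = algebraMap (AlgebraicClosure ℚ)[X] _
        (p.map (algebraMap ℚ (AlgebraicClosure ℚ))) := by
    intro p
    change RatFunc.map _ hnz _ = _
    rw [RatFunc.map_apply]
    simp
  -- `ℚ̄` carries two `ℚ`-algebra structures, equal since `ℚ`-algebra structures are unique.
  have : Normal ℚ (AlgebraicClosure ℚ) := by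
    have : IsAlgClosure ℚ (AlgebraicClosure ℚ) := by
      convert (inferInstance : @IsAlgClosure ℚ (AlgebraicClosure ℚ) _ _
        (AlgebraicClosure.instAlgebra ℚ) _)
      exact Subsingleton.elim _ _
    exact IsAlgClosure.normal ℚ (AlgebraicClosure ℚ)
  have hN : Normal (RatFunc ℚ) (RatFunc (AlgebraicClosure ℚ)) := ratFunc_normal hcompat
  have hmapP : (toQT P).map (algebraMap (RatFunc ℚ) (RatFunc (AlgebraicClosure ℚ))) =
      toQbarT P := by
    rw [toQT, toQbarT, Polynomial.map_map]
    congr 1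
    refine RingHom.ext fun x => ?_
    simp only [RingHom.comp_apply]
    rw [hcompat, coe_mapRingHom, coe_mapRingHom, Polynomial.map_map]
    congr 2
  have hmonic : (toQT P).Monic := hm.map _
  have hmonic' : (toQbarT P).Monic := hm.map _
  let : Algebra (RatFunc ℚ) L := ((algebraMap (RatFunc (AlgebraicClosure ℚ)) L).comp
    (algebraMap (RatFunc ℚ) (RatFunc (AlgebraicClosure ℚ)))).toAlgebra
  have : IsScalarTower (RatFunc ℚ) (RatFunc (AlgebraicClosure ℚ)) L :=
    IsScalarTower.of_algebraMap_eq fun _ => rfl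
  have : FiniteDimensional (RatFunc (AlgebraicClosure ℚ)) L :=
    IsSplittingField.finiteDimensional L (toQbarT P)
  have : IsSplittingField (RatFunc (AlgebraicClosure ℚ)) L
      ((toQT P).map (algebraMap (RatFunc ℚ) (RatFunc (AlgebraicClosure ℚ)))) := by
    rw [hmapP]; infer_instance
  have hsplit : ((toQbarT P).map (algebraMap _ L)).Splits := IsSplittingField.splits L _
  set f := (toQbarT P).map (algebraMap _ L) with hf
  have hfm : f.Monic := hmonic'.map _
  have hfd : f.natDegree = n := by
    rw [hmonic'.natDegree_map, toQbarT, hm.natDegree_map, hdeg]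
  have hcard : f.roots.card = n := by rw [← hsplit.natDegree_eq_card_roots, hfd]
  obtain ⟨α, hα⟩ : ∃ α : Fin n → L, f.roots = Finset.univ.val.map α :=
    exists_enum _ hcard
  have hfprod : f = ∏ i, (X - C (α i)) := by
    rw [hsplit.eq_prod_roots_of_monic hfm, hα, Multiset.map_map]
    rfl
  obtain ⟨k, hk⟩ := discOf_prod α
  set D := (discOf P n).map (Int.castRingHom ℚ) with hD
  have hdisc : discOf f n = algebraMap _ L (algebraMap (AlgebraicClosure ℚ)[X]
      (RatFunc (AlgebraicClosure ℚ)) (D.map (algebraMap ℚ (AlgebraicClosure ℚ)))) := by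
    rw [hf, discOf_map, toQbarT, discOf_map, RingHom.comp_apply, hD, Polynomial.map_map]
    congr 3
  rw [← hfprod, hdisc] at hk
  have hδ : (Matrix.vandermonde α).det ∉
      Set.range (algebraMap (RatFunc (AlgebraicClosure ℚ)) L) := by
    rintro ⟨w, hw⟩
    refine not_sq hirr w k ((algebraMap _ L).injective ?_)
    rw [hk, ← hw]
    simp
  have hinj : Function.Injective α := by
    rw [← Matrix.det_vandermonde_ne_zero_iff]
    intro h0
    exact hδ ⟨0, by rw [h0, map_zero]⟩
  have hmem : ∀ x : L, x ∈ (toQT P).rootSet L ↔ ∃ i, α i = x := by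
    intro x
    have : x ∈ f.roots ↔ ∃ i, α i = x := by rw [hα]; simp
    rw [← this, mem_rootSet, mem_roots hfm.ne_zero, IsRoot.def, hf, eval_map, ← hmapP, eval₂_map,
      aeval_def, ← IsScalarTower.algebraMap_eq]
    exact ⟨fun h => h.2, fun h => ⟨hmonic.ne_zero, h⟩⟩
  let e : Fin n ≃ (toQT P).rootSet L := Equiv.ofBijective
    (fun i => ⟨α i, (hmem _).2 ⟨i, rfl⟩⟩)
    ⟨fun i j h => hinj (congrArg Subtype.val h), fun x => by
      obtain ⟨i, hi⟩ := (hmem x).1 x.2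
      exact ⟨i, Subtype.ext hi⟩⟩
  have : IsGalois (RatFunc (AlgebraicClosure ℚ)) L :=
    { to_normal := Normal.of_isSplittingField (toQbarT P) }
  refine gal_iso_of_odd hmonic.ne_zero hgal e (exists_odd α hinj (fun σ i => ?_) hδ)
  have h1 : σ.restrictScalars (RatFunc ℚ) (α i) ∈ (toQT P).rootSet L := by
    have := (hmem _).2 ⟨i, rfl⟩
    rw [mem_rootSet] at this ⊢
    refine ⟨this.1, ?_⟩
    rw [aeval_algHom_apply, this.2, map_zero]
  obtain ⟨j, hj⟩ := (hmem _).1 h1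
  exact ⟨j, hj.symm⟩

theorem stmt10 (n : ℕ) (hn : 2 ≤ n) (P : Polynomial (Polynomial ℤ))
    (hm : P.Monic) (hdeg : P.natDegree = n)
    (hgal : Nonempty ((toQT P).Gal ≃* Equiv.Perm (Fin n)))
    (hirr : Irreducible ((discOf P n).map (Int.castRingHom ℚ))) :
    Nonempty ((toQbarT P).Gal ≃* Equiv.Perm (Fin n)) :=
  gal_iso_of_isSplittingField (L := (toQbarT P).SplittingField) hm hdeg hgal hirr
end
end

section
/- Let P ∈ ℤ[T] be a nonconstant separable polynomial and suppose there exists an element σ of the Galois group of the splitting field of P over ℚ that fixes no root of P. Then the set of prime numbers that are not prime divisors of P has positive density among the primes: there exist δ > 0 and x₀ such that for all x ≥ x₀, the number of primes p ≤ x for which there is no t₀ ∈ ℚ with P(t₀) ≠ 0 and v_p(P(t₀)) > 0 is at least δ·π(x), where π denotes the prime-counting function and v_p the p-adic valuation on ℚ. -/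
/-!
The primes whose Frobenius generates a conjugate of `⟨σ⟩` are, up to finitely many, not prime
divisors of `P`: a large prime divisor `p` of `P` gives a root of `P` modulo a prime `Q` above `p`
which is fixed by `x ↦ x ^ p`, so the Frobenius at `Q` fixes a root of `P`
(`eventually_exists_fixed_root`), and then a conjugate of it, hence `σ`, fixes a root as well. It
remains to see that these primes have positive lower density. The full Chebotarev theorem is not
needed: as in Frobenius' density theorem, it is enough to count degree one primes in fixed fields.

* Every number field `K` satisfies Mertens' theorem `∑_{N𝔭 ≤ x} log N𝔭 / N𝔭 = log x + O(1)`
  (`exists_mertens_ideal`). As in the classical proof with `x!`, one factors the product of the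
  norms of all elements of a box in `𝓞 K` whose elements have norm of exact order `X ^ d`; an ideal
  `I` contains the expected proportion `1 / N(I)` of the box, with an error controlled by
  `N(I) ^ (1/d) / X` (`exists_count`). The primes of residue degree at least two contribute `O(1)`.
* For `L/ℚ` Galois with a subgroup `U` and a large prime `p` with Frobenius `φ`, the degree one
  primes above `p` in the fixed field of `U` correspond to the cosets `xU` with `x⁻¹ φ x ∈ U`
  (`eventually_degOne_mul_card`).
* With `n` the order of `σ`, the combination `∑_{d ∣ n} μ(d)/d · (degree one primes in the fixed
  field of ⟨σ ^ d⟩)` is `1/n` times the number of `x` for which `x⁻¹ φ x` generates `⟨σ⟩`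
  (`eventually_weight`). By Mertens' theorem in the fixed fields these weights satisfy
  `∑_{p ≤ x} weight(p) log p / p = c log x + O(1)` with `c = ∑_{d ∣ n} μ(d)/d = φ(n)/n > 0`
  (`exists_weight_mertens`).
* Comparing `x` with `x / A` for a large constant `A`, and using Chebyshev's upper bound for `π(x)`,
  the support of the weights has positive lower density (`density_of_mertens`).
-/

open Polynomial

/-- `p` is a prime divisor of `P`: some value `P(t₀)`, `t₀ ∈ ℚ`, is nonzero of positive
`p`-adic valuation. -/
def IsPrimeDivisorOf (p : ℕ) (P : Polynomial ℤ) : Prop :=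
  ∃ t₀ : ℚ, Polynomial.aeval t₀ P ≠ 0 ∧ 0 < padicValRat p (Polynomial.aeval t₀ P)

/-! ### Boxes in a free ring of finite rank -/

namespace FrobDensity

open scoped NumberField

section Box

variable {R ι : Type*} [CommRing R] [Fintype ι] (b : Module.Basis ι ℤ R)

/-- The elements of `R` whose coordinates with respect to `b` differ from those of `z` by at
most `X`. -/
noncomputable def box (z : R) (X : ℕ) : Finset R := by
  classical
  exact (Fintype.piFinset fun _ : ι => Finset.Icc (-(X : ℤ)) X).map
    ((b.equivFun.symm.toEquiv.trans (Equiv.addLeft z)).toEmbedding)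

lemma mem_box (z a : R) (X : ℕ) : a ∈ box b z X ↔ ∀ i, |b.repr (a - z) i| ≤ X := by
  classical
  simp only [box, Finset.mem_map, Fintype.mem_piFinset, Finset.mem_Icc, abs_le]
  constructor
  · rintro ⟨f, hf, rfl⟩ i
    have : b.repr ((b.equivFun.symm.toEquiv.trans (Equiv.addLeft z)).toEmbedding f - z) i = f i := by
      change b.repr (z + b.equivFun.symm f - z) i = f i
      rw [add_sub_cancel_left, ← b.equivFun_apply, LinearEquiv.apply_symm_apply]
    rw [this]
    exact hf i
  · intro h
    exact ⟨b.equivFun (a - z), h, by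
      change z + b.equivFun.symm (b.equivFun (a - z)) = a
      rw [LinearEquiv.symm_apply_apply, add_sub_cancel]⟩

lemma card_box (z : R) (X : ℕ) : (box b z X).card = (2 * X + 1) ^ Fintype.card ι := by
  classical
  simp only [box, Finset.card_map, Fintype.card_piFinset, Int.card_Icc, Finset.prod_const]
  congr 1
  omega

/-- Reduction modulo `α`, by Euclidean division of the coordinates of `γ / α`. -/
lemma exists_small_sub_mul_mem :
    ∃ M : ℕ, 1 ≤ M ∧ ∀ (α α' : R) (n : ℤ) (m : ℕ), n ≠ 0 → α * α' = (n : R) →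
      (∀ i, |b.repr α i| ≤ m) →
      ∀ γ : R, ∃ β : R, ∀ j, |b.repr (γ - α * β) j| ≤ (M * m : ℕ) := by
  refine ⟨1 + ∑ i, ∑ k, ∑ j, (b.repr (b k * b i) j).natAbs, by omega, ?_⟩
  intro α α' n m hn hα hm γ
  set c := b.repr (α' * γ) with hc
  refine ⟨∑ i, (c i / n) • b i, fun j => ?_⟩
  set β := ∑ i, (c i / n) • b i with hβ
  have hγ : α' * γ = ∑ i, c i • b i := (b.sum_repr _).symm
  have key : n • (γ - α * β) = ∑ i, (c i % n) • (α * b i) := by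
    have h1 : n • (γ - α * β) = α * (α' * γ - n • β) := by
      rw [mul_sub, ← mul_assoc, hα, smul_sub]
      simp only [zsmul_eq_mul]; ring
    rw [h1, hγ, hβ, Finset.smul_sum, ← Finset.sum_sub_distrib, Finset.mul_sum]
    refine Finset.sum_congr rfl fun i _ => ?_
    rw [smul_smul, ← sub_smul, mul_smul_comm]
    congr 1
    have := Int.emod_add_mul_ediv (c i) n
    linarith
  have h2 : n * b.repr (γ - α * β) j = ∑ i, (c i % n) * b.repr (α * b i) j := by
    have := congrArg (fun v => b.repr v j) key
    simpa only [map_smul, map_sum, Finsupp.finsetSum_apply, Finsupp.smul_apply, smul_eq_mul]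
      using this
  have h3 : ∀ i, |b.repr (α * b i) j| ≤ m * ∑ k, |b.repr (b k * b i) j| := by
    intro i
    conv_lhs => rw [← b.sum_repr α]
    rw [Finset.sum_mul]
    simp only [smul_mul_assoc, map_sum, map_smul, Finsupp.finsetSum_apply, Finsupp.smul_apply,
      smul_eq_mul]
    rw [Finset.mul_sum]
    refine (Finset.abs_sum_le_sum_abs _ _).trans (Finset.sum_le_sum fun k _ => ?_)
    rw [abs_mul]
    exact mul_le_mul_of_nonneg_right (hm k) (abs_nonneg _)
  have h4 : |n| * |b.repr (γ - α * β) j| ≤ |n| * ∑ i, (m * ∑ k, |b.repr (b k * b i) j|) := by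
    rw [← abs_mul, h2, Finset.mul_sum]
    refine (Finset.abs_sum_le_sum_abs _ _).trans (Finset.sum_le_sum fun i _ => ?_)
    rw [abs_mul]
    refine mul_le_mul ?_ (h3 i) (abs_nonneg _) (abs_nonneg _)
    rw [abs_of_nonneg (Int.emod_nonneg _ hn)]
    exact (Int.emod_lt_abs _ hn).le
  have h5 := le_of_mul_le_mul_left h4 (abs_pos.mpr hn)
  refine h5.trans ?_
  rw [← Finset.mul_sum, Nat.cast_mul, mul_comm]
  refine mul_le_mul_of_nonneg_right ?_ (by positivity)
  push_cast
  have : ∀ i k, |b.repr (b k * b i) j| ≤ ∑ j, |b.repr (b k * b i) j| := fun i k =>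
    Finset.single_le_sum (f := fun j => |b.repr (b k * b i) j|) (fun _ _ => abs_nonneg _)
      (Finset.mem_univ j)
  calc _ ≤ ∑ i, ∑ k, ∑ j, |b.repr (b k * b i) j| :=
        Finset.sum_le_sum fun i _ => Finset.sum_le_sum fun k _ => this i k
    _ ≤ _ := by linarith

/-- Pigeonhole: an ideal whose index is less than the number of points of a box contains a
nonzero difference of two points of this box. -/
lemma exists_small_mem (I : Ideal R) [Finite (R ⧸ I)] (k : ℕ)
    (hk : Nat.card (R ⧸ I) < (k + 1) ^ Fintype.card ι) :
    ∃ α ∈ I, α ≠ 0 ∧ ∀ i, |b.repr α i| ≤ k := by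
  classical
  have := Fintype.ofFinite (R ⧸ I)
  have hcard : (Finset.univ : Finset (R ⧸ I)).card <
      (Fintype.piFinset fun _ : ι => Finset.Icc (0 : ℤ) k).card := by
    simpa [Fintype.card_piFinset, Nat.card_eq_fintype_card] using hk
  obtain ⟨f, hf, g, hg, hne, heq⟩ := Finset.exists_ne_map_eq_of_card_lt_of_maps_to hcard
    (f := fun f => Ideal.Quotient.mk I (b.equivFun.symm f)) (fun _ _ => Finset.mem_univ _)
  refine ⟨b.equivFun.symm f - b.equivFun.symm g, Ideal.Quotient.eq.mp heq, ?_, fun i => ?_⟩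
  · rw [sub_ne_zero]
    exact fun h => hne (b.equivFun.symm.injective h)
  · rw [← map_sub, ← b.equivFun_apply, LinearEquiv.apply_symm_apply, Pi.sub_apply, abs_le]
    rw [Fintype.mem_piFinset] at hf hg
    have := Finset.mem_Icc.mp (hf i)
    have := Finset.mem_Icc.mp (hg i)
    constructor <;> linarith

open Classical in
/-- If every class modulo `I` meets the box of size `c` around `0`, then the number of points of
`I` in a box is controlled by the size of slightly larger and smaller boxes. -/
lemma card_box_ideal (I : Ideal R) [Finite (R ⧸ I)] (c : ℕ)
    (hc : ∀ γ : R, ∃ δ, γ - δ ∈ I ∧ ∀ i, |b.repr δ i| ≤ c) (z : R) (X : ℕ) :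
    ((box b z X).filter (· ∈ I)).card * Nat.card (R ⧸ I) ≤
        (2 * (X + c) + 1) ^ Fintype.card ι ∧
      (c ≤ X → (2 * (X - c) + 1) ^ Fintype.card ι ≤
        ((box b z X).filter (· ∈ I)).card * Nat.card (R ⧸ I)) := by
  have := Fintype.ofFinite (R ⧸ I)
  have hs : ∀ q : R ⧸ I, ∃ δ, Ideal.Quotient.mk I δ = q ∧ ∀ i, |b.repr δ i| ≤ c := by
    intro q
    obtain ⟨γ, rfl⟩ := Ideal.Quotient.mk_surjective q
    obtain ⟨δ, h1, h2⟩ := hc γ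
    exact ⟨δ, (Ideal.Quotient.eq.mpr h1).symm, h2⟩
  choose s hs1 hs2 using hs
  rw [Nat.card_eq_fintype_card, ← Finset.card_univ, ← Finset.card_product]
  constructor
  · rw [← card_box b z]
    refine Finset.card_le_card_of_injOn (fun v => v.1 + s v.2) ?_ ?_
    · rintro ⟨a, q⟩ h
      simp only [Finset.coe_product, Set.mem_prod, Finset.mem_coe, Finset.mem_filter] at h
      simp only [Finset.mem_coe, mem_box]
      intro i
      have h1 := (mem_box b z a X).mp h.1.1 i
      have : a + s q - z = (a - z) + s q := by ring
      rw [this, map_add, Finsupp.add_apply]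
      push_cast
      exact (abs_add_le _ _).trans (add_le_add h1 (hs2 q i))
    · rintro ⟨a, q⟩ h ⟨a', q'⟩ h' heq
      simp only [Finset.coe_product, Set.mem_prod, Finset.mem_coe, Finset.mem_filter] at h h'
      simp only at heq
      have h3 := congrArg (Ideal.Quotient.mk I) heq
      rw [map_add, map_add, Ideal.Quotient.eq_zero_iff_mem.mpr h.1.2,
        Ideal.Quotient.eq_zero_iff_mem.mpr h'.1.2, hs1, hs1, zero_add, zero_add] at h3
      subst h3
      simpa using heq
  · intro hcX
    rw [← card_box b z]
    refine Finset.card_le_card_of_injOn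
      (fun γ => (γ - s (Ideal.Quotient.mk I γ), Ideal.Quotient.mk I γ)) ?_ ?_
    · intro γ h
      simp only [Finset.coe_product, Set.mem_prod, Finset.mem_coe, Finset.mem_filter,
        Finset.mem_univ, and_true]
      rw [Finset.mem_coe, mem_box] at h
      refine ⟨(mem_box _ _ _ _).mpr fun i => ?_, ?_⟩
      · have h1 := h i
        have h2 := hs2 (Ideal.Quotient.mk I γ) i
        have : γ - s (Ideal.Quotient.mk I γ) - z = (γ - z) - s (Ideal.Quotient.mk I γ) := by ring
        rw [this, map_sub, Finsupp.sub_apply]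
        refine (abs_sub _ _).trans ?_
        push_cast [Nat.cast_sub hcX] at h1
        linarith
      · rw [← Ideal.Quotient.eq_zero_iff_mem, map_sub, hs1, sub_self]
    · intro γ _ γ' _ heq
      simp only [Prod.mk.injEq] at heq
      rw [heq.2] at heq
      simpa using heq.1

end Box

end FrobDensity

/-! ### Elements of ideals in boxes -/

namespace FrobDensity

open scoped NumberField

section Count

variable (K : Type*) [Field K] [NumberField K]

lemma card_index : Fintype.card (Module.Free.ChooseBasisIndex ℤ (𝓞 K)) = Module.finrank ℚ K := by
  rw [← Module.finrank_eq_card_chooseBasisIndex, NumberField.RingOfIntegers.rank]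

/-- Boxes with respect to the chosen integral basis of `𝓞 K`. -/
noncomputable abbrev kbox (z : 𝓞 K) (X : ℕ) : Finset (𝓞 K) :=
  box (NumberField.RingOfIntegers.basis K) z X

/-- Every class modulo `I` has a representative with coordinates `O(N(I) ^ (1/d))`: the pigeonhole
principle provides a nonzero `α ∈ I` of this size, and one reduces modulo `α`. -/
lemma exists_small_reps : ∃ M : ℕ, 1 ≤ M ∧ ∀ I : Ideal (𝓞 K), I ≠ ⊥ →
    ∃ c : ℕ, (c : ℝ) ≤ M * (Ideal.absNorm I : ℝ) ^ ((1 : ℝ) / Module.finrank ℚ K) ∧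
      ∀ γ : 𝓞 K, ∃ δ, γ - δ ∈ I ∧
        ∀ i, |(NumberField.RingOfIntegers.basis K).repr δ i| ≤ c := by
  set b := NumberField.RingOfIntegers.basis K
  obtain ⟨M, hM1, hM⟩ := exists_small_sub_mul_mem b
  refine ⟨M, hM1, fun I hI => ?_⟩
  have hd : Module.finrank ℚ K ≠ 0 := Module.finrank_pos.ne'
  set r := (Ideal.absNorm I : ℝ) ^ ((1 : ℝ) / Module.finrank ℚ K) with hr
  have hr0 : 0 ≤ r := by positivity
  have hN : Ideal.absNorm I ≠ 0 := by rwa [Ne, Ideal.absNorm_eq_zero_iff]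
  have : Finite (𝓞 K ⧸ I) := (Ideal.absNorm_ne_zero_iff I).mp hN
  have hk : Nat.card (𝓞 K ⧸ I) < (⌊r⌋₊ + 1) ^
      Fintype.card (Module.Free.ChooseBasisIndex ℤ (𝓞 K)) := by
    rw [card_index]
    have h1 : r < ((⌊r⌋₊ + 1 : ℕ) : ℝ) := by push_cast; exact Nat.lt_floor_add_one r
    have h2 := pow_lt_pow_left₀ h1 hr0 hd
    have h3 : r ^ Module.finrank ℚ K = Ideal.absNorm I := by
      rw [hr, one_div, Real.rpow_inv_natCast_pow (by positivity) hd]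
    rw [h3] at h2
    exact_mod_cast h2
  obtain ⟨α, hαI, hα0, hα⟩ := exists_small_mem b I ⌊r⌋₊ hk
  obtain ⟨α', hα'⟩ := Ideal.mem_span_singleton.mp (Ideal.absNorm_mem (Ideal.span {α}))
  refine ⟨M * ⌊r⌋₊, ?_, fun γ => ?_⟩
  · push_cast
    gcongr
    exact Nat.floor_le hr0
  · have hn : ((Ideal.absNorm (Ideal.span {α}) : ℕ) : ℤ) ≠ 0 := by
      rw [Ne, Nat.cast_eq_zero, Ideal.absNorm_eq_zero_iff, Ideal.span_singleton_eq_bot]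
      exact hα0
    obtain ⟨β, hβ⟩ := hM α α' _ ⌊r⌋₊ hn (by rw [← hα']; simp) hα γ
    exact ⟨γ - α * β, by simpa using I.mul_mem_right β hαI, hβ⟩

open Classical in
/-- A box of size `X` contains about `(2X+1)^d / N(I)` elements of the ideal `I`. -/
lemma exists_count : ∃ M : ℝ, 1 ≤ M ∧ ∀ I : Ideal (𝓞 K), I ≠ ⊥ → ∀ (z : 𝓞 K) (X : ℕ), 1 ≤ X →
    (((kbox K z X).filter (· ∈ I)).card : ℝ) * Ideal.absNorm I ≤
      (2 * X + 1) ^ Module.finrank ℚ K *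
        (1 + M * (Ideal.absNorm I : ℝ) ^ ((1 : ℝ) / Module.finrank ℚ K) / X) ^ Module.finrank ℚ K ∧
    (2 * X + 1) ^ Module.finrank ℚ K *
        (1 - Module.finrank ℚ K *
          (M * (Ideal.absNorm I : ℝ) ^ ((1 : ℝ) / Module.finrank ℚ K) / X)) ≤
      (((kbox K z X).filter (· ∈ I)).card : ℝ) * Ideal.absNorm I := by
  obtain ⟨M, hM1, hM⟩ := exists_small_reps K
  refine ⟨M, by exact_mod_cast hM1, fun I hI z X hX => ?_⟩
  obtain ⟨c, hcr, hc⟩ := hM I hI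
  have hN : Ideal.absNorm I ≠ 0 := by rwa [Ne, Ideal.absNorm_eq_zero_iff]
  have : Finite (𝓞 K ⧸ I) := (Ideal.absNorm_ne_zero_iff I).mp hN
  obtain ⟨h1, h2⟩ := card_box_ideal _ I c hc z X
  rw [card_index] at h1 h2
  have hAN : Nat.card (𝓞 K ⧸ I) = Ideal.absNorm I := rfl
  rw [hAN] at h1 h2
  have hX0 : (0 : ℝ) < X := by exact_mod_cast hX
  set r := (Ideal.absNorm I : ℝ) ^ ((1 : ℝ) / Module.finrank ℚ K) with hr
  set d := Module.finrank ℚ K with hd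
  have hd1 : (1 : ℝ) ≤ d := by
    have : 0 < d := Module.finrank_pos
    exact_mod_cast this
  have hcX : (c : ℝ) / X ≤ M * r / X := by gcongr
  constructor
  · have h1' : (((kbox K z X).filter (· ∈ I)).card : ℝ) * Ideal.absNorm I ≤
        (2 * (X + c) + 1) ^ d := by exact_mod_cast h1
    refine h1'.trans ?_
    rw [← mul_pow]
    refine pow_le_pow_left₀ (by positivity) ?_ _
    calc (2 * (X + c) + 1 : ℝ) = (2 * X + 1) + 2 * X * (c / X) := by field_simp; ring
      _ ≤ (2 * X + 1) + (2 * X + 1) * (M * r / X) := by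
          gcongr
          linarith
      _ = _ := by ring
  · by_cases hcX' : c ≤ X
    · have h2' : ((2 * (X - c) + 1 : ℝ)) ^ d ≤
          (((kbox K z X).filter (· ∈ I)).card : ℝ) * Ideal.absNorm I := by
        have := h2 hcX'
        rw [← Nat.cast_le (α := ℝ)] at this
        push_cast [Nat.cast_sub hcX'] at this
        exact this
      refine le_trans ?_ h2'
      have hcX1 : (c : ℝ) / X ≤ 1 := by
        rw [div_le_one hX0]; exact_mod_cast hcX'
      calc ((2 * X + 1 : ℝ)) ^ d * (1 - d * (M * r / X))
          ≤ (2 * X + 1 : ℝ) ^ d * (1 + d * (-(c / X))) := by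
            gcongr
            have : (d : ℝ) * (c / X) ≤ d * (M * r / X) := by gcongr
            linarith
        _ ≤ (2 * X + 1 : ℝ) ^ d * (1 + (-(c / X))) ^ d := by
            gcongr
            exact one_add_mul_le_pow (by linarith) d
        _ = ((2 * X + 1) * (1 - c / X)) ^ d := by rw [mul_pow]; ring
        _ ≤ _ := by
            refine pow_le_pow_left₀ (mul_nonneg (by positivity) (by linarith)) ?_ _
            have : (2 * X + 1 : ℝ) * (1 - c / X) = 2 * (X - c) + 1 - c / X := by
              field_simp; ring
            rw [this]
            have : (0 : ℝ) ≤ c / X := by positivity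
            linarith
    · have h3 : 1 ≤ (c : ℝ) / X := by
        rw [one_le_div hX0]; exact_mod_cast (not_le.mp hcX').le
      refine le_trans ?_ (by positivity)
      refine mul_nonpos_of_nonneg_of_nonpos (by positivity) ?_
      nlinarith

/-- In the box of size `X` centred at the integer `W * X`, with `W` large, all elements have norm
of exact order `X ^ d`. -/
lemma exists_norm_bounds : ∃ W : ℕ, 1 ≤ W ∧ ∀ X : ℕ, 1 ≤ X → ∀ α ∈ kbox K ((W * X : ℕ) : 𝓞 K) X,
    α ≠ 0 ∧ X ^ Module.finrank ℚ K ≤ Ideal.absNorm (Ideal.span {α}) ∧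
      Ideal.absNorm (Ideal.span {α}) ≤ (2 * W * X) ^ Module.finrank ℚ K := by
  set b := NumberField.RingOfIntegers.basis K with hb
  set B : ℝ := ∑ σ : K →ₐ[ℚ] ℂ, ∑ i, ‖σ (b i : K)‖ with hB
  have hB0 : 0 ≤ B := Finset.sum_nonneg fun _ _ => Finset.sum_nonneg fun _ _ => norm_nonneg _
  have hWB : B ≤ ⌈B⌉₊ := Nat.le_ceil B
  refine ⟨⌈B⌉₊ + 1, by omega, fun X hX α hα => ?_⟩
  have hX0 : (1 : ℝ) ≤ X := by exact_mod_cast hX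
  set W := ⌈B⌉₊ + 1 with hW
  have hWB' : B + 1 ≤ (W : ℝ) := by rw [hW]; push_cast; linarith
  have hσ : ∀ σ : K →ₐ[ℚ] ℂ, (X : ℝ) ≤ ‖σ (α : K)‖ ∧ ‖σ (α : K)‖ ≤ 2 * W * X := by
    intro σ
    set β : 𝓞 K := α - ((W * X : ℕ) : 𝓞 K) with hβ
    have hβi : ∀ i, |b.repr β i| ≤ X := (mem_box _ _ _ _).mp hα
    have hβB : ‖σ (β : K)‖ ≤ B * X := by
      have h1 : (β : K) = ∑ i, ((b.repr β i : ℤ) : K) * (b i : K) := by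
        conv_lhs => rw [← b.sum_repr β]
        simp [zsmul_eq_mul]
      rw [h1, map_sum]
      calc _ ≤ ∑ i, ‖σ (((b.repr β i : ℤ) : K) * (b i : K))‖ := norm_sum_le _ _
        _ ≤ ∑ i, ‖σ (b i : K)‖ * X := by
            refine Finset.sum_le_sum fun i _ => ?_
            rw [map_mul, norm_mul, mul_comm, map_intCast, Complex.norm_intCast]
            gcongr
            exact_mod_cast hβi i
        _ = (∑ i, ‖σ (b i : K)‖) * X := by rw [Finset.sum_mul]
        _ ≤ B * X := by
            gcongr
            exact Finset.single_le_sum (f := fun σ : K →ₐ[ℚ] ℂ => ∑ i, ‖σ (b i : K)‖)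
              (fun _ _ => Finset.sum_nonneg fun _ _ => norm_nonneg _) (Finset.mem_univ σ)
    have h2 : σ (α : K) = ((W * X : ℕ) : ℂ) + σ (β : K) := by
      have : (α : K) = ((W * X : ℕ) : K) + (β : K) := by simp [hβ]
      rw [this, map_add, map_natCast]
    have h3 : ‖((W * X : ℕ) : ℂ)‖ = W * X := by rw [Complex.norm_natCast]; push_cast; rfl
    rw [h2]
    constructor
    · have := norm_sub_norm_le ((W * X : ℕ) : ℂ) (-(σ (β : K)))
      rw [norm_neg, sub_neg_eq_add, h3] at this
      nlinarith
    · have := norm_add_le ((W * X : ℕ) : ℂ) (σ (β : K))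
      rw [h3] at this
      nlinarith
  have hnorm : (Ideal.absNorm (Ideal.span {α}) : ℝ) = ∏ σ : K →ₐ[ℚ] ℂ, ‖σ (α : K)‖ := by
    rw [Ideal.absNorm_span_singleton, ← norm_prod]
    have := Algebra.norm_eq_prod_embeddings ℚ ℂ (α : K)
    rw [← this, ← Algebra.coe_norm_int]
    simp [Nat.cast_natAbs]
  have hcard : Fintype.card (K →ₐ[ℚ] ℂ) = Module.finrank ℚ K := AlgHom.card ℚ K ℂ
  refine ⟨?_, ?_, ?_⟩
  · rintro rfl
    have σ : K →ₐ[ℚ] ℂ := Classical.choice (by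
      rw [← Fintype.card_pos_iff, hcard]; exact Module.finrank_pos)
    have := (hσ σ).1
    simp at this
    linarith
  · rw [← Nat.cast_le (α := ℝ), hnorm, Nat.cast_pow, ← hcard, ← Finset.card_univ,
      ← Finset.prod_const]
    exact Finset.prod_le_prod (fun _ _ => by positivity) fun σ _ => (hσ σ).1
  · rw [← Nat.cast_le (α := ℝ), hnorm, Nat.cast_pow, ← hcard, ← Finset.card_univ,
      ← Finset.prod_const]
    refine Finset.prod_le_prod (fun _ _ => by positivity) fun σ _ => ?_
    push_cast
    exact (hσ σ).2

end Count

end FrobDensity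

/-! ### Norms and prime factorizations -/

namespace FrobDensity

open scoped NumberField

section Factor

variable (K : Type*) [Field K] [NumberField K]

open Classical in
/-- The nonzero prime ideals of norm at most `x`. -/
noncomputable def primesLe (x : ℕ) : Finset (Ideal (𝓞 K)) :=
  (Ideal.finite_setOfPred_absNorm_le (S := 𝓞 K) x).toFinset.filter fun 𝔭 => 𝔭.IsPrime ∧ 𝔭 ≠ ⊥

variable {K}

lemma mem_primesLe {x : ℕ} {𝔭 : Ideal (𝓞 K)} :
    𝔭 ∈ primesLe K x ↔ 𝔭.IsPrime ∧ 𝔭 ≠ ⊥ ∧ Ideal.absNorm 𝔭 ≤ x := by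
  simp [primesLe]
  tauto

lemma two_le_absNorm {𝔭 : Ideal (𝓞 K)} (h : 𝔭.IsPrime) (h0 : 𝔭 ≠ ⊥) :
    2 ≤ Ideal.absNorm 𝔭 := by
  have h1 : Ideal.absNorm 𝔭 ≠ 0 := by rwa [Ne, Ideal.absNorm_eq_zero_iff]
  have h2 : Ideal.absNorm 𝔭 ≠ 1 := by rw [Ne, Ideal.absNorm_eq_one_iff]; exact h.ne_top
  omega

lemma absNorm_pow_le {𝔭 J : Ideal (𝓞 K)} {k : ℕ} (hJ : J ≠ ⊥) (h : J ≤ 𝔭 ^ k) :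
    Ideal.absNorm 𝔭 ^ k ≤ Ideal.absNorm J := by
  rw [← map_pow]
  refine Nat.le_of_dvd ?_ (Ideal.absNorm_dvd_absNorm_of_le h)
  rw [Nat.pos_iff_ne_zero, Ne, Ideal.absNorm_eq_zero_iff]
  exact hJ

open Classical in
/-- The prime factorization of `J`: each prime `𝔭` contributes `log N(𝔭)` for every `k ≥ 1` such
that `𝔭 ^ k` divides `J`. The bounds on `𝔭` and `k` lose nothing as `N(J) ≤ x`. -/
lemma log_absNorm_eq (J : Ideal (𝓞 K)) (hJ : J ≠ ⊥) (x : ℕ) (hx : Ideal.absNorm J ≤ x) :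
    Real.log (Ideal.absNorm J) = ∑ 𝔭 ∈ primesLe K x, ∑ k ∈ Finset.Icc 1 x,
      if J ≤ 𝔭 ^ k then Real.log (Ideal.absNorm 𝔭) else 0 := by
  set s := UniqueFactorizationMonoid.normalizedFactors J with hs
  have hprime : ∀ 𝔭 ∈ s, 𝔭.IsPrime ∧ 𝔭 ≠ ⊥ := fun 𝔭 h =>
    have h1 := UniqueFactorizationMonoid.prime_of_normalized_factor 𝔭 h
    ⟨Ideal.isPrime_of_prime h1, h1.ne_zero⟩
  have hprod : s.prod = J := Ideal.prod_normalizedFactors_eq_self hJ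
  have h1 : Real.log (Ideal.absNorm J) = (s.map fun 𝔭 => Real.log (Ideal.absNorm 𝔭)).sum := by
    conv_lhs => rw [← hprod]
    rw [map_multiset_prod, Nat.cast_multiset_prod, Multiset.map_map, Real.log_multiset_prod,
      Multiset.map_map]
    · rfl
    · intro r hr
      obtain ⟨𝔭, h𝔭, rfl⟩ := Multiset.mem_map.mp hr
      obtain ⟨hp, h0⟩ := hprime 𝔭 h𝔭
      have := two_le_absNorm hp h0
      exact Nat.cast_ne_zero.mpr (by omega)
  have hcount : ∀ 𝔭 : Ideal (𝓞 K), 𝔭.IsPrime → 𝔭 ≠ ⊥ → ∀ k, J ≤ 𝔭 ^ k ↔ k ≤ s.count 𝔭 := by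
    intro 𝔭 hp h0 k
    have hirr := (Ideal.prime_of_isPrime h0 hp).irreducible
    rw [← Ideal.dvd_iff_le, pow_dvd_iff_le_emultiplicity,
      UniqueFactorizationMonoid.emultiplicity_eq_count_normalizedFactors hirr hJ, normalize_eq]
    exact_mod_cast Iff.rfl
  rw [h1, Finset.sum_multiset_map_count]
  symm
  rw [← Finset.sum_subset (s₁ := s.toFinset)]
  symm
  · refine Finset.sum_congr rfl fun 𝔭 h𝔭 => ?_
    rw [Multiset.mem_toFinset] at h𝔭
    obtain ⟨hp, h0⟩ := hprime 𝔭 h𝔭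
    rw [← Finset.sum_filter, Finset.sum_const]
    congr 1
    have hle : s.count 𝔭 ≤ x := by
      have h2 := absNorm_pow_le hJ ((hcount 𝔭 hp h0 _).mpr le_rfl)
      have h3 := Nat.pow_le_pow_left (two_le_absNorm hp h0) (s.count 𝔭)
      have h4 := Nat.lt_two_pow_self (n := s.count 𝔭)
      omega
    have : (Finset.Icc 1 x).filter (fun k => J ≤ 𝔭 ^ k) = Finset.Icc 1 (s.count 𝔭) := by
      ext k
      simp only [Finset.mem_filter, Finset.mem_Icc, hcount 𝔭 hp h0]
      omega
    rw [this, Nat.card_Icc]; omega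
  · intro 𝔭 h𝔭
    rw [Multiset.mem_toFinset] at h𝔭
    obtain ⟨hp, h0⟩ := hprime 𝔭 h𝔭
    refine mem_primesLe.mpr ⟨hp, h0, le_trans ?_ hx⟩
    have := absNorm_pow_le (k := 1) hJ ((hcount 𝔭 hp h0 _).mpr (Multiset.one_le_count_iff_mem.mpr h𝔭))
    simpa using this
  · intro 𝔭 h𝔭 hns
    obtain ⟨hp, h0, -⟩ := mem_primesLe.mp h𝔭
    rw [Multiset.mem_toFinset, ← Multiset.count_eq_zero] at hns
    refine Finset.sum_eq_zero fun k hk => ?_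
    rw [if_neg]
    rw [hcount 𝔭 hp h0, hns]
    have := (Finset.mem_Icc.mp hk).1
    omega

lemma log_absNorm_nonneg (𝔭 : Ideal (𝓞 K)) : 0 ≤ Real.log (Ideal.absNorm 𝔭) :=
  Real.log_natCast_nonneg _

/-- Distinct primes dividing `J` have product of norms at most `N(J)`. -/
lemma sum_log_le_log_absNorm (J : Ideal (𝓞 K)) (hJ : J ≠ ⊥) (S : Finset (Ideal (𝓞 K)))
    (hS : ∀ 𝔭 ∈ S, 𝔭.IsPrime ∧ J ≤ 𝔭) :
    ∑ 𝔭 ∈ S, Real.log (Ideal.absNorm 𝔭) ≤ Real.log (Ideal.absNorm J) := by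
  classical
  have h0 : ∀ 𝔭 ∈ S, 𝔭 ≠ ⊥ := fun 𝔭 h h' => hJ (by simpa [h'] using (hS 𝔭 h).2)
  have hJ1 : 1 ≤ Ideal.absNorm J := by
    rw [Nat.one_le_iff_ne_zero, Ne, Ideal.absNorm_eq_zero_iff]; exact hJ
  rw [log_absNorm_eq J hJ _ le_rfl]
  calc _ ≤ ∑ 𝔭 ∈ S, ∑ k ∈ Finset.Icc 1 (Ideal.absNorm J),
        (if J ≤ 𝔭 ^ k then Real.log (Ideal.absNorm 𝔭) else 0) := by
        refine Finset.sum_le_sum fun 𝔭 h => ?_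
        refine le_trans ?_ (Finset.single_le_sum (a := 1) (fun k _ => ?_)
          (Finset.mem_Icc.mpr ⟨le_rfl, hJ1⟩))
        · rw [if_pos (by simpa using (hS 𝔭 h).2)]
        · split_ifs
          exacts [log_absNorm_nonneg _, le_rfl]
    _ ≤ _ := by
        refine Finset.sum_le_sum_of_subset_of_nonneg ?_ ?_
        · intro 𝔭 h
          refine mem_primesLe.mpr ⟨(hS 𝔭 h).1, h0 𝔭 h, ?_⟩
          simpa using absNorm_pow_le (k := 1) hJ (by simpa using (hS 𝔭 h).2)
        · intro 𝔭 _ _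
          refine Finset.sum_nonneg fun k _ => ?_
          split_ifs
          exacts [log_absNorm_nonneg _, le_rfl]

end Factor

end FrobDensity

/-! ### Auxiliary sums over primes -/

namespace FrobDensity

open scoped NumberField

section Sums

/-- Abel summation with a linear bound for the partial sums. -/
lemma sum_mul_le_of_partial_sums (a g : ℕ → ℝ) (c : ℝ) (hg0 : ∀ n, 0 ≤ g n)
    (hg : ∀ n, 1 ≤ n → g (n + 1) ≤ g n)
    (ha : ∀ x : ℕ, ∑ n ∈ Finset.Icc 1 x, a n ≤ c * x) (x : ℕ) :
    ∑ n ∈ Finset.Icc 1 x, a n * g n ≤ c * ∑ n ∈ Finset.Icc 1 x, g n := by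
  have key : ∀ x : ℕ, 1 ≤ x → ∑ n ∈ Finset.Icc 1 x, a n * g n - c * ∑ n ∈ Finset.Icc 1 x, g n ≤
      (∑ n ∈ Finset.Icc 1 x, a n - c * x) * g x := by
    intro x hx
    induction x, hx using Nat.le_induction with
    | base => simp; ring_nf; rfl
    | succ m hm ih =>
      rw [Finset.sum_Icc_succ_top (by omega), Finset.sum_Icc_succ_top (by omega),
        Finset.sum_Icc_succ_top (by omega)]
      have h1 := ha m
      have h2 := hg m hm
      push_cast
      nlinarith
  rcases Nat.eq_zero_or_pos x with rfl | hx
  · simp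
  · have h1 := key x hx
    have h2 := ha x
    have h3 := hg0 x
    nlinarith

lemma sum_rpow_sub_one_le (a : ℝ) (ha : 0 < a) (ha1 : a ≤ 1) (x : ℕ) :
    ∑ n ∈ Finset.Icc 1 x, (n : ℝ) ^ (a - 1) ≤ (1 / a) * (x : ℝ) ^ a := by
  induction x with
  | zero => simp [Real.zero_rpow ha.ne']
  | succ m ih =>
    rw [Finset.sum_Icc_succ_top (by omega)]
    have hm : (0 : ℝ) < ((m + 1 : ℕ) : ℝ) := by positivity
    set y : ℝ := ((m + 1 : ℕ) : ℝ) with hy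
    have hmy : (m : ℝ) = y * (1 + (-1 / y)) := by
      field_simp; rw [hy]; push_cast; ring
    have hy1 : 1 ≤ y := by rw [hy]; exact_mod_cast Nat.succ_le_succ (Nat.zero_le m)
    have hs : -1 ≤ -1 / y := by
      rw [le_div_iff₀ hm]; linarith
    have h1 : (m : ℝ) ^ a ≤ y ^ a * (1 + a * (-1 / y)) := by
      rw [hmy, Real.mul_rpow hm.le (by linarith)]
      gcongr
      exact rpow_one_add_le_one_add_mul_self hs ha.le ha1
    have h2 : y ^ (a - 1) = y ^ a / y := by rw [Real.rpow_sub_one hm.ne']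
    have h3 : (1 / a) * (y ^ a * (1 + a * (-1 / y))) = (1 / a) * y ^ a - y ^ (a - 1) := by
      rw [h2]; field_simp; ring
    have h4 : (1 / a) * (m : ℝ) ^ a ≤ (1 / a) * (y ^ a * (1 + a * (-1 / y))) := by gcongr
    linarith

/-- Obtained from Chebyshev's bound for `∑ log p` by Abel summation. -/
lemma sum_log_rpow_le (a : ℝ) (ha : 0 < a) (ha1 : a ≤ 1) (x : ℕ) :
    ∑ p ∈ Nat.primesLE x, Real.log p * (p : ℝ) ^ (a - 1) ≤
      (Real.log 4 / a) * (x : ℝ) ^ a := by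
  have hsum : ∀ (x : ℕ) (f : ℕ → ℝ), ∑ p ∈ Nat.primesLE x, f p =
      ∑ n ∈ Finset.Icc 1 x, if n.Prime then f n else 0 := by
    intro x f
    rw [← Finset.sum_filter]
    refine Finset.sum_congr ?_ fun _ _ => rfl
    ext p
    simp only [Nat.mem_primesLE, Finset.mem_filter, Finset.mem_Icc]
    constructor
    · rintro ⟨h1, h2⟩
      exact ⟨⟨h2.one_lt.le, h1⟩, h2⟩
    · rintro ⟨⟨_, h1⟩, h2⟩
      exact ⟨h1, h2⟩
  have h := sum_mul_le_of_partial_sums (fun n => if n.Prime then Real.log n else 0)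
    (fun n => (n : ℝ) ^ (a - 1)) (Real.log 4) (fun n => by positivity) ?_ ?_ x
  · rw [hsum]
    have h2 := sum_rpow_sub_one_le a ha ha1 x
    have h4 : 0 ≤ Real.log 4 := Real.log_nonneg (by norm_num)
    calc _ = ∑ n ∈ Finset.Icc 1 x, (if n.Prime then Real.log n else 0) * (n : ℝ) ^ (a - 1) :=
          Finset.sum_congr rfl fun n _ => by split_ifs <;> simp
      _ ≤ _ := h
      _ ≤ Real.log 4 * ((1 / a) * (x : ℝ) ^ a) := by gcongr
      _ = _ := by ring
  · intro n hn
    refine Real.rpow_le_rpow_of_nonpos (by exact_mod_cast hn) (by push_cast; linarith)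
      (by linarith)
  · intro x
    rw [← hsum x fun n => Real.log n, ← Chebyshev.theta_eq_sum_primesLE_log]
    exact Chebyshev.theta_le_log4_mul_x (by positivity)

lemma exists_sum_log_div_sq_le : ∃ C : ℝ, ∀ x : ℕ,
    ∑ p ∈ Nat.primesLE x, Real.log p * (1 / (p : ℝ) ^ 2) ≤ C := by
  have hs : Summable fun n : ℕ => 2 * ((n : ℝ) ^ (3 / 2 : ℝ))⁻¹ :=
    (Real.summable_nat_rpow_inv.mpr (by norm_num)).mul_left 2
  refine ⟨∑' n : ℕ, 2 * ((n : ℝ) ^ (3 / 2 : ℝ))⁻¹, fun x => ?_⟩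
  refine le_trans (Finset.sum_le_sum fun p hp => ?_)
    (hs.sum_le_tsum (Nat.primesLE x) fun n _ => by positivity)
  have hp0 : (0 : ℝ) < p := by
    exact_mod_cast (Nat.mem_primesLE.mp hp).2.pos
  have h1 := Real.log_le_rpow_div hp0.le (show (0 : ℝ) < 1 / 2 by norm_num)
  have h2 : (p : ℝ) ^ (3 / 2 : ℝ) * (p : ℝ) ^ (1 / 2 : ℝ) = (p : ℝ) ^ 2 := by
    rw [← Real.rpow_add hp0]; norm_num
  have h3 : (0 : ℝ) < (p : ℝ) ^ (3 / 2 : ℝ) := by positivity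
  have h4 : (0 : ℝ) < (p : ℝ) ^ (1 / 2 : ℝ) := by positivity
  calc Real.log p * (1 / (p : ℝ) ^ 2) ≤ ((p : ℝ) ^ (1 / 2 : ℝ) / (1 / 2)) * (1 / (p : ℝ) ^ 2) := by
        gcongr
    _ = _ := by rw [← h2]; field_simp

variable {K : Type*} [Field K] [NumberField K]

lemma exists_absNorm_eq_pow {𝔭 : Ideal (𝓞 K)} (h : 𝔭.IsPrime) (h0 : 𝔭 ≠ ⊥) :
    (Ideal.absNorm 𝔭).minFac.Prime ∧ (((Ideal.absNorm 𝔭).minFac : ℕ) : 𝓞 K) ∈ 𝔭 ∧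
      ∃ f, 1 ≤ f ∧ Ideal.absNorm 𝔭 = (Ideal.absNorm 𝔭).minFac ^ f := by
  have := h.isMaximal h0
  obtain ⟨p, f, hf0, hmem, hp, hf⟩ := Ideal.exists_prime_and_absNorm_eq_pow 𝔭
  have hm : (Ideal.absNorm 𝔭).minFac = p := by rw [hf, hp.pow_minFac hf0.ne']
  rw [hm]
  exact ⟨hp, hmem, f, hf0, hf⟩

/-- Sums over prime ideals are bounded by sums over rational primes, since
`∏_{𝔭 ∣ p} N(𝔭) ≤ p ^ d`. -/
lemma sum_primes_le_sum (x : ℕ) (S : Finset (Ideal (𝓞 K))) (hS : S ⊆ primesLe K x)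
    (w : Ideal (𝓞 K) → ℝ) (h : ℕ → ℝ) (h0 : ∀ n, 0 ≤ h n)
    (hw : ∀ 𝔭 ∈ S, w 𝔭 ≤ h (Ideal.absNorm 𝔭).minFac) :
    ∑ 𝔭 ∈ S, Real.log (Ideal.absNorm 𝔭) * w 𝔭 ≤
      Module.finrank ℚ K * ∑ p ∈ Nat.primesLE x, Real.log p * h p := by
  classical
  have hmaps : ∀ 𝔭 ∈ S, (Ideal.absNorm 𝔭).minFac ∈ Nat.primesLE x := by
    intro 𝔭 h𝔭
    obtain ⟨hp, hp0, hx⟩ := mem_primesLe.mp (hS h𝔭)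
    refine Nat.mem_primesLE.mpr ⟨?_, (exists_absNorm_eq_pow hp hp0).1⟩
    refine le_trans (Nat.minFac_le ?_) hx
    have := two_le_absNorm hp hp0
    omega
  rw [← Finset.sum_fiberwise_of_maps_to hmaps, Finset.mul_sum]
  refine Finset.sum_le_sum fun p hp => ?_
  have hp' := (Nat.mem_primesLE.mp hp).2
  calc _ ≤ ∑ 𝔭 ∈ S with (Ideal.absNorm 𝔭).minFac = p, Real.log (Ideal.absNorm 𝔭) * h p := by
        refine Finset.sum_le_sum fun 𝔭 h𝔭 => ?_
        obtain ⟨h1, rfl⟩ := Finset.mem_filter.mp h𝔭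
        exact mul_le_mul_of_nonneg_left (hw 𝔭 h1) (log_absNorm_nonneg _)
    _ = (∑ 𝔭 ∈ S with (Ideal.absNorm 𝔭).minFac = p, Real.log (Ideal.absNorm 𝔭)) * h p := by
        rw [Finset.sum_mul]
    _ ≤ Real.log (Ideal.absNorm (Ideal.span {((p : ℕ) : 𝓞 K)})) * h p := by
        refine mul_le_mul_of_nonneg_right (sum_log_le_log_absNorm _ ?_ _ ?_) (h0 p)
        · rw [Ne, Ideal.span_singleton_eq_bot, Nat.cast_eq_zero]
          exact hp'.ne_zero
        · intro 𝔭 h𝔭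
          obtain ⟨h1, rfl⟩ := Finset.mem_filter.mp h𝔭
          obtain ⟨hp, hp0, hx⟩ := mem_primesLe.mp (hS h1)
          refine ⟨hp, ?_⟩
          rw [Ideal.span_singleton_le_iff_mem]
          exact (exists_absNorm_eq_pow hp hp0).2.1
    _ = _ := by
        rw [Ideal.absNorm_span_natCast, NumberField.RingOfIntegers.rank, Nat.cast_pow, Real.log_pow]
        ring

lemma minFac_le_absNorm {𝔭 : Ideal (𝓞 K)} (h : 𝔭.IsPrime) (h0 : 𝔭 ≠ ⊥) :
    (Ideal.absNorm 𝔭).minFac ≤ Ideal.absNorm 𝔭 :=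
  Nat.minFac_le (by have := two_le_absNorm h h0; omega)

variable (K)

lemma exists_sum_primes_rpow_le : ∃ C : ℝ, 0 ≤ C ∧ ∀ x : ℕ,
    ∑ 𝔭 ∈ primesLe K x, Real.log (Ideal.absNorm 𝔭) *
      (Ideal.absNorm 𝔭 : ℝ) ^ ((1 : ℝ) / Module.finrank ℚ K - 1) ≤
        C * (x : ℝ) ^ ((1 : ℝ) / Module.finrank ℚ K) := by
  set d := Module.finrank ℚ K with hd
  have hd1 : (1 : ℝ) ≤ d := by exact_mod_cast (Module.finrank_pos : 0 < Module.finrank ℚ K)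
  have ha : (0 : ℝ) < 1 / d := by positivity
  have ha1 : (1 : ℝ) / d ≤ 1 := by rw [div_le_one (by linarith)]; exact hd1
  refine ⟨d * (Real.log 4 / (1 / d)), ?_, fun x => ?_⟩
  · have : 0 ≤ Real.log 4 := Real.log_nonneg (by norm_num)
    positivity
  refine (sum_primes_le_sum x _ subset_rfl _ (fun n => (n : ℝ) ^ ((1 : ℝ) / d - 1))
    (fun n => by positivity) ?_).trans ?_
  · intro 𝔭 h𝔭
    obtain ⟨hp, hp0, hx⟩ := mem_primesLe.mp h𝔭
    refine Real.rpow_le_rpow_of_nonpos ?_ ?_ (by linarith)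
    · exact_mod_cast (exists_absNorm_eq_pow hp hp0).1.pos
    · exact_mod_cast minFac_le_absNorm hp hp0
  · rw [mul_assoc]
    gcongr
    exact sum_log_rpow_le _ ha ha1 x

lemma exists_sum_primes_sq_le : ∃ C : ℝ, 0 ≤ C ∧ ∀ x : ℕ,
    ∑ 𝔭 ∈ primesLe K x, Real.log (Ideal.absNorm 𝔭) * (1 / (Ideal.absNorm 𝔭 : ℝ) ^ 2) ≤ C := by
  obtain ⟨C, hC⟩ := exists_sum_log_div_sq_le
  have hC0 : 0 ≤ C := by simpa using hC 0
  refine ⟨Module.finrank ℚ K * C, by positivity, fun x => ?_⟩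
  refine (sum_primes_le_sum x _ subset_rfl _ (fun n => 1 / (n : ℝ) ^ 2)
    (fun n => by positivity) ?_).trans (mul_le_mul_of_nonneg_left (hC x) (by positivity))
  intro 𝔭 h𝔭
  obtain ⟨hp, hp0, hx⟩ := mem_primesLe.mp h𝔭
  have h1 : (0 : ℝ) < (Ideal.absNorm 𝔭).minFac := by
    exact_mod_cast (exists_absNorm_eq_pow hp hp0).1.pos
  have h2 : ((Ideal.absNorm 𝔭).minFac : ℝ) ≤ Ideal.absNorm 𝔭 := by
    exact_mod_cast minFac_le_absNorm hp hp0
  gcongr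

/-- Primes of residue degree at least two contribute a bounded amount. -/
lemma exists_sum_primes_higher_degree_le : ∃ C : ℝ, 0 ≤ C ∧ ∀ x : ℕ,
    ∑ 𝔭 ∈ primesLe K x with ¬ (Ideal.absNorm 𝔭).Prime,
      Real.log (Ideal.absNorm 𝔭) * (1 / (Ideal.absNorm 𝔭 : ℝ)) ≤ C := by
  obtain ⟨C, hC⟩ := exists_sum_log_div_sq_le
  have hC0 : 0 ≤ C := by simpa using hC 0
  refine ⟨Module.finrank ℚ K * C, by positivity, fun x => ?_⟩
  refine (sum_primes_le_sum x _ (Finset.filter_subset _ _) _ (fun n => 1 / (n : ℝ) ^ 2)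
    (fun n => by positivity) ?_).trans (mul_le_mul_of_nonneg_left (hC x) (by positivity))
  intro 𝔭 h𝔭
  obtain ⟨h𝔭, hnp⟩ := Finset.mem_filter.mp h𝔭
  obtain ⟨hp, hp0, hx⟩ := mem_primesLe.mp h𝔭
  obtain ⟨h1, -, f, hf1, hf⟩ := exists_absNorm_eq_pow hp hp0
  have hf2 : 2 ≤ f := by
    by_contra h
    have : f = 1 := by omega
    rw [this, pow_one] at hf
    rw [hf] at hnp
    exact hnp h1
  have h3 : (Ideal.absNorm 𝔭).minFac ^ 2 ≤ Ideal.absNorm 𝔭 := by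
    conv_rhs => rw [hf]
    exact Nat.pow_le_pow_right h1.pos hf2
  have h4 : ((Ideal.absNorm 𝔭).minFac : ℝ) ^ 2 ≤ Ideal.absNorm 𝔭 := by exact_mod_cast h3
  have h5 : (0 : ℝ) < (Ideal.absNorm 𝔭).minFac := by exact_mod_cast h1.pos
  gcongr

end Sums

end FrobDensity

/-! ### Mertens' theorem in number fields -/

namespace FrobDensity

open scoped NumberField

section Mertens

variable (K : Type*) [Field K] [NumberField K]

lemma card_kbox (z : 𝓞 K) (X : ℕ) :
    ((kbox K z X).card : ℝ) = (2 * X + 1) ^ Module.finrank ℚ K := by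
  rw [card_box, card_index]; push_cast; rfl

lemma rpow_sub_one_eq {𝔭 : Ideal (𝓞 K)} (h0 : 𝔭 ≠ ⊥) (a : ℝ) :
    (Ideal.absNorm 𝔭 : ℝ) ^ (a - 1) = (Ideal.absNorm 𝔭 : ℝ) ^ a / Ideal.absNorm 𝔭 := by
  refine Real.rpow_sub_one ?_ a
  rw [Ne, Nat.cast_eq_zero, Ideal.absNorm_eq_zero_iff]
  exact h0

/-- Upper half of Mertens' theorem. The product of the norms of the elements of a box of size `X`
with norms of order `X ^ d` is bounded below by the contribution of the first powers of the primes
of norm at most `X ^ d`, each of which contains a proportion of about `1 / N(𝔭)` of the box. -/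
lemma exists_mertens_upper_pow : ∃ C : ℝ, ∀ X : ℕ, 1 ≤ X →
    ∑ 𝔭 ∈ primesLe K (X ^ Module.finrank ℚ K),
      Real.log (Ideal.absNorm 𝔭) * (1 / (Ideal.absNorm 𝔭 : ℝ)) ≤
        Module.finrank ℚ K * Real.log X + C := by
  classical
  obtain ⟨M, hM1, hM⟩ := exists_count K
  obtain ⟨W, hW1, hW⟩ := exists_norm_bounds K
  obtain ⟨C, hC0, hC⟩ := exists_sum_primes_rpow_le K
  set d := Module.finrank ℚ K with hd
  have hdpos : d ≠ 0 := (Module.finrank_pos : 0 < Module.finrank ℚ K).ne'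
  refine ⟨d * Real.log (2 * W) + d * M * C, fun X hX => ?_⟩
  have hX0 : (0 : ℝ) < X := by exact_mod_cast hX
  have hW0 : (0 : ℝ) < W := by exact_mod_cast hW1
  set B := kbox K ((W * X : ℕ) : 𝓞 K) X with hB
  set V : ℝ := (2 * X + 1) ^ d with hV
  have hV0 : 0 < V := by positivity
  have hcard : (B.card : ℝ) = V := card_kbox K _ _
  have h1 : ∑ 𝔭 ∈ primesLe K (X ^ d),
      Real.log (Ideal.absNorm 𝔭) * ((B.filter (· ∈ 𝔭)).card : ℝ) ≤
        V * (d * Real.log (2 * W * X)) := by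
    calc _ = ∑ 𝔭 ∈ primesLe K (X ^ d), ∑ α ∈ B,
          if α ∈ 𝔭 then Real.log (Ideal.absNorm 𝔭) else 0 := by
          refine Finset.sum_congr rfl fun 𝔭 _ => ?_
          rw [← Finset.sum_filter, Finset.sum_const, nsmul_eq_mul, mul_comm]
      _ = ∑ α ∈ B, ∑ 𝔭 ∈ primesLe K (X ^ d) with α ∈ 𝔭, Real.log (Ideal.absNorm 𝔭) := by
          rw [Finset.sum_comm]
          exact Finset.sum_congr rfl fun α _ => (Finset.sum_filter _ _).symm
      _ ≤ ∑ α ∈ B, (d * Real.log (2 * W * X)) := by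
          refine Finset.sum_le_sum fun α hα => ?_
          obtain ⟨h0, hlow, hup⟩ := hW X hX α hα
          refine (sum_log_le_log_absNorm (Ideal.span {α}) ?_ _ ?_).trans ?_
          · rwa [Ne, Ideal.span_singleton_eq_bot]
          · intro 𝔭 h𝔭
            obtain ⟨ha, hb⟩ := Finset.mem_filter.mp h𝔭
            exact ⟨(mem_primesLe.mp ha).1, (Ideal.span_singleton_le_iff_mem _).mpr hb⟩
          · rw [← Real.log_pow]
            refine Real.log_le_log ?_ (by exact_mod_cast hup)
            have : 0 < X ^ d := by positivity
            exact_mod_cast lt_of_lt_of_le this hlow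
      _ = _ := by rw [Finset.sum_const, nsmul_eq_mul, hcard]
  have h2 : V * ∑ 𝔭 ∈ primesLe K (X ^ d), (Real.log (Ideal.absNorm 𝔭) * (1 / (Ideal.absNorm 𝔭 : ℝ))
      - d * M / X * (Real.log (Ideal.absNorm 𝔭) * (Ideal.absNorm 𝔭 : ℝ) ^ ((1 : ℝ) / d - 1))) ≤
      ∑ 𝔭 ∈ primesLe K (X ^ d),
        Real.log (Ideal.absNorm 𝔭) * ((B.filter (· ∈ 𝔭)).card : ℝ) := by
    rw [Finset.mul_sum]
    refine Finset.sum_le_sum fun 𝔭 h𝔭 => ?_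
    obtain ⟨hp, hp0, hx⟩ := mem_primesLe.mp h𝔭
    have hn : (0 : ℝ) < Ideal.absNorm 𝔭 := by
      have := two_le_absNorm hp hp0
      exact_mod_cast (by omega : 0 < Ideal.absNorm 𝔭)
    have h3 := (hM 𝔭 hp0 ((W * X : ℕ) : 𝓞 K) X hX).2
    have h4 : V * (1 - d * (M * (Ideal.absNorm 𝔭 : ℝ) ^ ((1 : ℝ) / d) / X)) / Ideal.absNorm 𝔭 ≤
        ((B.filter (· ∈ 𝔭)).card : ℝ) := by
      rw [div_le_iff₀ hn]; exact h3
    refine le_trans (le_of_eq ?_) (mul_le_mul_of_nonneg_left h4 (log_absNorm_nonneg 𝔭))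
    rw [rpow_sub_one_eq K hp0]
    field_simp
  have h3 : ∑ 𝔭 ∈ primesLe K (X ^ d), (Real.log (Ideal.absNorm 𝔭) * (1 / (Ideal.absNorm 𝔭 : ℝ))
      - d * M / X * (Real.log (Ideal.absNorm 𝔭) * (Ideal.absNorm 𝔭 : ℝ) ^ ((1 : ℝ) / d - 1))) ≤
      d * Real.log (2 * W * X) := le_of_mul_le_mul_left (h2.trans h1) hV0
  rw [Finset.sum_sub_distrib, ← Finset.mul_sum] at h3
  have h4 := hC (X ^ d)
  have h5 : ((X ^ d : ℕ) : ℝ) ^ ((1 : ℝ) / d) = X := by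
    rw [Nat.cast_pow, one_div, Real.pow_rpow_inv_natCast hX0.le hdpos]
  rw [h5] at h4
  have h6 := mul_le_mul_of_nonneg_left h4 (show (0 : ℝ) ≤ d * M / X by positivity)
  have h7 : d * M / X * (C * X) = d * M * C := by field_simp
  rw [Real.log_mul (by positivity) (by positivity)] at h3
  linarith

lemma one_add_pow_le (u B : ℝ) (d : ℕ) (hu : 0 ≤ u) (huB : u ≤ B) :
    (1 + u) ^ d ≤ 1 + d * (1 + B) ^ d * u := by
  induction d with
  | zero => simp
  | succ n ih =>
    have hB : 0 ≤ B := hu.trans huB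
    have h1 : (1 + u) ^ n ≤ (1 + B) ^ n := by gcongr
    have h2 : 0 ≤ (1 + B) ^ n * (B * u) := by positivity
    have h3 : 0 ≤ (n : ℝ) * ((1 + B) ^ n * (B * u)) := by positivity
    push_cast
    rw [pow_succ, pow_succ]
    nlinarith

lemma sum_inv_pow_le (n : ℝ) (hn : 2 ≤ n) (Z : ℕ) :
    ∑ k ∈ Finset.Icc 2 Z, 1 / n ^ k ≤ 2 * (1 / n ^ 2) := by
  have key : ∀ Z : ℕ, 1 ≤ Z →
      ∑ k ∈ Finset.Icc 2 Z, 1 / n ^ k ≤ 2 * (1 / n ^ 2) - 2 * (1 / n ^ (Z + 1)) := by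
    intro Z hZ
    induction Z, hZ using Nat.le_induction with
    | base => simp
    | succ m hm ih =>
      rw [Finset.sum_Icc_succ_top (by omega)]
      have h0 : (0 : ℝ) < 1 / n ^ (m + 1 + 1) := by positivity
      have h1 : 1 / n ^ (m + 1) = n * (1 / n ^ (m + 1 + 1)) := by
        rw [pow_succ n (m + 1)]; field_simp
      nlinarith
  rcases Nat.eq_zero_or_pos Z with rfl | hZ
  · simp; positivity
  · have := key Z hZ
    have : (0 : ℝ) < 1 / n ^ (Z + 1) := by positivity
    linarith

/-- Lower half of Mertens' theorem. In the factorization of the norms of the elements of a box, all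
prime powers `𝔭 ^ k` with `N(𝔭) ^ k` at most the maximal norm count; those with `k ≥ 2` have
total contribution `O(1)` per element of the box. -/
lemma exists_mertens_lower_pow : ∃ W : ℕ, 1 ≤ W ∧ ∃ C : ℝ, 0 ≤ C ∧ ∀ X : ℕ, 1 ≤ X →
    Module.finrank ℚ K * Real.log X - C ≤
    ∑ 𝔭 ∈ primesLe K ((2 * W * X) ^ Module.finrank ℚ K),
      Real.log (Ideal.absNorm 𝔭) * (1 / (Ideal.absNorm 𝔭 : ℝ)) := by
  classical
  obtain ⟨M, hM1, hM⟩ := exists_count K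
  obtain ⟨W, hW1, hW⟩ := exists_norm_bounds K
  obtain ⟨C, hC0, hC⟩ := exists_sum_primes_rpow_le K
  obtain ⟨C₂, hC₂0, hC₂⟩ := exists_sum_primes_sq_le K
  set d := Module.finrank ℚ K with hd
  have hdpos : d ≠ 0 := (Module.finrank_pos : 0 < Module.finrank ℚ K).ne'
  have hW0 : (0 : ℝ) < W := by exact_mod_cast hW1
  have hM0 : (0 : ℝ) < M := by linarith
  set B : ℝ := M * (2 * W) with hBdef
  set D : ℝ := d * (1 + B) ^ d with hD
  have hB0 : 0 ≤ B := by positivity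
  have hD0 : 0 ≤ D := by positivity
  refine ⟨W, hW1, D * M * C * (2 * W) + (1 + B) ^ d * (2 * C₂), by positivity, fun X hX => ?_⟩
  have hX0 : (0 : ℝ) < X := by exact_mod_cast hX
  set Q := kbox K ((W * X : ℕ) : 𝓞 K) X with hQ
  set V : ℝ := (2 * X + 1) ^ d with hV
  have hV0 : 0 < V := by positivity
  have hcard : (Q.card : ℝ) = V := card_kbox K _ _
  set Z := (2 * W * X) ^ d with hZ
  have hZ1 : 1 ≤ Z := Nat.one_le_pow _ _ (by positivity)
  have hZr : ((Z : ℕ) : ℝ) ^ ((1 : ℝ) / d) = 2 * W * X := by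
    rw [hZ, Nat.cast_pow, one_div, Real.pow_rpow_inv_natCast (by positivity) hdpos]
    push_cast; rfl
  have h1 : V * (d * Real.log X) ≤ ∑ 𝔭 ∈ primesLe K Z, ∑ k ∈ Finset.Icc 1 Z,
      Real.log (Ideal.absNorm 𝔭) * ((Q.filter (· ∈ 𝔭 ^ k)).card : ℝ) := by
    calc V * (d * Real.log X) = ∑ α ∈ Q, (d * Real.log X) := by
          rw [Finset.sum_const, nsmul_eq_mul, hcard]
      _ ≤ ∑ α ∈ Q, ∑ 𝔭 ∈ primesLe K Z, ∑ k ∈ Finset.Icc 1 Z,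
            if α ∈ 𝔭 ^ k then Real.log (Ideal.absNorm 𝔭) else 0 := by
          refine Finset.sum_le_sum fun α hα => ?_
          obtain ⟨h0, hlow, hup⟩ := hW X hX α hα
          have h2 := log_absNorm_eq (Ideal.span {α}) (by rwa [Ne, Ideal.span_singleton_eq_bot])
            Z hup
          simp only [Ideal.span_singleton_le_iff_mem] at h2
          rw [← h2, ← Real.log_pow]
          exact Real.log_le_log (by positivity) (by exact_mod_cast hlow)
      _ = _ := by
          rw [Finset.sum_comm]
          refine Finset.sum_congr rfl fun 𝔭 _ => ?_
          rw [Finset.sum_comm]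
          refine Finset.sum_congr rfl fun k _ => ?_
          rw [← Finset.sum_filter, Finset.sum_const, nsmul_eq_mul, mul_comm]
  -- the number of elements of `𝔭 ^ k` in the box
  have hA : ∀ 𝔭 ∈ primesLe K Z, ∀ k ∈ Finset.Icc 1 Z,
      ((Q.filter (· ∈ 𝔭 ^ k)).card : ℝ) ≤ V * (1 / (Ideal.absNorm 𝔭 : ℝ) ^ k) * (1 + B) ^ d ∧
      ((Q.filter (· ∈ 𝔭 ^ k)).card : ℝ) ≤ V * (1 / (Ideal.absNorm 𝔭 : ℝ) ^ k) *
        (1 + D * (M * ((Ideal.absNorm 𝔭 : ℝ) ^ k) ^ ((1 : ℝ) / d) / X)) := by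
    intro 𝔭 h𝔭 k hk
    obtain ⟨hp, hp0, hx⟩ := mem_primesLe.mp h𝔭
    have hn : (0 : ℝ) < Ideal.absNorm 𝔭 := by
      have := two_le_absNorm hp hp0
      exact_mod_cast (by omega : 0 < Ideal.absNorm 𝔭)
    by_cases hle : Ideal.absNorm 𝔭 ^ k ≤ Z
    · have h3 := (hM (𝔭 ^ k) (pow_ne_zero k hp0) ((W * X : ℕ) : 𝓞 K) X hX).1
      rw [map_pow, Nat.cast_pow] at h3
      set u := M * ((Ideal.absNorm 𝔭 : ℝ) ^ k) ^ ((1 : ℝ) / d) / X with hu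
      have hu0 : 0 ≤ u := by positivity
      have huB : u ≤ B := by
        rw [hu, hBdef, div_le_iff₀ hX0, mul_assoc M]
        gcongr
        rw [← hZr]
        gcongr
        exact_mod_cast hle
      have h4 : ((Q.filter (· ∈ 𝔭 ^ k)).card : ℝ) ≤
          V * (1 / (Ideal.absNorm 𝔭 : ℝ) ^ k) * (1 + u) ^ d := by
        have : V * (1 / (Ideal.absNorm 𝔭 : ℝ) ^ k) * (1 + u) ^ d =
            V * (1 + u) ^ d / (Ideal.absNorm 𝔭 : ℝ) ^ k := by ring
        rw [this, le_div_iff₀ (by positivity)]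
        exact h3
      constructor
      · refine h4.trans ?_
        gcongr
      · refine h4.trans ?_
        gcongr
        exact one_add_pow_le u B d hu0 huB
    · have h3 : Q.filter (· ∈ 𝔭 ^ k) = ∅ := by
        rw [Finset.filter_eq_empty_iff]
        intro α hα hmem
        obtain ⟨h0, hlow, hup⟩ := hW X hX α hα
        refine hle (le_trans (absNorm_pow_le (J := Ideal.span {α}) ?_ ?_) hup)
        · rwa [Ne, Ideal.span_singleton_eq_bot]
        · rwa [Ideal.span_singleton_le_iff_mem]
      rw [h3]
      simp only [Finset.card_empty, Nat.cast_zero]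
      constructor <;> positivity
  have h2 : ∀ 𝔭 ∈ primesLe K Z, ∑ k ∈ Finset.Icc 1 Z,
      Real.log (Ideal.absNorm 𝔭) * ((Q.filter (· ∈ 𝔭 ^ k)).card : ℝ) ≤
      V * (Real.log (Ideal.absNorm 𝔭) * (1 / (Ideal.absNorm 𝔭 : ℝ)) + D * M / X *
        (Real.log (Ideal.absNorm 𝔭) * (Ideal.absNorm 𝔭 : ℝ) ^ ((1 : ℝ) / d - 1)) +
        (1 + B) ^ d * 2 * (Real.log (Ideal.absNorm 𝔭) * (1 / (Ideal.absNorm 𝔭 : ℝ) ^ 2))) := by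
    intro 𝔭 h𝔭
    obtain ⟨hp, hp0, hx⟩ := mem_primesLe.mp h𝔭
    have hn2 : (2 : ℝ) ≤ Ideal.absNorm 𝔭 := by exact_mod_cast two_le_absNorm hp hp0
    have hn : (0 : ℝ) < Ideal.absNorm 𝔭 := by linarith
    have hlog := log_absNorm_nonneg 𝔭
    rw [← Finset.insert_Icc_succ_left_eq_Icc hZ1, Finset.sum_insert (by simp)]
    have ha := mul_le_mul_of_nonneg_left (hA 𝔭 h𝔭 1 (Finset.mem_Icc.mpr ⟨le_rfl, hZ1⟩)).2 hlog
    have hb : ∑ k ∈ Finset.Icc (Order.succ 1) Z,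
        Real.log (Ideal.absNorm 𝔭) * ((Q.filter (· ∈ 𝔭 ^ k)).card : ℝ) ≤
        Real.log (Ideal.absNorm 𝔭) * (V * (1 + B) ^ d * (2 * (1 / (Ideal.absNorm 𝔭 : ℝ) ^ 2))) := by
      rw [← Finset.mul_sum]
      refine mul_le_mul_of_nonneg_left ?_ hlog
      calc _ ≤ ∑ k ∈ Finset.Icc 2 Z, V * (1 + B) ^ d * (1 / (Ideal.absNorm 𝔭 : ℝ) ^ k) := by
            refine Finset.sum_le_sum fun k hk => ?_
            have hk' := Finset.mem_Icc.mp hk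
            have : 2 ≤ k := hk'.1
            refine (hA 𝔭 h𝔭 k (Finset.mem_Icc.mpr ⟨by omega, hk'.2⟩)).1.trans (le_of_eq ?_)
            ring
        _ = V * (1 + B) ^ d * ∑ k ∈ Finset.Icc 2 Z, (1 / (Ideal.absNorm 𝔭 : ℝ) ^ k) := by
            rw [Finset.mul_sum]
        _ ≤ _ := by
            gcongr
            exact sum_inv_pow_le _ hn2 Z
    refine (add_le_add ha hb).trans (le_of_eq ?_)
    rw [rpow_sub_one_eq K hp0, pow_one]
    ring
  have h3 := h1.trans (Finset.sum_le_sum h2)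
  rw [← Finset.mul_sum] at h3
  have h4 := le_of_mul_le_mul_left h3 hV0
  rw [Finset.sum_add_distrib, Finset.sum_add_distrib, ← Finset.mul_sum, ← Finset.mul_sum] at h4
  have h5 := hC Z
  rw [hZr] at h5
  have h6 := mul_le_mul_of_nonneg_left h5 (show (0 : ℝ) ≤ D * M / X by positivity)
  have h7 : D * M / X * (C * (2 * W * X)) = D * M * C * (2 * W) := by field_simp
  have h8 := mul_le_mul_of_nonneg_left (hC₂ Z) (show (0 : ℝ) ≤ (1 + B) ^ d * 2 by positivity)
  linarith

lemma primesLe_mono {x y : ℕ} (h : x ≤ y) : primesLe K x ⊆ primesLe K y := by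
  intro 𝔭 h𝔭
  obtain ⟨h1, h2, h3⟩ := mem_primesLe.mp h𝔭
  exact mem_primesLe.mpr ⟨h1, h2, h3.trans h⟩

/-- Mertens' theorem for the prime ideals of a number field. -/
lemma exists_mertens_ideal : ∃ C : ℝ, ∀ x : ℕ, 1 ≤ x →
    |∑ 𝔭 ∈ primesLe K x, Real.log (Ideal.absNorm 𝔭) * (1 / (Ideal.absNorm 𝔭 : ℝ)) -
      Real.log x| ≤ C := by
  obtain ⟨C₁, hC₁⟩ := exists_mertens_upper_pow K
  obtain ⟨W, hW1, C₂, hC₂0, hC₂⟩ := exists_mertens_lower_pow K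
  set d := Module.finrank ℚ K with hd
  have hdpos : d ≠ 0 := (Module.finrank_pos : 0 < Module.finrank ℚ K).ne'
  have hW0 : (1 : ℝ) ≤ W := by exact_mod_cast hW1
  have hterm : ∀ 𝔭 : Ideal (𝓞 K),
      0 ≤ Real.log (Ideal.absNorm 𝔭) * (1 / (Ideal.absNorm 𝔭 : ℝ)) := fun 𝔭 =>
    mul_nonneg (log_absNorm_nonneg 𝔭) (by positivity)
  have hlog2 : 0 ≤ Real.log 2 := Real.log_nonneg (by norm_num)
  have hlogW : 0 ≤ Real.log (4 * W) := Real.log_nonneg (by linarith)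
  refine ⟨max (d * Real.log 2 + C₁) (d * Real.log (4 * W) + C₂), fun x hx => ?_⟩
  have hx1 : (1 : ℝ) ≤ x := by exact_mod_cast hx
  set r : ℝ := (x : ℝ) ^ ((1 : ℝ) / d) with hr
  have hr1 : 1 ≤ r := Real.one_le_rpow hx1 (by positivity)
  have hrd : r ^ d = x := by
    rw [hr, one_div, Real.rpow_inv_natCast_pow (by positivity) hdpos]
  have hlogr : Real.log x = d * Real.log r := by rw [← hrd, Real.log_pow]
  rw [abs_le]
  constructor
  · rw [neg_le, neg_sub]
    refine le_trans ?_ (le_max_right _ _)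
    by_cases hrW : 2 * W ≤ r
    · set X := ⌊r / (2 * W)⌋₊ with hX
      have h1 : 1 ≤ r / (2 * W) := by rw [one_le_div (by positivity)]; exact hrW
      have hX1 : 1 ≤ X := by rw [hX, Nat.one_le_floor_iff]; exact h1
      have hXr : (X : ℝ) ≤ r / (2 * W) := Nat.floor_le (by positivity)
      have hXr' : r / (4 * W) ≤ X := by
        have h2 := Nat.lt_floor_add_one (r / (2 * W))
        rw [← hX] at h2
        have h3 : (1 : ℝ) ≤ X := by exact_mod_cast hX1
        have h4 : r / (4 * W) = (r / (2 * W)) / 2 := by field_simp; ring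
        rw [h4]
        linarith
      have h5 : (2 * W * X) ^ d ≤ x := by
        have : ((2 * W * X : ℝ)) ^ d ≤ x := by
          rw [← hrd]
          refine pow_le_pow_left₀ (by positivity) ?_ _
          rw [le_div_iff₀ (by positivity)] at hXr
          linarith
        exact_mod_cast this
      have h6 := hC₂ X hX1
      have h7 := Finset.sum_le_sum_of_subset_of_nonneg (primesLe_mono K h5)
        (fun 𝔭 _ _ => hterm 𝔭)
      have h8 := Real.log_le_log (by positivity) hXr'
      rw [Real.log_div (by positivity) (by positivity)] at h8
      have h9 := mul_le_mul_of_nonneg_left h8 (show (0 : ℝ) ≤ d by positivity)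
      linarith
    · have h1 : Real.log r ≤ Real.log (4 * W) :=
        Real.log_le_log (by positivity) (by linarith)
      have h2 := Finset.sum_nonneg (fun 𝔭 (_ : 𝔭 ∈ primesLe K x) => hterm 𝔭)
      have h3 := mul_le_mul_of_nonneg_left h1 (show (0 : ℝ) ≤ d by positivity)
      linarith
  · refine le_trans ?_ (le_max_left _ _)
    set X := ⌈r⌉₊ with hX
    have hXr : r ≤ X := Nat.le_ceil r
    have hX1 : 1 ≤ X := by exact_mod_cast hr1.trans hXr
    have hXr' : (X : ℝ) ≤ 2 * r := by
      have := Nat.ceil_lt_add_one (show 0 ≤ r by positivity)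
      linarith
    have h5 : x ≤ X ^ d := by
      have : (x : ℝ) ≤ (X : ℝ) ^ d := by
        rw [← hrd]
        gcongr
      exact_mod_cast this
    have h6 := hC₁ X hX1
    have h7 := Finset.sum_le_sum_of_subset_of_nonneg (primesLe_mono K h5)
      (fun 𝔭 _ _ => hterm 𝔭)
    have h8 := Real.log_le_log (by positivity) hXr'
    rw [Real.log_mul (by positivity) (by positivity)] at h8
    have h9 := mul_le_mul_of_nonneg_left h8 (show (0 : ℝ) ≤ d by positivity)
    linarith

/-- The number of ideals of norm `p`; for `p` prime, these are the primes of degree one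
above `p`. -/
noncomputable def degOne (p : ℕ) : ℕ := Nat.card {𝔭 : Ideal (𝓞 K) // Ideal.absNorm 𝔭 = p}

/-- Mertens' theorem for the degree one primes of a number field. -/
lemma exists_mertens : ∃ C : ℝ, ∀ x : ℕ, 1 ≤ x →
    |∑ p ∈ Nat.primesLE x, (degOne K p : ℝ) * (Real.log p / p) - Real.log x| ≤ C := by
  classical
  obtain ⟨C₁, hC₁⟩ := exists_mertens_ideal K
  obtain ⟨C₂, hC₂0, hC₂⟩ := exists_sum_primes_higher_degree_le K
  refine ⟨C₁ + C₂, fun x hx => ?_⟩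
  have h1 : ∑ p ∈ Nat.primesLE x, (degOne K p : ℝ) * (Real.log p / p) =
      ∑ 𝔭 ∈ primesLe K x with (Ideal.absNorm 𝔭).Prime,
        Real.log (Ideal.absNorm 𝔭) * (1 / (Ideal.absNorm 𝔭 : ℝ)) := by
    have hmaps : ∀ 𝔭 ∈ (primesLe K x).filter (fun 𝔭 => (Ideal.absNorm 𝔭).Prime),
        Ideal.absNorm 𝔭 ∈ Nat.primesLE x := by
      intro 𝔭 h𝔭
      obtain ⟨h1, h2⟩ := Finset.mem_filter.mp h𝔭
      exact Nat.mem_primesLE.mpr ⟨(mem_primesLe.mp h1).2.2, h2⟩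
    rw [← Finset.sum_fiberwise_of_maps_to hmaps]
    refine Finset.sum_congr rfl fun p hp => ?_
    obtain ⟨hpx, hpp⟩ := Nat.mem_primesLE.mp hp
    have h2 : ∀ 𝔭 ∈ ((primesLe K x).filter (fun 𝔭 => (Ideal.absNorm 𝔭).Prime)).filter
        (fun 𝔭 => Ideal.absNorm 𝔭 = p),
        Real.log (Ideal.absNorm 𝔭) * (1 / (Ideal.absNorm 𝔭 : ℝ)) = Real.log p / p := by
      intro 𝔭 h𝔭
      rw [(Finset.mem_filter.mp h𝔭).2]; ring
    rw [Finset.sum_congr rfl h2, Finset.sum_const, nsmul_eq_mul]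
    congr 2
    refine Nat.subtype_card _ fun 𝔭 => ?_
    rw [Finset.mem_filter, Finset.mem_filter, mem_primesLe]
    refine ⟨fun h => h.2, fun h => ⟨⟨⟨?_, ?_, h.le.trans hpx⟩, h ▸ hpp⟩, h⟩⟩
    · exact Ideal.isPrime_of_irreducible_absNorm (h ▸ hpp)
    · rintro rfl
      exact hpp.ne_zero (by rw [← h, Ideal.absNorm_bot])
  have h2 := Finset.sum_filter_add_sum_filter_not (primesLe K x)
    (fun 𝔭 => (Ideal.absNorm 𝔭).Prime)
    (fun 𝔭 => Real.log (Ideal.absNorm 𝔭) * (1 / (Ideal.absNorm 𝔭 : ℝ)))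
  have h3 := hC₁ x hx
  have h4 := hC₂ x
  have h5 : 0 ≤ ∑ 𝔭 ∈ primesLe K x with ¬ (Ideal.absNorm 𝔭).Prime,
      Real.log (Ideal.absNorm 𝔭) * (1 / (Ideal.absNorm 𝔭 : ℝ)) :=
    Finset.sum_nonneg fun 𝔭 _ => mul_nonneg (log_absNorm_nonneg 𝔭) (by positivity)
  rw [h1]
  rw [abs_le] at h3 ⊢
  constructor <;> linarith

end Mertens

end FrobDensity

/-! ### Frobenius elements -/

namespace FrobDensity

open scoped NumberField Pointwise

section Frobenius

/-- An element of `R ⧸ Q` fixed by `x ↦ x ^ p` lies in the prime field, hence is the class of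
an integer. -/
lemma exists_int_sub_mem {R : Type*} [CommRing R] {Q : Ideal R} (hQ : Q.IsMaximal) {p : ℕ}
    (hp : p.Prime) (hpQ : (p : R) ∈ Q) {y : R} (hy : y ^ p - y ∈ Q) : ∃ m : ℤ, y - m ∈ Q := by
  let _ : Field (R ⧸ Q) := Ideal.Quotient.field Q
  have : Fact p.Prime := ⟨hp⟩
  have : CharP (R ⧸ Q) p := (CharP.charP_iff_prime_eq_zero hp).mpr (by
    rw [← map_natCast (Ideal.Quotient.mk Q), Ideal.Quotient.eq_zero_iff_mem]; exact hpQ)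
  have h1 : (Ideal.Quotient.mk Q y) ^ p = Ideal.Quotient.mk Q y := by
    rw [← map_pow, Ideal.Quotient.eq]; exact hy
  rw [← Subfield.mem_bot_iff_pow_eq_self, mem_bot_iff_intCast p] at h1
  obtain ⟨m, hm⟩ := h1
  refine ⟨m, ?_⟩
  rw [← Ideal.Quotient.eq, ← hm, map_intCast]

variable {K : Type*} [Field K] [NumberField K]

lemma isMaximal_of_mem {𝔭 : Ideal (𝓞 K)} (h𝔭 : 𝔭.IsPrime) {p : ℕ} (hp : p.Prime)
    (hp𝔭 : (p : 𝓞 K) ∈ 𝔭) : 𝔭.IsMaximal := by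
  refine h𝔭.isMaximal ?_
  rintro rfl
  rw [Ideal.mem_bot, Nat.cast_eq_zero] at hp𝔭
  exact hp.ne_zero hp𝔭

/-- A prime above `p` whose residue field is fixed by `x ↦ x ^ p` has norm `p`. -/
lemma absNorm_eq_of_pow_sub_mem {𝔭 : Ideal (𝓞 K)} (h𝔭 : 𝔭.IsPrime) {p : ℕ} (hp : p.Prime)
    (hp𝔭 : (p : 𝓞 K) ∈ 𝔭) (h : ∀ y, y ^ p - y ∈ 𝔭) : Ideal.absNorm 𝔭 = p := by
  have hmax := isMaximal_of_mem h𝔭 hp hp𝔭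
  let _ : Field (𝓞 K ⧸ 𝔭) := Ideal.Quotient.field 𝔭
  have : Fact p.Prime := ⟨hp⟩
  have : CharP (𝓞 K ⧸ 𝔭) p := (CharP.charP_iff_prime_eq_zero hp).mpr (by
    rw [← map_natCast (Ideal.Quotient.mk 𝔭), Ideal.Quotient.eq_zero_iff_mem]; exact hp𝔭)
  rw [Ideal.absNorm_apply, Submodule.cardQuot_apply]
  have hb : Function.Bijective (ZMod.castHom (dvd_refl p) (𝓞 K ⧸ 𝔭)) := by
    refine ⟨RingHom.injective _, fun y => ?_⟩
    obtain ⟨y, rfl⟩ := Ideal.Quotient.mk_surjective y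
    obtain ⟨m, hm⟩ := exists_int_sub_mem hmax hp hp𝔭 (h y)
    refine ⟨m, ?_⟩
    rw [map_intCast, (Ideal.Quotient.eq).mpr hm, map_intCast]
  rw [← Nat.card_eq_of_bijective _ hb, Nat.card_zmod]

lemma pow_sub_mem_of_absNorm_eq {𝔭 : Ideal (𝓞 K)} {p : ℕ} (hp : p.Prime)
    (h : Ideal.absNorm 𝔭 = p) (y : 𝓞 K) : y ^ p - y ∈ 𝔭 := by
  have h𝔭 : 𝔭.IsPrime := Ideal.isPrime_of_irreducible_absNorm (h ▸ hp)
  have hmax := isMaximal_of_mem h𝔭 hp (by rw [← h]; exact Ideal.absNorm_mem 𝔭)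
  let _ : Field (𝓞 K ⧸ 𝔭) := Ideal.Quotient.field 𝔭
  rw [Ideal.absNorm_apply, Submodule.cardQuot_apply] at h
  have : Finite (𝓞 K ⧸ 𝔭) := Nat.finite_of_card_ne_zero (by rw [h]; exact hp.ne_zero)
  rw [← Ideal.Quotient.eq, map_pow, ← h]
  let _ := Fintype.ofFinite (𝓞 K ⧸ 𝔭)
  rw [Nat.card_eq_fintype_card]
  exact FiniteField.pow_card _

/-- A nonzero element lies in no prime above `p` once `p` is large. -/
lemma eventually_notMem {a : 𝓞 K} (ha : a ≠ 0) : ∀ᶠ p : ℕ in Filter.atTop, p.Prime →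
    ∀ Q : Ideal (𝓞 K), Q.IsPrime → (p : 𝓞 K) ∈ Q → a ∉ Q := by
  have hN : Ideal.absNorm (Ideal.span {a}) ≠ 0 := by
    rw [Ne, Ideal.absNorm_eq_zero_iff, Ideal.span_singleton_eq_bot]; exact ha
  filter_upwards [Filter.eventually_gt_atTop (Ideal.absNorm (Ideal.span {a}))] with p hpN hp Q
    hQ hpQ haQ
  have h1 : ((Ideal.absNorm (Ideal.span {a}) : ℕ) : 𝓞 K) ∈ Q :=
    (Ideal.span_singleton_le_iff_mem Q).mpr haQ (Ideal.absNorm_mem _)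
  have hcop : Nat.Coprime p (Ideal.absNorm (Ideal.span {a})) :=
    (Nat.Prime.coprime_iff_not_dvd hp).mpr
      fun h => absurd (Nat.le_of_dvd (Nat.pos_of_ne_zero hN) h) (by omega)
  obtain ⟨u, v, huv⟩ := (Nat.isCoprime_iff_coprime.mpr hcop)
  have h2 : (1 : 𝓞 K) = u * p + v * (Ideal.absNorm (Ideal.span {a}) : ℕ) := by
    exact_mod_cast congrArg (Int.cast : ℤ → 𝓞 K) huv.symm
  exact hQ.ne_top ((Ideal.eq_top_iff_one Q).mpr
    (h2 ▸ Q.add_mem (Q.mul_mem_left _ hpQ) (Q.mul_mem_left _ h1)))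

lemma under_eq_span {L : Type*} [Field L] {Q : Ideal (𝓞 L)} (hQ : Q.IsPrime) {p : ℕ} (hp : p.Prime)
    (hpQ : (p : 𝓞 L) ∈ Q) : Q.under ℤ = Ideal.span {(p : ℤ)} := by
  have hmax : (Ideal.span {(p : ℤ)}).IsMaximal :=
    PrincipalIdealRing.isMaximal_of_irreducible (Nat.prime_iff_prime_int.mp hp).irreducible
  refine (hmax.eq_of_le (hQ.under ℤ).ne_top ?_).symm
  rw [Ideal.span_singleton_le_iff_mem, Ideal.under_def, Ideal.mem_comap]
  simpa using hpQ

variable {L : Type*} [Field L] [NumberField L]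

/-- `φ` is a Frobenius element at the prime `Q` of `𝓞 L` above the rational prime `p`. -/
structure IsFrob (p : ℕ) (Q : Ideal (𝓞 L)) (φ : L ≃ₐ[ℚ] L) : Prop where
  isPrime : Q.IsPrime
  mem : (p : 𝓞 L) ∈ Q
  frob : ∀ x : 𝓞 L, φ • x - x ^ p ∈ Q

lemma exists_isFrob [IsGalois ℚ L] {p : ℕ} (hp : p.Prime) :
    ∃ (Q : Ideal (𝓞 L)) (φ : L ≃ₐ[ℚ] L), IsFrob p Q φ := by
  have hmax : (Ideal.span {(p : ℤ)}).IsMaximal :=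
    PrincipalIdealRing.isMaximal_of_irreducible (Nat.prime_iff_prime_int.mp hp).irreducible
  have hprime := hmax.isPrime
  obtain ⟨Q, hQ, hQp⟩ := Ideal.exists_ideal_over_prime_of_isIntegral_of_isDomain (S := 𝓞 L)
    (Ideal.span {(p : ℤ)}) (by
      rw [(RingHom.injective_iff_ker_eq_bot _).mp (FaithfulSMul.algebraMap_injective ℤ (𝓞 L))]
      exact bot_le)
  have hpQ : (p : 𝓞 L) ∈ Q := by
    have : (p : ℤ) ∈ Ideal.comap (algebraMap ℤ (𝓞 L)) Q := hQp ▸ Ideal.mem_span_singleton_self _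
    simpa using this
  have hne : Q ≠ ⊥ := by
    rintro rfl
    rw [Ideal.mem_bot, Nat.cast_eq_zero] at hpQ
    exact hp.ne_zero hpQ
  have := Ideal.finiteQuotientOfFreeOfNeBot Q hne
  obtain ⟨φ, hφ⟩ := IsArithFrobAt.exists_of_isInvariant ℤ (L ≃ₐ[ℚ] L) Q
  refine ⟨Q, φ, hQ, hpQ, fun x => ?_⟩
  have h1 := hφ x
  rw [under_eq_span hQ hp hpQ, Int.card_ideal_quot] at h1
  exact h1

/-- An element of `𝓞 K` generating the fixed field `K` of `U`: it is fixed by the elements of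
`U` only. -/
lemma exists_generator [IsGalois ℚ L] (U : Subgroup (L ≃ₐ[ℚ] L)) :
    ∃ θ : 𝓞 (IntermediateField.fixedField U), ∀ g : L ≃ₐ[ℚ] L,
      g • algebraMap (𝓞 (IntermediateField.fixedField U)) (𝓞 L) θ = algebraMap _ _ θ → g ∈ U := by
  obtain ⟨α, hα⟩ := Field.exists_primitive_element ℚ (IntermediateField.fixedField U)
  have halg : IsAlgebraic ℤ α :=
    (IsFractionRing.isAlgebraic_iff ℤ ℚ _).mpr (Algebra.IsAlgebraic.isAlgebraic α)
  obtain ⟨y, hy, hyα⟩ := halg.exists_integral_multiple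
  refine ⟨⟨y • α, hyα⟩, fun g hg => ?_⟩
  have h1 : g ((y • α : IntermediateField.fixedField U) : L) =
      ((y • α : IntermediateField.fixedField U) : L) := congrArg (fun z : 𝓞 L => (z : L)) hg
  have h2 : g (α : L) = α := by
    have h3 : ((y • α : IntermediateField.fixedField U) : L) = y • (α : L) := rfl
    rw [h3, map_zsmul] at h1
    exact smul_right_injective L hy h1
  rw [← IntermediateField.fixingSubgroup_fixedField U, IntermediateField.mem_fixingSubgroup_iff]
  intro x hx
  have key : ∀ z : IntermediateField.fixedField U, z ∈ IntermediateField.adjoin ℚ {α} →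
      g (z : L) = z := by
    intro z hz
    induction hz using IntermediateField.adjoin_induction with
    | mem z hz => rw [Set.mem_singleton_iff.mp hz, h2]
    | algebraMap q =>
      rw [show ((algebraMap ℚ (IntermediateField.fixedField U) q :
        IntermediateField.fixedField U) : L) = algebraMap ℚ L q by simp]
      exact g.commutes q
    | add a b _ _ ha hb => push_cast; rw [map_add, ha, hb]
    | inv a _ ha => push_cast; rw [map_inv₀, ha]
    | mul a b _ _ ha hb => push_cast; rw [map_mul, ha, hb]
  exact key ⟨x, hx⟩ (hα ▸ IntermediateField.mem_top)

end Frobenius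

end FrobDensity

/-! ### Degree one primes of fixed fields -/

namespace FrobDensity

open scoped NumberField Pointwise

section Count

variable {L : Type*} [Field L] [NumberField L]

lemma smul_intCast_ringOfIntegers (g : L ≃ₐ[ℚ] L) (m : ℤ) : g • (m : 𝓞 L) = m :=
  map_intCast (MulSemiringAction.toRingHom (L ≃ₐ[ℚ] L) (𝓞 L) g) m

lemma smul_algebraMap_of_mem {U : Subgroup (L ≃ₐ[ℚ] L)} {u : L ≃ₐ[ℚ] L} (hu : u ∈ U)
    (y : 𝓞 (IntermediateField.fixedField U)) :
    u • algebraMap (𝓞 (IntermediateField.fixedField U)) (𝓞 L) y = algebraMap _ _ y := by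
  apply NumberField.RingOfIntegers.ext
  exact (IntermediateField.mem_fixedField_iff U _).mp
    (y : IntermediateField.fixedField U).2 u hu

/-- Distinct conjugates of `θ` stay distinct modulo the primes above all large `p`. -/
lemma eventually_smul_eq (θ : 𝓞 L) : ∀ᶠ p : ℕ in Filter.atTop, p.Prime →
    ∀ Q : Ideal (𝓞 L), Q.IsPrime → (p : 𝓞 L) ∈ Q →
      ∀ g h : L ≃ₐ[ℚ] L, g • θ - h • θ ∈ Q → g • θ = h • θ := by
  have key : ∀ gh : (L ≃ₐ[ℚ] L) × (L ≃ₐ[ℚ] L), ∀ᶠ p : ℕ in Filter.atTop, p.Prime →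
      ∀ Q : Ideal (𝓞 L), Q.IsPrime → (p : 𝓞 L) ∈ Q →
        gh.1 • θ - gh.2 • θ ∈ Q → gh.1 • θ = gh.2 • θ := by
    intro gh
    by_cases h : gh.1 • θ - gh.2 • θ = 0
    · exact Filter.Eventually.of_forall fun _ _ _ _ _ _ => sub_eq_zero.mp h
    · filter_upwards [eventually_notMem h] with p hp h1 Q h2 h3 h4
      exact absurd h4 (hp h1 Q h2 h3)
  filter_upwards [Filter.eventually_all.mpr key] with p hp h1 Q h2 h3 g h h4
  exact hp (g, h) h1 Q h2 h3 h4

/-- The primes of degree one above `p` in the fixed field of `U` are the primes below `x⁻¹ • Q`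
with `x⁻¹ φ x ∈ U`, where `φ` is a Frobenius element at `Q`; the elements `x` giving the same
prime form a coset of `U`. -/
lemma eventually_degOne_mul_card [IsGalois ℚ L] (U : Subgroup (L ≃ₐ[ℚ] L)) :
    ∀ᶠ p : ℕ in Filter.atTop, p.Prime → ∀ (Q : Ideal (𝓞 L)) (φ : L ≃ₐ[ℚ] L), IsFrob p Q φ →
      degOne (IntermediateField.fixedField U) p * Nat.card U =
        Nat.card {x : L ≃ₐ[ℚ] L // x⁻¹ * φ * x ∈ U} := by
  obtain ⟨θ, hθ⟩ := exists_generator U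
  filter_upwards [eventually_smul_eq (algebraMap _ (𝓞 L) θ)] with p hsep hp Q φ hF
  replace hsep := hsep hp Q hF.isPrime hF.mem
  have hQmax := isMaximal_of_mem hF.isPrime hp hF.mem
  let ι := algebraMap (𝓞 (IntermediateField.fixedField U)) (𝓞 L)
  -- the prime of the fixed field below `x⁻¹ • Q`
  let b : (L ≃ₐ[ℚ] L) → Ideal (𝓞 (IntermediateField.fixedField U)) :=
    fun x => Ideal.comap ι (x⁻¹ • Q)
  have hb : ∀ x y, y ∈ b x ↔ x • ι y ∈ Q := fun x y => by
    rw [Ideal.mem_comap, Ideal.mem_inv_pointwise_smul_iff]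
  have hbprime : ∀ x, (b x).IsPrime := fun x => by
    have := hF.isPrime
    have : (x⁻¹ • Q).IsPrime := Ideal.IsPrime.smul x⁻¹
    exact Ideal.comap_isPrime ι _
  have hbp : ∀ x, (p : 𝓞 (IntermediateField.fixedField U)) ∈ b x := fun x => by
    rw [hb, map_natCast]
    have := smul_intCast_ringOfIntegers x (p : ℤ)
    rw [Int.cast_natCast] at this
    rw [this]; exact hF.mem
  have hnorm : ∀ x, x⁻¹ * φ * x ∈ U → Ideal.absNorm (b x) = p := by
    intro x hx
    refine absNorm_eq_of_pow_sub_mem (hbprime x) hp (hbp x) fun y => ?_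
    rw [hb, map_sub, map_pow, smul_sub, smul_pow']
    have h1 : φ • x • ι y = x • ι y := by
      have := congrArg (x • ·) (smul_algebraMap_of_mem hx y)
      simpa [mul_smul] using this
    have h2 := hF.frob (x • ι y)
    rw [h1] at h2
    rw [← neg_mem_iff, neg_sub]; exact h2
  have hconv : ∀ x, Ideal.absNorm (b x) = p → x⁻¹ * φ * x ∈ U := by
    intro x hx
    have h1 := pow_sub_mem_of_absNorm_eq hp hx θ
    rw [hb, map_sub, map_pow, smul_sub, smul_pow'] at h1
    have h2 := Q.add_mem (hF.frob (x • ι θ)) h1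
    rw [sub_add_sub_cancel, ← mul_smul] at h2
    have h3 := hsep _ _ h2
    apply hθ
    rw [mul_assoc, mul_smul]
    change x⁻¹ • (φ * x) • ι θ = ι θ
    rw [show (φ * x) • ι θ = x • ι θ from h3, inv_smul_smul]
  have hsurj : ∀ 𝔭 : {𝔭 : Ideal (𝓞 (IntermediateField.fixedField U)) // Ideal.absNorm 𝔭 = p},
      ∃ x, b x = 𝔭.1 := by
    rintro ⟨𝔭, h𝔭⟩
    have hprime : 𝔭.IsPrime := Ideal.isPrime_of_irreducible_absNorm (h𝔭 ▸ hp)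
    obtain ⟨Q', hQ', hQ'𝔭⟩ := Ideal.exists_ideal_over_prime_of_isIntegral_of_isDomain (S := 𝓞 L)
      𝔭 (by
        rw [(RingHom.injective_iff_ker_eq_bot ι).mp (FaithfulSMul.algebraMap_injective _ (𝓞 L))]
        exact bot_le)
    have hpQ' : (p : 𝓞 L) ∈ Q' := by
      have h1 : (p : 𝓞 (IntermediateField.fixedField U)) ∈ 𝔭 := by
        have := Ideal.absNorm_mem 𝔭
        rwa [h𝔭] at this
      rw [← hQ'𝔭, Ideal.mem_comap, map_natCast] at h1
      exact h1
    have := hF.isPrime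
    obtain ⟨g, hg⟩ := Algebra.IsInvariant.exists_smul_of_under_eq ℤ (𝓞 L) (L ≃ₐ[ℚ] L) Q Q'
      (by rw [under_eq_span hF.isPrime hp hF.mem, under_eq_span hQ' hp hpQ'])
    refine ⟨g⁻¹, ?_⟩
    change Ideal.comap ι (g⁻¹⁻¹ • Q) = 𝔭
    rw [inv_inv, ← hg]; exact hQ'𝔭
  have hmulU : ∀ x, ∀ u ∈ U, b (x * u) = b x := by
    intro x u hu
    ext y
    rw [hb, hb, mul_smul, smul_algebraMap_of_mem hu]
  have hinj : ∀ x y, Ideal.absNorm (b x) = p → b x = b y → x⁻¹ * y ∈ U := by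
    intro x y hx hxy
    obtain ⟨m, hm⟩ := exists_int_sub_mem (isMaximal_of_mem (hbprime x) hp (hbp x)) hp (hbp x)
      (pow_sub_mem_of_absNorm_eq hp hx θ)
    have hm' := hxy ▸ hm
    rw [hb, map_sub, map_intCast, smul_sub, smul_intCast_ringOfIntegers] at hm hm'
    have h2 := Q.sub_mem hm' hm
    rw [sub_sub_sub_cancel_right] at h2
    apply hθ
    rw [mul_smul, hsep _ _ h2, inv_smul_smul]
  choose s hs using hsurj
  have hsnorm : ∀ 𝔭, Ideal.absNorm (b (s 𝔭)) = p := fun 𝔭 => by rw [hs]; exact 𝔭.2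
  rw [degOne, ← Nat.card_prod]
  refine Nat.card_eq_of_bijective (fun a => ⟨s a.1 * a.2, hconv _ ?_⟩) ⟨?_, ?_⟩
  · rw [hmulU _ _ a.2.2]; exact hsnorm a.1
  · rintro ⟨𝔭, u⟩ ⟨𝔮, v⟩ h
    have h1 : s 𝔭 * u = s 𝔮 * v := congrArg Subtype.val h
    have h2 : 𝔭 = 𝔮 := by
      apply Subtype.ext
      rw [← hs 𝔭, ← hs 𝔮, ← hmulU (s 𝔭) u u.2, h1, hmulU _ _ v.2]
    subst h2
    rw [Prod.mk.injEq]
    exact ⟨rfl, Subtype.ext (mul_left_cancel h1)⟩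
  · rintro ⟨x, hx⟩
    refine ⟨⟨⟨b x, hnorm x hx⟩, ⟨(s ⟨b x, hnorm x hx⟩)⁻¹ * x, ?_⟩⟩, ?_⟩
    · exact hinj _ _ (hsnorm _) (hs _)
    · simp

end Count

end FrobDensity

/-! ### Prime divisors of a polynomial -/

namespace FrobDensity

open scoped NumberField Pointwise

section PrimeDivisors

lemma intCast_notMem {L : Type*} [Field L] {Q : Ideal (𝓞 L)} (hQ : Q.IsPrime) {p : ℕ} (hp : p.Prime)
    (hpQ : (p : 𝓞 L) ∈ Q) {m : ℤ} (hm : ¬ (p : ℤ) ∣ m) : (m : 𝓞 L) ∉ Q := by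
  have h1 := under_eq_span hQ hp hpQ
  intro h2
  have h3 : m ∈ Q.under ℤ := by rw [Ideal.under_def, Ideal.mem_comap]; simpa using h2
  rw [h1, Ideal.mem_span_singleton] at h3
  exact hm h3

variable {L : Type*} [Field L] [NumberField L]

/-- If `p` is a large prime divisor of `P`, then a Frobenius element at `p` fixes a root of `P`:
a root `t` of `P` modulo `p` is the reduction of a root `z` of `P` in `L`, and the Frobenius
element fixes `z` modulo `Q` since `t` lies in the prime field. -/
lemma eventually_exists_fixed_root {P : ℤ[X]} (hP : P ≠ 0)
    (hsplit : (P.map (algebraMap ℤ L)).Splits) :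
    ∀ᶠ p : ℕ in Filter.atTop, p.Prime → IsPrimeDivisorOf p P →
      ∀ (Q : Ideal (𝓞 L)) (φ : L ≃ₐ[ℚ] L), IsFrob p Q φ → ∃ z ∈ P.rootSet L, φ z = z := by
  classical
  set c := P.leadingCoeff with hc
  have hc0 : c ≠ 0 := leadingCoeff_ne_zero.mpr hP
  have hinj : Function.Injective (algebraMap ℤ L) := FaithfulSMul.algebraMap_injective ℤ L
  have hex : ∀ z : L, ∃ b : 𝓞 L, z ∈ P.aroots L → (b : L) = c * z := by
    intro z
    by_cases hz : z ∈ P.aroots L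
    · have h1 : aeval z P = 0 := (mem_aroots.mp hz).2
      have h2 := isIntegral_leadingCoeff_smul P z h1
      exact ⟨⟨_, h2⟩, fun _ => by simp [zsmul_eq_mul, hc]⟩
    · exact ⟨0, fun h => absurd h hz⟩
  choose b hb using hex
  have hev : ∀ᶠ p : ℕ in Filter.atTop, ∀ z ∈ P.rootSet L, p.Prime →
      ∀ Q : Ideal (𝓞 L), Q.IsPrime → (p : 𝓞 L) ∈ Q →
      ∀ g h : L ≃ₐ[ℚ] L, g • b z - h • b z ∈ Q → g • b z = h • b z :=
    (Filter.eventually_all_finite (rootSet_finite P L)).mpr fun z _ => eventually_smul_eq (b z)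
  filter_upwards [hev, Filter.eventually_gt_atTop c.natAbs] with p hsep hpc hp hdiv Q φ hF
  have hQ := hF.isPrime
  obtain ⟨t, ht0, htp⟩ := hdiv
  set w : ℚ := aeval t P with hw
  have hpnum : (p : ℤ) ∣ w.num := by
    have : Fact p.Prime := ⟨hp⟩
    by_contra h
    rw [padicValRat, padicValInt.eq_zero_of_not_dvd h] at htp
    have := Nat.zero_le (padicValNat p w.den)
    omega
  have hpden : ¬ (p : ℤ) ∣ (w.den : ℤ) := by
    intro h
    have h1 : p ∣ w.num.natAbs := Int.natCast_dvd.mp hpnum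
    have h2 : p ∣ w.den := Int.natCast_dvd_natCast.mp h
    exact hp.one_lt.ne' (Nat.dvd_one.mp (w.reduced ▸ Nat.dvd_gcd h1 h2))
  -- `c * t.num - t.den * b z` is `c * t.den` times `t - z`
  let A : L → 𝓞 L := fun z => ((c * t.num : ℤ) : 𝓞 L) - ((t.den : ℤ) : 𝓞 L) * b z
  have hA : ∀ z ∈ P.aroots L, ((A z : 𝓞 L) : L) = (c * t.den : L) * ((t : L) - z) := by
    intro z hz
    have h1 : (t : L) * t.den = t.num := by exact_mod_cast Rat.mul_den_eq_num t
    simp only [A, map_sub, map_mul, map_intCast, hb z hz]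
    push_cast
    rw [← h1]; ring
  have hprod : ((w.den : ℤ) : 𝓞 L) * ((c : ℤ) : 𝓞 L) * ((P.aroots L).map A).prod =
      ((w.num * (c * t.den) ^ (P.aroots L).card : ℤ) : 𝓞 L) := by
    apply NumberField.RingOfIntegers.ext
    have h1 : (w : L) * w.den = w.num := by exact_mod_cast Rat.mul_den_eq_num w
    have h2 : (w : L) = c * ((P.aroots L).map fun z => (t : L) - z).prod := by
      have h3 := hsplit.eval_eq_prod_roots (t : L)
      rw [leadingCoeff_map_of_injective hinj, ← hc] at h3
      rw [aroots, ← eq_intCast (algebraMap ℤ L) c, ← h3, eval_map_algebraMap, hw]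
      have := aeval_algebraMap_apply L t P
      simpa using this.symm
    have h4 : algebraMap (𝓞 L) L ((P.aroots L).map A).prod =
        ((c * t.den : L) ^ (P.aroots L).card) * ((P.aroots L).map fun z => (t : L) - z).prod := by
      rw [map_multiset_prod, Multiset.map_map, show Multiset.map (algebraMap (𝓞 L) L ∘ A) _ = _ from
        Multiset.map_congr rfl hA, Multiset.prod_map_mul,
        Multiset.map_const', Multiset.prod_replicate]
    change algebraMap (𝓞 L) L _ = algebraMap (𝓞 L) L _
    rw [map_mul, map_mul, h4]
    simp only [map_intCast]
    push_cast
    rw [← h1, h2]; ring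
  have hcQ : ((c : ℤ) : 𝓞 L) ∉ Q := intCast_notMem hQ hp hF.mem fun h => by
    have := Nat.le_of_dvd (Int.natAbs_pos.mpr hc0) (Int.natCast_dvd.mp h)
    omega
  have hmemA : ((P.aroots L).map A).prod ∈ Q := by
    have h1 : ((w.num * (c * t.den) ^ (P.aroots L).card : ℤ) : 𝓞 L) ∈ Q := by
      obtain ⟨k, hk⟩ := hpnum
      rw [hk]
      push_cast
      rw [mul_assoc]
      exact Q.mul_mem_right _ hF.mem
    rw [← hprod] at h1
    refine ((hQ.mem_or_mem h1).resolve_left fun h2 => ?_)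
    rcases hQ.mem_or_mem h2 with h3 | h3
    · exact intCast_notMem hQ hp hF.mem hpden h3
    · exact hcQ h3
  obtain ⟨y, hy, hzQ⟩ := (Ideal.IsPrime.multiset_prod_mem_iff_exists_mem hQ _).mp hmemA
  obtain ⟨z, hz, rfl⟩ := Multiset.mem_map.mp hy
  have hden : ((t.den : ℤ) : 𝓞 L) ∉ Q := by
    intro h
    have h1 : ((c * t.num : ℤ) : 𝓞 L) ∈ Q := by
      have := Q.add_mem hzQ (Q.mul_mem_right (b z) h)
      simpa [A] using this
    rw [Int.cast_mul] at h1
    have h2 := (hQ.mem_or_mem h1).resolve_left hcQ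
    have h3 : (p : ℤ) ∣ t.num := by
      by_contra h4; exact intCast_notMem hQ hp hF.mem h4 h2
    have h5 : (p : ℤ) ∣ (t.den : ℤ) := by
      by_contra h4; exact intCast_notMem hQ hp hF.mem h4 h
    exact hp.one_lt.ne' (Nat.dvd_one.mp (t.reduced ▸
      Nat.dvd_gcd (Int.natCast_dvd.mp h3) (Int.natCast_dvd_natCast.mp h5)))
  have hroot : z ∈ P.rootSet L := by
    rw [mem_rootSet]; exact mem_aroots.mp hz
  have hfix : φ • b z = b z := by
    have h1 := hsep z hroot hp Q hQ hF.mem φ 1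
    rw [one_smul] at h1
    apply h1
    set m : ℤ := c * t.num with hm
    set s : ℤ := (t.den : ℤ) with hs
    -- modulo `Q`, `s * b z = m` is an integer, hence fixed by `x ↦ x ^ p`
    have h2 : (m : 𝓞 L) ^ p - m ∈ Q := by
      have h3 : (p : ℤ) ∣ m ^ p - m := by
        have : Fact p.Prime := ⟨hp⟩
        rw [← ZMod.intCast_eq_intCast_iff_dvd_sub]
        push_cast
        rw [ZMod.pow_card]
      obtain ⟨k, hk⟩ := h3
      have h4 : (m : 𝓞 L) ^ p - m = p * k := by exact_mod_cast congrArg (Int.cast : ℤ → 𝓞 L) hk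
      rw [h4]; exact Q.mul_mem_right _ hF.mem
    have h3 : (m : 𝓞 L) ^ p - ((s : 𝓞 L) * b z) ^ p ∈ Q :=
      Q.mem_of_dvd (sub_dvd_pow_sub_pow _ _ p) hzQ
    have h4 := hF.frob ((s : 𝓞 L) * b z)
    rw [smul_mul', smul_intCast_ringOfIntegers] at h4
    have h5 : (s : 𝓞 L) * (φ • b z - b z) ∈ Q := by
      have := Q.add_mem (Q.add_mem (Q.sub_mem h4 h3) h2) hzQ
      convert this using 1
      simp only [A]
      ring
    exact (hQ.mem_or_mem h5).resolve_left hden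
  refine ⟨z, hroot, ?_⟩
  have h1 : φ ((b z : 𝓞 L) : L) = b z := congrArg (fun z : 𝓞 L => (z : L)) hfix
  rw [hb z hz, map_mul, map_intCast] at h1
  exact mul_left_cancel₀ (by exact_mod_cast hc0) h1

end PrimeDivisors

end FrobDensity

/-! ### Möbius inversion over a cyclic subgroup -/

namespace FrobDensity

open scoped NumberField Pointwise ArithmeticFunction.Moebius ArithmeticFunction.zeta

section Moebius

lemma sum_divisors_moebius {n : ℕ} : ∑ d ∈ n.divisors, (μ d : ℝ) = if n = 1 then 1 else 0 := by
  have h := congrArg (fun f => f n) (ArithmeticFunction.coe_moebius_mul_coe_zeta (R := ℝ))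
  simp only [ArithmeticFunction.coe_mul_zeta_apply, ArithmeticFunction.one_apply] at h
  simpa using h

lemma sum_moebius_div_pos {n : ℕ} (hn : 0 < n) : 0 < ∑ d ∈ n.divisors, (μ d : ℝ) / d := by
  have h := (ArithmeticFunction.sum_eq_iff_sum_mul_moebius_eq (R := ℝ)
    (f := fun k => (k.totient : ℝ)) (g := fun k => (k : ℝ))).mp
    (fun k _ => by exact_mod_cast Nat.sum_totient k) n hn
  rw [Nat.sum_divisorsAntidiagonal (fun a b => (μ a : ℝ) * (b : ℝ))] at h
  have h2 : ∑ d ∈ n.divisors, (μ d : ℝ) / d = n.totient / n := by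
    rw [← h, Finset.sum_div]
    refine Finset.sum_congr rfl fun d hd => ?_
    have hdn := Nat.dvd_of_mem_divisors hd
    have hd0 : (d : ℝ) ≠ 0 := by
      exact_mod_cast (Nat.pos_of_dvd_of_pos hdn hn).ne'
    have hn0 : (n : ℝ) ≠ 0 := by exact_mod_cast hn.ne'
    rw [Nat.cast_div hdn hd0]
    field_simp
  rw [h2]
  have := Nat.totient_pos.mpr hn
  positivity

open Classical in
/-- Möbius inversion in the cyclic group generated by `σ`: the alternating sum of the indicator
functions of its subgroups is the indicator function of its generators. -/
lemma sum_moebius_mem_zpowers {G : Type*} [Group G] [Finite G] (σ h : G) :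
    ∑ d ∈ (orderOf σ).divisors, (μ d : ℝ) * (if h ∈ Subgroup.zpowers (σ ^ d) then 1 else 0) = 0 ∨
    (∑ d ∈ (orderOf σ).divisors, (μ d : ℝ) *
      (if h ∈ Subgroup.zpowers (σ ^ d) then 1 else 0) = 1 ∧ σ ∈ Subgroup.zpowers h) := by
  by_cases hh : h ∈ Subgroup.zpowers σ
  · obtain ⟨k, rfl⟩ := mem_powers_iff_mem_zpowers.mpr hh
    change _ = 0 ∨ _ = 1 ∧ σ ∈ Subgroup.zpowers (σ ^ k)
    have hmem : ∀ d ∈ (orderOf σ).divisors, (σ ^ k ∈ Subgroup.zpowers (σ ^ d) ↔ d ∣ k) := by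
      intro d hd
      have hdn := Nat.dvd_of_mem_divisors hd
      constructor
      · intro h
        obtain ⟨j, hj⟩ := Subgroup.mem_zpowers_iff.mp h
        rw [← zpow_natCast, ← zpow_natCast, ← zpow_mul, zpow_eq_zpow_iff_modEq] at hj
        have h1 := (hj.of_dvd (Int.natCast_dvd_natCast.mpr hdn)).dvd
        have h2 : (d : ℤ) ∣ k := by
          have := dvd_add h1 (dvd_mul_right (d : ℤ) j)
          simpa using this
        exact Int.natCast_dvd_natCast.mp h2
      · rintro ⟨j, rfl⟩
        rw [pow_mul]
        exact Subgroup.npow_mem_zpowers _ _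
    have hsum : ∑ d ∈ (orderOf σ).divisors, (μ d : ℝ) *
        (if σ ^ k ∈ Subgroup.zpowers (σ ^ d) then 1 else 0) =
        if (orderOf σ).gcd k = 1 then 1 else 0 := by
      rw [← sum_divisors_moebius]
      have hn := (orderOf_pos σ).ne'
      have : ((orderOf σ).gcd k).divisors = (orderOf σ).divisors.filter (· ∣ k) := by
        ext d
        simp [Nat.dvd_gcd_iff, hn]
      rw [this, Finset.sum_filter]
      refine Finset.sum_congr rfl fun d hd => ?_
      simp only [hmem d hd, mul_ite, mul_one, mul_zero]
    change (∑ d ∈ (orderOf σ).divisors, (μ d : ℝ) *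
        (if σ ^ k ∈ Subgroup.zpowers (σ ^ d) then 1 else 0)) = 0 ∨
        (∑ d ∈ (orderOf σ).divisors, (μ d : ℝ) *
        (if σ ^ k ∈ Subgroup.zpowers (σ ^ d) then 1 else 0)) = 1 ∧ _
    rw [hsum]
    by_cases hg : (orderOf σ).gcd k = 1
    · exact Or.inr ⟨if_pos hg, mem_zpowers_pow_iff.mpr (Nat.gcd_comm k _ ▸ hg)⟩
    · exact Or.inl (if_neg hg)
  · left
    refine Finset.sum_eq_zero fun d _ => ?_
    rw [if_neg, mul_zero]
    exact fun h1 => hh (Subgroup.zpowers_le.mpr (Subgroup.npow_mem_zpowers σ d) h1)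

variable {L : Type*} [Field L] [NumberField L]

/-- The combination of the degree one counts of the fixed fields of the powers of `σ` that, for
all large `p`, detects whether the Frobenius elements at `p` generate a conjugate of `⟨σ⟩`. -/
noncomputable def weight (σ : L ≃ₐ[ℚ] L) (p : ℕ) : ℝ :=
  ∑ d ∈ (orderOf σ).divisors, (μ d : ℝ) / d *
    degOne (IntermediateField.fixedField (Subgroup.zpowers (σ ^ d))) p

/-- With `n` the order of `σ`, for large `p` the weight is `1/n` times the number of `x` for which
`x⁻¹ φ x` generates `⟨σ⟩`. -/
lemma eventually_weight [IsGalois ℚ L] (σ : L ≃ₐ[ℚ] L) :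
    ∀ᶠ p : ℕ in Filter.atTop, p.Prime → ∀ (Q : Ideal (𝓞 L)) (φ : L ≃ₐ[ℚ] L), IsFrob p Q φ →
      0 ≤ weight σ p ∧ weight σ p ≤ Nat.card (L ≃ₐ[ℚ] L) ∧
        (weight σ p ≠ 0 → ∃ x : L ≃ₐ[ℚ] L, σ ∈ Subgroup.zpowers (x⁻¹ * φ * x)) := by
  classical
  have hev : ∀ᶠ p : ℕ in Filter.atTop, ∀ d ∈ (orderOf σ).divisors,
      p.Prime → ∀ (Q : Ideal (𝓞 L)) (φ : L ≃ₐ[ℚ] L), IsFrob p Q φ →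
      degOne (IntermediateField.fixedField (Subgroup.zpowers (σ ^ d))) p *
        Nat.card (Subgroup.zpowers (σ ^ d)) =
        Nat.card {x : L ≃ₐ[ℚ] L // x⁻¹ * φ * x ∈ Subgroup.zpowers (σ ^ d)} :=
    (Filter.eventually_all_finset _).mpr fun d _ => eventually_degOne_mul_card _
  filter_upwards [hev] with p hev hp Q φ hF
  let _ := Fintype.ofFinite (L ≃ₐ[ℚ] L)
  have hn := orderOf_pos σ
  have hn0 : (orderOf σ : ℝ) ≠ 0 := by exact_mod_cast hn.ne'
  have hw : weight σ p * orderOf σ = ∑ x : L ≃ₐ[ℚ] L, ∑ d ∈ (orderOf σ).divisors,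
      (μ d : ℝ) * (if x⁻¹ * φ * x ∈ Subgroup.zpowers (σ ^ d) then 1 else 0) := by
    rw [Finset.sum_comm, weight, Finset.sum_mul]
    refine Finset.sum_congr rfl fun d hd => ?_
    have hdn := Nat.dvd_of_mem_divisors hd
    have hd0 : d ≠ 0 := (Nat.pos_of_dvd_of_pos hdn hn).ne'
    have h1 := hev d hd hp Q φ hF
    rw [Nat.card_zpowers, orderOf_pow_of_dvd hd0 hdn, Nat.card_eq_fintype_card,
      Fintype.card_subtype] at h1
    rw [← Finset.mul_sum, Finset.sum_boole, ← h1, Nat.cast_mul, Nat.cast_div hdn (by exact_mod_cast hd0)]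
    ring
  have hS := fun x => sum_moebius_mem_zpowers σ (x⁻¹ * φ * x)
  have hn1 : (1 : ℝ) ≤ orderOf σ := by exact_mod_cast hn
  have hnn : 0 ≤ weight σ p * orderOf σ := by
    rw [hw]
    refine Finset.sum_nonneg fun x _ => ?_
    rcases hS x with h | h
    · rw [h]
    · rw [h.1]; exact zero_le_one
  have h0 : 0 ≤ weight σ p := nonneg_of_mul_nonneg_left hnn (by linarith)
  refine ⟨h0, ?_, fun hne => ?_⟩
  · have hle : weight σ p * orderOf σ ≤ Nat.card (L ≃ₐ[ℚ] L) := by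
      rw [hw, Nat.card_eq_fintype_card, Fintype.card_eq_sum_ones, Nat.cast_sum]
      refine Finset.sum_le_sum fun x _ => ?_
      rcases hS x with h | h
      · rw [h]; simp
      · rw [h.1]; simp
    nlinarith
  · by_contra! hcon
    apply mul_ne_zero hne hn0
    rw [hw]
    exact Finset.sum_eq_zero fun x _ => (hS x).resolve_right fun h => hcon x h.2

/-- Mertens' theorem for the weights. -/
lemma exists_weight_mertens (σ : L ≃ₐ[ℚ] L) : ∃ c > (0 : ℝ), ∃ C : ℝ, ∀ x : ℕ, 1 ≤ x →
    |∑ p ∈ Nat.primesLE x, weight σ p * (Real.log p / p) - c * Real.log x| ≤ C := by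
  choose C hC using fun d : ℕ =>
    exists_mertens (IntermediateField.fixedField (Subgroup.zpowers (σ ^ d)))
  refine ⟨_, sum_moebius_div_pos (orderOf_pos σ),
    ∑ d ∈ (orderOf σ).divisors, |(μ d : ℝ) / d| * C d, fun x hx => ?_⟩
  have h1 : ∑ p ∈ Nat.primesLE x, weight σ p * (Real.log p / p) -
      (∑ d ∈ (orderOf σ).divisors, (μ d : ℝ) / d) * Real.log x =
      ∑ d ∈ (orderOf σ).divisors, (μ d : ℝ) / d * (∑ p ∈ Nat.primesLE x,
        (degOne (IntermediateField.fixedField (Subgroup.zpowers (σ ^ d))) p : ℝ) *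
          (Real.log p / p) - Real.log x) := by
    simp only [weight, Finset.sum_mul, mul_sub, Finset.sum_sub_distrib, Finset.mul_sum]
    rw [Finset.sum_comm]
    simp only [mul_assoc]
  rw [h1]
  refine (Finset.abs_sum_le_sum_abs _ _).trans (Finset.sum_le_sum fun d _ => ?_)
  rw [abs_mul]
  exact mul_le_mul_of_nonneg_left (hC d x hx) (abs_nonneg _)

end Moebius

end FrobDensity

/-! ### Positive density -/

namespace FrobDensity

/-- A set of primes supporting weights bounded above that satisfy Mertens' theorem with a
positive constant has positive lower density: by Mertens, the primes in `(x / A, x]` with `A` a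
large constant carry a definite mass, each of them at most `A * log x / x` up to a constant. -/
lemma density_of_mertens {S : Set ℕ} {w : ℕ → ℝ} {c C M : ℝ} (hc : 0 < c) (hM : 0 < M)
    (hw : ∀ᶠ p : ℕ in Filter.atTop, p.Prime → w p ≤ M ∧ (p ∉ S → w p = 0))
    (hmertens : ∀ x : ℕ, 1 ≤ x →
      |∑ p ∈ Nat.primesLE x, w p * (Real.log p / p) - c * Real.log x| ≤ C) :
    ∃ δ : ℝ, 0 < δ ∧ ∃ x₀ : ℕ, ∀ x : ℕ, x₀ ≤ x →
      δ * (Nat.primeCounting x : ℝ) ≤ ({p : ℕ | p ≤ x ∧ p.Prime ∧ p ∈ S}.ncard : ℝ) := by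
  classical
  obtain ⟨N, hN⟩ := Filter.eventually_atTop.mp hw
  have hlog4 : 0 < Real.log 4 := Real.log_pos (by norm_num)
  obtain ⟨A, hA1, hA⟩ : ∃ A : ℕ, 1 ≤ A ∧ 2 * C + 1 ≤ c * Real.log A := by
    have h1 : Filter.Tendsto (fun A : ℕ => c * Real.log A) Filter.atTop Filter.atTop :=
      (Real.tendsto_log_atTop.comp tendsto_natCast_atTop_atTop).const_mul_atTop hc
    obtain ⟨A, h2, h3⟩ := ((h1.eventually_ge_atTop (2 * C + 1)).and
      (Filter.eventually_ge_atTop 1)).exists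
    exact ⟨A, h3, h2⟩
  have hA0 : (0 : ℝ) < A := by exact_mod_cast hA1
  have hcheb : ∀ᶠ x : ℕ in Filter.atTop,
      (Nat.primeCounting x : ℝ) ≤ (Real.log 4 + 1) * x / Real.log x := by
    have := tendsto_natCast_atTop_atTop.eventually
      (Chebyshev.eventually_primeCounting_le (ε := 1) one_pos)
    filter_upwards [this] with x hx
    simpa using hx
  obtain ⟨x₁, hx₁⟩ := Filter.eventually_atTop.mp hcheb
  refine ⟨1 / (M * A * (Real.log 4 + 1)), by positivity, max x₁ (A * (N + 2)), fun x hx => ?_⟩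
  have hxx₁ : x₁ ≤ x := (le_max_left _ _).trans hx
  have hxA : A * (N + 2) ≤ x := (le_max_right _ _).trans hx
  set y := x / A with hy
  have hyN : N + 2 ≤ y := (Nat.le_div_iff_mul_le hA1).mpr (by rwa [mul_comm])
  have hyx : y * A ≤ x := Nat.div_mul_le_self x A
  have hyx' : y ≤ x := Nat.div_le_self x A
  have hx0 : (0 : ℝ) < x := by
    have : 0 < x := by omega
    exact_mod_cast this
  have hlogx : 0 < Real.log x := Real.log_pos (by
    have : 1 < x := by omega
    exact_mod_cast this)
  have hxy : x < (y + 1) * A := by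
    have := Nat.lt_div_mul_add (a := x) hA1
    rw [add_mul, one_mul]; exact this
  have hlog : Real.log y + Real.log A ≤ Real.log x := by
    rw [← Real.log_mul (by norm_cast; omega) hA0.ne']
    exact Real.log_le_log (by
      have : 0 < y := by omega
      positivity) (by exact_mod_cast hyx)
  have hsub : Nat.primesLE y ⊆ Nat.primesLE x := fun p hp => by
    rw [Nat.mem_primesLE] at hp ⊢
    exact ⟨hp.1.trans hyx', hp.2⟩
  have h1 : 1 ≤ ∑ p ∈ Nat.primesLE x \ Nat.primesLE y, w p * (Real.log p / p) := by
    have h2 := Finset.sum_sdiff hsub (f := fun p => w p * (Real.log p / p))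
    have h3 := (abs_le.mp (hmertens x (by omega))).1
    have h4 := (abs_le.mp (hmertens y (by omega))).2
    have h5 := mul_le_mul_of_nonneg_left hlog hc.le
    rw [mul_add] at h5
    linarith
  set T := (Nat.primesLE x).filter (· ∈ S) with hT
  have hTcard : {p : ℕ | p ≤ x ∧ p.Prime ∧ p ∈ S}.ncard = T.card := by
    rw [← Set.ncard_coe_finset]
    congr 1
    ext p
    simp [hT, Nat.mem_primesLE, and_assoc]
  have h2 : ∑ p ∈ Nat.primesLE x \ Nat.primesLE y, w p * (Real.log p / p) ≤
      T.card * (M * (A * Real.log x / x)) := by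
    calc _ ≤ ∑ p ∈ Nat.primesLE x \ Nat.primesLE y,
          if p ∈ S then M * (A * Real.log x / x) else 0 := by
          refine Finset.sum_le_sum fun p hp => ?_
          rw [Finset.mem_sdiff, Nat.mem_primesLE, Nat.mem_primesLE] at hp
          obtain ⟨⟨hpx, hpp⟩, hpy⟩ := hp
          have hpy' : y + 1 ≤ p := by
            by_contra h
            exact hpy ⟨by omega, hpp⟩
          obtain ⟨hwM, hwS⟩ := hN p (by omega) hpp
          have hp0 : (0 : ℝ) < p := by exact_mod_cast hpp.pos
          have hlogp : 0 ≤ Real.log p := Real.log_natCast_nonneg p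
          split_ifs with hpS
          · have h3 : Real.log p / p ≤ A * Real.log x / x := by
              rw [div_le_div_iff₀ hp0 hx0]
              have h4 : Real.log p ≤ Real.log x := Real.log_le_log hp0 (by exact_mod_cast hpx)
              have h5 : (x : ℝ) ≤ A * p := by
                have : x ≤ A * p := by
                  calc x ≤ (y + 1) * A := hxy.le
                    _ ≤ p * A := Nat.mul_le_mul_right A hpy'
                    _ = A * p := mul_comm _ _
                exact_mod_cast this
              calc Real.log p * x ≤ Real.log x * (A * p) :=
                    mul_le_mul h4 h5 hx0.le hlogx.le
                _ = A * Real.log x * p := by ring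
            calc w p * (Real.log p / p) ≤ M * (Real.log p / p) :=
                  mul_le_mul_of_nonneg_right hwM (by positivity)
              _ ≤ _ := mul_le_mul_of_nonneg_left h3 hM.le
          · rw [hwS hpS, zero_mul]
      _ ≤ ∑ p ∈ Nat.primesLE x, if p ∈ S then M * (A * Real.log x / x) else 0 := by
          refine Finset.sum_le_sum_of_subset_of_nonneg Finset.sdiff_subset fun p _ _ => ?_
          split_ifs
          · positivity
          · exact le_rfl
      _ = _ := by
          rw [← Finset.sum_filter, Finset.sum_const, nsmul_eq_mul]
  have h3 := hx₁ x hxx₁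
  rw [hTcard]
  have h4 : (x : ℝ) / Real.log x ≤ T.card * (M * A) := by
    have h5 := h1.trans h2
    rw [div_le_iff₀ hlogx]
    have h6 : (T.card : ℝ) * (M * (A * Real.log x / x)) = T.card * (M * A) * Real.log x / x := by
      ring
    rw [h6, le_div_iff₀ hx0, one_mul] at h5
    exact h5
  rw [div_mul_eq_mul_div, one_mul, div_le_iff₀ (by positivity)]
  calc (Nat.primeCounting x : ℝ) ≤ (Real.log 4 + 1) * (x / Real.log x) := by
        rw [← mul_div_assoc]; exact h3
    _ ≤ (Real.log 4 + 1) * (T.card * (M * A)) := mul_le_mul_of_nonneg_left h4 (by positivity)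
    _ = _ := by ring

/-- The theorem for an arbitrary Galois number field in which `P` splits. -/
lemma density_of_isGalois {L : Type*} [Field L] [NumberField L] [IsGalois ℚ L] {P : ℤ[X]}
    (hP : P ≠ 0) (hsplit : (P.map (algebraMap ℤ L)).Splits) (σ : L ≃ₐ[ℚ] L)
    (hσ : ∀ z : L, aeval z P = 0 → σ z ≠ z) :
    ∃ δ : ℝ, 0 < δ ∧ ∃ x₀ : ℕ, ∀ x : ℕ, x₀ ≤ x →
      δ * (Nat.primeCounting x : ℝ) ≤
        ({p : ℕ | p ≤ x ∧ p.Prime ∧ ¬ IsPrimeDivisorOf p P}.ncard : ℝ) := by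
  obtain ⟨c, hc, C, hC⟩ := exists_weight_mertens σ
  have hev : ∀ᶠ p : ℕ in Filter.atTop, p.Prime → weight σ p ≤ Nat.card (L ≃ₐ[ℚ] L) ∧
      (p ∉ {p | ¬ IsPrimeDivisorOf p P} → weight σ p = 0) := by
    filter_upwards [eventually_weight σ, eventually_exists_fixed_root hP hsplit] with p h1 h2 hp
    obtain ⟨Q, φ, hF⟩ := exists_isFrob (L := L) hp
    obtain ⟨-, h3, h4⟩ := h1 hp Q φ hF
    refine ⟨h3, fun hdiv => ?_⟩
    obtain ⟨z, hz, hφz⟩ := h2 hp (not_not.mp hdiv) Q φ hF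
    by_contra hne
    obtain ⟨x, hx⟩ := h4 hne
    -- the conjugate `x⁻¹ φ x` fixes the root `x⁻¹ z`, hence so does its power `σ`
    have hstab : x⁻¹ * φ * x ∈ MulAction.stabilizer _ (x⁻¹ z) := by
      rw [MulAction.mem_stabilizer_iff]
      change x⁻¹ (φ (x (x⁻¹ z))) = x⁻¹ z
      have : x (x⁻¹ z) = z := x.apply_symm_apply z
      rw [this, hφz]
    have hfix := Subgroup.zpowers_le.mpr hstab hx
    refine hσ (x⁻¹ z) ?_ hfix
    have := aeval_algHom_apply ((x⁻¹ : L ≃ₐ[ℚ] L).toAlgHom.restrictScalars ℤ) z P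
    rw [(mem_rootSet.mp hz).2, map_zero] at this
    exact this
  exact density_of_mertens hc (by exact_mod_cast Nat.card_pos) hev hC

end FrobDensity

theorem stmt11 (P : Polynomial ℤ) (hdeg : 0 < P.natDegree)
    (hsep : (P.map (Int.castRingHom ℚ)).Separable)
    (hσ : ∃ σ : (P.map (Int.castRingHom ℚ)).SplittingField ≃ₐ[ℚ]
        (P.map (Int.castRingHom ℚ)).SplittingField,
      ∀ z ∈ P.rootSet (P.map (Int.castRingHom ℚ)).SplittingField, σ z ≠ z) :
    ∃ δ : ℝ, 0 < δ ∧ ∃ x₀ : ℕ, ∀ x : ℕ, x₀ ≤ x →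
      δ * (Nat.primeCounting x : ℝ) ≤
        ({p : ℕ | p ≤ x ∧ p.Prime ∧ ¬ IsPrimeDivisorOf p P}.ncard : ℝ) := by
  obtain ⟨σ, hσ⟩ := hσ
  have hP : P ≠ 0 := by rintro rfl; simp at hdeg
  have hnf : NumberField (P.map (Int.castRingHom ℚ)).SplittingField :=
    { to_charZero := algebraRat.charZero _
      to_finiteDimensional := inferInstance }
  -- the two `ℚ`-algebra structures at hand on the splitting field are only propositionally equal
  have hspl : IsSplittingField ℚ (P.map (Int.castRingHom ℚ)).SplittingField
      (P.map (Int.castRingHom ℚ)) := by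
    convert IsSplittingField.splittingField (P.map (Int.castRingHom ℚ))
    exact Subsingleton.elim _ _
  have hgal : IsGalois ℚ (P.map (Int.castRingHom ℚ)).SplittingField :=
    IsGalois.of_separable_splitting_field hsep
  refine FrobDensity.density_of_isGalois hP ?_ σ fun z hz => hσ z ?_
  · have h1 := SplittingField.splits (P.map (Int.castRingHom ℚ))
    rw [Polynomial.map_map] at h1
    convert h1 using 2
    exact RingHom.ext_int _ _
  · rw [mem_rootSet]
    refine ⟨hP, ?_⟩
    rw [aeval_def] at hz ⊢
    rwa [RingHom.ext_int (algebraMap ℤ (P.map (Int.castRingHom ℚ)).SplittingField) _]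
end

section
/- Let n ≥ 2 and N be integers with n dividing N, and let P = a_0 + a_1 T + ⋯ + a_N T^N ∈ ℤ[T] have degree N. Let p be a prime number such that p does not divide a_0, p does not divide a_N, and for every t₀ ∈ ℚ one has P(t₀) ≠ 0 and v_p(P(t₀)) ≤ 0, where v_p is the p-adic valuation on ℚ. Then for every n-free integer d divisible by p, the twisted superelliptic curve y^n = d·P(t) has no non-trivial ℚ-rational point: there exist no t, y ∈ ℚ with y ≠ 0 and y^n = d·P(t), and there exists no y ∈ ℚ with y ≠ 0 and y^n = d·a_N. -/
/-!
Compare `p`-adic valuations. Write `t = a / b` in lowest terms and let `Q = b ^ N * P(a / b)`, an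
integer (the value at `a` of `P.scaleRoots b`). Then `p ∤ Q`: if `p ∣ b`, then
`Q ≡ a_N * a ^ N (mod p)` with `p ∤ a`; if `p ∤ b`, then `v_p(Q) = v_p(P(t)) ≤ 0`.
Hence `v_p(P(t)) = -N * v_p(b)` is a multiple of `n` (`dvd_padicValRat_aeval`), and so is
`v_p(a_N) = 0`. But `1 ≤ v_p(d) ≤ n - 1`, so `d * u` is not an `n`-th power when `n ∣ v_p(u)`
(`no_pow_eq_mul`).
-/

open Polynomial

/-- `d` is an `n`-free integer: `d ∉ {0,1}` and no `p^n` divides `d`. -/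
def NFree (n : ℕ) (d : ℤ) : Prop :=
  d ≠ 0 ∧ d ≠ 1 ∧ ∀ p : ℕ, p.Prime → ¬ ((p : ℤ) ^ n ∣ d)

/-- An `n`-free integer divisible by `p` times a rational `u` whose `p`-adic valuation is a
multiple of `n` is never an `n`-th power, since `0 < v_p(d) < n`. -/
theorem no_pow_eq_mul {n p : ℕ} (hp : p.Prime) {d : ℤ} (hd : NFree n d) (hpd : (p : ℤ) ∣ d)
    {u y : ℚ} (hu : u ≠ 0) (hdvd : (n : ℤ) ∣ padicValRat p u) (h : y ^ n = (d : ℚ) * u) :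
    False := by
  have := Fact.mk hp
  obtain ⟨hd0, -, hfree⟩ := hd
  have hv := congrArg (padicValRat p) h
  rw [padicValRat.pow, padicValRat.mul (by exact_mod_cast hd0) hu, padicValRat.of_int] at hv
  have h1 : 1 ≤ padicValInt p d :=
    ((padicValInt_dvd_iff 1 d).1 (by simpa using hpd)).resolve_left hd0
  have h2 : padicValInt p d < n := by
    by_contra hlt
    exact hfree p hp ((padicValInt_dvd_iff n d).2 (Or.inr (not_lt.1 hlt)))
  have h3 : (n : ℤ) ∣ (padicValInt p d : ℤ) :=
    (Int.dvd_add_left hdvd).1 (hv ▸ Dvd.intro _ rfl)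
  exact absurd (Nat.le_of_dvd h1 (Int.natCast_dvd_natCast.1 h3)) (not_le.2 h2)

/-- If `p` divides `b` but neither `a` nor the leading coefficient of `P`, then `p` does not
divide `b ^ N * P(a / b)`, because modulo `p` only the leading term survives. -/
theorem not_dvd_eval_scaleRoots {p : ℕ} (hp : p.Prime) {P : Polynomial ℤ}
    (hlead : ¬ (p : ℤ) ∣ P.leadingCoeff) {a b : ℤ} (hb : (p : ℤ) ∣ b) (ha : ¬ (p : ℤ) ∣ a) :
    ¬ (p : ℤ) ∣ (P.scaleRoots b).eval a := by
  have := Fact.mk hp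
  rw [← ZMod.intCast_zmod_eq_zero_iff_dvd] at hlead hb ha ⊢
  have hl : Int.castRingHom (ZMod p) P.leadingCoeff ≠ 0 := by simpa using hlead
  have key : (((P.scaleRoots b).eval a : ℤ) : ZMod p)
      = (P.leadingCoeff : ZMod p) * (a : ZMod p) ^ P.natDegree := by
    rw [← eq_intCast (Int.castRingHom (ZMod p)) (eval _ _), ← eval_map_apply,
      map_scaleRoots _ _ _ hl, eq_intCast _ b, hb, scaleRoots_zero]
    simp [leadingCoeff_map_of_leadingCoeff_ne_zero _ hl,
      natDegree_map_of_leadingCoeff_ne_zero _ hl]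
  rw [key]
  exact mul_ne_zero hlead (pow_ne_zero _ ha)

theorem dvd_padicValRat_aeval {n p : ℕ} (hp : p.Prime) {P : Polynomial ℤ}
    (hdvd : n ∣ P.natDegree) (hlead : ¬ (p : ℤ) ∣ P.leadingCoeff) {t : ℚ}
    (h0 : Polynomial.aeval t P ≠ 0) (hval : padicValRat p (Polynomial.aeval t P) ≤ 0) :
    (n : ℤ) ∣ padicValRat p (Polynomial.aeval t P) := by
  have := Fact.mk hp
  have hden : (t.den : ℚ) ≠ 0 := by exact_mod_cast t.den_nz
  set Q : ℤ := (P.scaleRoots (t.den : ℤ)).eval t.num with hQ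
  have hQe : (Q : ℚ) = (t.den : ℚ) ^ P.natDegree * Polynomial.aeval t P := by
    have h := scaleRoots_eval₂_mul (p := P) (algebraMap ℤ ℚ) t (t.den : ℤ)
    have h' : algebraMap ℤ ℚ (t.den : ℤ) * t = algebraMap ℤ ℚ t.num := by
      simp [Rat.den_mul_eq_num]
    rw [h', eval₂_at_apply] at h
    simpa [aeval_def] using h
  have hv := congrArg (padicValRat p) hQe
  rw [padicValRat.mul (pow_ne_zero _ hden) h0, padicValRat.pow,
    padicValRat.of_int, padicValRat.of_nat] at hv
  have hQv : padicValInt p Q = 0 := by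
    by_cases hb : p ∣ t.den
    · refine padicValInt.eq_zero_of_not_dvd (not_dvd_eval_scaleRoots hp hlead
        (Int.natCast_dvd_natCast.2 hb) fun ha => ?_)
      exact Nat.not_coprime_of_dvd_of_dvd hp.one_lt (Int.natCast_dvd.1 ha) hb t.reduced
    · rw [padicValNat.eq_zero_of_not_dvd hb] at hv
      simp at hv
      omega
  rw [hQv] at hv
  have hd : (n : ℤ) ∣ (P.natDegree : ℤ) * (padicValNat p t.den : ℤ) :=
    (Int.natCast_dvd_natCast.2 hdvd).mul_right _
  exact (Int.dvd_add_right hd).1 (hv ▸ (by simp))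

theorem stmt12 (n N : ℕ) (hn : 2 ≤ n) (hdvd : n ∣ N)
    (P : Polynomial ℤ) (hdeg : P.natDegree = N) (hP0 : P ≠ 0)
    (p : ℕ) (hp : p.Prime)
    (h0 : ¬ (p : ℤ) ∣ P.coeff 0) (hlead : ¬ (p : ℤ) ∣ P.leadingCoeff)
    (hval : ∀ t₀ : ℚ, Polynomial.aeval t₀ P ≠ 0 ∧
      padicValRat p (Polynomial.aeval t₀ P) ≤ 0)
    (d : ℤ) (hd : NFree n d) (hpd : (p : ℤ) ∣ d) :
    (¬ ∃ t y : ℚ, y ≠ 0 ∧ y ^ n = (d : ℚ) * Polynomial.aeval t P) ∧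
    (¬ ∃ y : ℚ, y ≠ 0 ∧ y ^ n = (d : ℚ) * (P.leadingCoeff : ℚ)) := by
  constructor
  · rintro ⟨t, y, -, h⟩
    exact no_pow_eq_mul hp hd hpd (hval t).1
      (dvd_padicValRat_aeval hp (hdeg ▸ hdvd) hlead (hval t).1 (hval t).2) h
  · rintro ⟨y, -, h⟩
    refine no_pow_eq_mul hp hd hpd (by simpa using hP0) ?_ h
    rw [padicValRat.of_int, padicValInt.eq_zero_of_not_dvd hlead]
    simp
end
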